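/- Let M = {F = 0} be a germ of an irreducible singular real-analytic Levi-flat hypersurface at 0 ∈ ℂ² with F(z) = Re(Q(z)) + H(z, z̄), where Q is a quasihomogeneous polynomial of type (a,b) with gcd(a,b) = 1 and quasihomogeneous degree d, having an isolated singularity at 0 ∈ ℂ², and H is real-analytic with all Taylor monomials of weighted degree strictly greater than d and H(z, z̄) = conj(H(z̄, z)). Then the complexified Levi foliation L_ℂ admits a non-constant holomorphic first integral: there exists a germ of holomorphic function h at 0 ∈ ℂ⁴, non-constant along M_ℂ, such that for every p ∈ M*_ℂ the 2-form dh(p) ∧ α(p) vanishes on pairs of vectors in T_p M_ℂ. -/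

import Mathlib

/-!
Up to the factor `2`, the complexification of `F` is a germ `G(z, w) = Q(z) + Q̄(w) + …` on `ℂ⁴`,
the dots having larger weighted order for the weights `(a, b, a, b)` (`QH.data_of_hyp`). All
estimates are made in terms of this weighted order (`QH.OW`).

The first integral depends on `z` alone. Fix `c` with `Q̄(c) = 1`, let `γ(t) = (t^a c₁, t^b c₂)` be
its weighted orbit, and put `S(z) = ∮ t^(d-1) log (G(z, γ(t)) / t^d) dt`, so that
`S_{z_j} = ∮ t^(d-1) G_{z_j} / G dt` (`QH.Setup.exists_S`). Then `dS ∧ α = J dz₁ ∧ dz₂` up to a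
constant, with `J = S_{z₁} G_{z₂} - S_{z₂} G_{z₁}`, and it suffices to prove that `J` vanishes on
`{G = 0}`. By construction the period `∮ t^(d-1) J / G dt` is zero for every `z`.

*`J` is a multiple of `G` to every weighted order* (`QH.Setup.jac_formal`). Levi-flatness says that
the Levi determinant of `G` vanishes on the real hypersurface (`QH.levi_zero`). Since `Q(z) + Q̄(w)`
is squarefree and generates the ideal of polynomials vanishing on `{Re Q = 0}`, a germ vanishing on
the real hypersurface is a multiple of `G` to every weighted order (`QH.Data.formal_dvd`). If `P` is
the initial part of `J - T G`, then applying the vector field `Y = G_{w₂} ∂_{w₁} - G_{w₁} ∂_{w₂}`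
shows that `P(z, ·)` has zero bracket with `Q̄` on the level `{Q̄ = -Q(z)}`, for generic `z`. As `Q̄`
has an isolated critical point, `P(z, ·)` is constant on this level (`QH.const_on_level`), and the
vanishing period forces the constant to be zero (`QH.Setup.const_zero`). So `P` is a multiple of
`Q(z) + Q̄(w)`, and `T` can be improved by one order.

*`J` vanishes on `{G = 0}`* (`QH.Data.zero_of_formal`). On suitable discs `J` is compared with `G`
times the Cauchy integral of `J / G`. The difference is holomorphic in the scaling parameter and
flat at `0`, hence zero, so that `J = 0` wherever `G = 0`. This replaces a convergent division
theorem.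

*`S` is not constant on the zero set* (`QH.Setup.nonconst`). A holomorphic function of `z` alone which
vanishes on the real hypersurface is zero (`QH.Data.zero_of_real`), whereas a constant `S` would
have zero derivatives, whose initial parts are nonzero multiples of the derivatives of `Q`.
-/

open Filter Topology

/-- Wirtinger derivative ∂/∂z_j of a (complex-valued) function at `p`:
`(1/2)(∂F/∂x_j − i ∂F/∂y_j)`. -/
noncomputable def wirtZ {n : ℕ} (F : (Fin n → ℂ) → ℂ) (j : Fin n) (p : Fin n → ℂ) : ℂ :=
  (fderiv ℝ F p (Pi.single j 1) - Complex.I * fderiv ℝ F p (Pi.single j Complex.I)) / 2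

/-- Wirtinger derivative ∂/∂z̄_j of a (complex-valued) function at `p`:
`(1/2)(∂F/∂x_j + i ∂F/∂y_j)`. -/
noncomputable def wirtZbar {n : ℕ} (F : (Fin n → ℂ) → ℂ) (j : Fin n) (p : Fin n → ℂ) : ℂ :=
  (fderiv ℝ F p (Pi.single j 1) + Complex.I * fderiv ℝ F p (Pi.single j Complex.I)) / 2

/-- The germ `M = {F = 0}` at `0` is Levi-flat: for every point `p` of `M* = M \ Sing(M)`
near `0` and every `v` with `Σ_j F_{z_j}(p) v_j = 0` one has
`Σ_{i,j} F_{z_i z̄_j}(p) v_i conj(v_j) = 0`. -/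
def LeviFlatGerm {n : ℕ} (F : (Fin n → ℂ) → ℝ) : Prop :=
  ∀ᶠ p in 𝓝 (0 : Fin n → ℂ), F p = 0 → fderiv ℝ F p ≠ 0 →
    ∀ v : Fin n → ℂ,
      (∑ j, wirtZ (fun z => ((F z : ℝ) : ℂ)) j p * v j) = 0 →
      (∑ i, ∑ j, wirtZbar (wirtZ (fun z => ((F z : ℝ) : ℂ)) i) j p * v i * (starRingEnd ℂ) (v j)) = 0

/-- `F` is irreducible in the ring of germs at `0` of real-valued real-analytic functions:
in any factorization `F = g·h` one of the factors is a unit (i.e. does not vanish at `0`). -/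
def IrreducibleRGerm {n : ℕ} (F : (Fin n → ℂ) → ℝ) : Prop :=
  ∀ g h : (Fin n → ℂ) → ℝ, AnalyticAt ℝ g 0 → AnalyticAt ℝ h 0 →
    (∀ᶠ z in 𝓝 (0 : Fin n → ℂ), F z = g z * h z) → g 0 ≠ 0 ∨ h 0 ≠ 0

/-- `φ` is a germ of biholomorphism `(ℂⁿ,0) → (ℂⁿ,0)` with local inverse `ι`. -/
def IsGermBiholo {n : ℕ} (φ ι : (Fin n → ℂ) → (Fin n → ℂ)) : Prop :=
  AnalyticAt ℂ φ 0 ∧ AnalyticAt ℂ ι 0 ∧ φ 0 = 0 ∧ ι 0 = 0 ∧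
  (∀ᶠ z in 𝓝 (0 : Fin n → ℂ), ι (φ z) = z) ∧ (∀ᶠ z in 𝓝 (0 : Fin n → ℂ), φ (ι z) = z)

/-- `φ` is volume-preserving (isochore): the determinant of its complex Jacobian is
identically `1` near `0`. -/
def IsVolumePreserving {n : ℕ} (φ : (Fin n → ℂ) → (Fin n → ℂ)) : Prop :=
  ∀ᶠ z in 𝓝 (0 : Fin n → ℂ), LinearMap.det ((fderiv ℂ φ z).toLinearMap) = 1

/-- `ψ` is a germ of automorphism of `(ℂ,0)`. -/
def IsGermAuto (ψ : ℂ → ℂ) : Prop :=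
  AnalyticAt ℂ ψ 0 ∧ ψ 0 = 0 ∧ deriv ψ 0 ≠ 0

/-- `FC` is the complexification of `F`: the (unique) germ of holomorphic function at
`0 ∈ ℂⁿ × ℂⁿ` such that `FC (z, z̄) = F z` near `0`. -/
def IsComplexification {n : ℕ} (F : (Fin n → ℂ) → ℝ)
    (FC : ((Fin n → ℂ) × (Fin n → ℂ)) → ℂ) : Prop :=
  AnalyticAt ℂ FC 0 ∧ ∀ᶠ z in 𝓝 (0 : Fin n → ℂ), FC (z, star z) = ((F z : ℝ) : ℂ)

/-- The singular set `Sing(M_ℂ) = {F_ℂ = 0} ∩ {dF_ℂ = 0}` of the complexification. -/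
def singMC {n : ℕ} (FC : ((Fin n → ℂ) × (Fin n → ℂ)) → ℂ) :
    Set ((Fin n → ℂ) × (Fin n → ℂ)) :=
  {p | FC p = 0 ∧ fderiv ℂ FC p = 0}

/-- The singular set of the complexified Levi foliation `L_ℂ`: points of
`M*_ℂ` at which `α = Σ_j (∂F_ℂ/∂z_j) dz_j` vanishes on `T_p M_ℂ = ker dF_ℂ(p)`.
Note that `α(p)(v) = dF_ℂ(p)(v₁, 0)`. -/
def singLC {n : ℕ} (FC : ((Fin n → ℂ) × (Fin n → ℂ)) → ℂ) :
    Set ((Fin n → ℂ) × (Fin n → ℂ)) :=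
  {p | FC p = 0 ∧ fderiv ℂ FC p ≠ 0 ∧
    ∀ v : (Fin n → ℂ) × (Fin n → ℂ), fderiv ℂ FC p v = 0 → fderiv ℂ FC p (v.1, 0) = 0}

namespace QH
open MvPolynomial

/-! ### Weighted scaling and the polynomial `Q(z) + Q̃(w)` -/

/-- Weighted scaling `x ↦ (l ^ W i * x i)ᵢ`. -/
def sc {σ : Type*} (W : σ → ℕ) (l : ℂ) (x : σ → ℂ) : σ → ℂ := fun i => l ^ W i * x i

/-- The weight vector `(a, b)`. -/
def wt (a b : ℕ) : Fin 2 → ℕ := fun i => if i = 0 then a else b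

lemma eval_sc {σ : Type*} [Fintype σ] (W : σ → ℕ) {n : ℕ} {P : MvPolynomial σ ℂ}
    (hP : P.IsWeightedHomogeneous W n) (l : ℂ) (x : σ → ℂ) :
    eval (sc W l x) P = l ^ n * eval x P := by
  rw [eval_eq', eval_eq', Finset.mul_sum]
  refine Finset.sum_congr rfl fun m hm => ?_
  have h := hP (mem_support_iff.mp hm)
  rw [Finsupp.weight_apply, Finsupp.sum_fintype _ _ (by simp)] at h
  simp only [sc, mul_pow, Finset.prod_mul_distrib, ← pow_mul]
  rw [Finset.prod_pow_eq_pow_sum]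
  have : ∑ i, W i * m i = n := by rw [← h]; exact Finset.sum_congr rfl fun i _ => by simp [mul_comm]
  rw [this]; ring

lemma sc_mul {σ : Type*} (W : σ → ℕ) (l m : ℂ) (x : σ → ℂ) :
    sc W l (sc W m x) = sc W (l * m) x := by
  funext i; simp [sc, mul_pow, mul_assoc]

@[simp] lemma sc_one {σ : Type*} (W : σ → ℕ) (x : σ → ℂ) : sc W 1 x = x := by
  funext i; simp [sc]

/-- The Nullstellensatz for a principal ideal. -/
lemma dvd_pow_of_zeros {σ : Type*} [Finite σ] (f g : MvPolynomial σ ℂ)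
    (h : ∀ x, eval x f = 0 → eval x g = 0) : ∃ n, f ∣ g ^ n := by
  have : g ∈ (Ideal.span {f}).radical := by
    rw [← vanishingIdeal_zeroLocus_eq_radical (K := ℂ), mem_vanishingIdeal_iff]
    intro x hx
    have := hx f (Ideal.subset_span rfl)
    simp only [aeval_eq_eval] at this ⊢
    exact h x this
  obtain ⟨n, hn⟩ := this
  exact ⟨n, Ideal.mem_span_singleton.mp hn⟩

lemma isUnit_of_no_zero {σ : Type*} [Finite σ] (f : MvPolynomial σ ℂ)
    (h : ∀ x, eval x f ≠ 0) : IsUnit f := by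
  obtain ⟨n, hn⟩ := dvd_pow_of_zeros f 1 (fun x hx => (h x hx).elim)
  rw [one_pow] at hn
  exact isUnit_of_dvd_one hn

lemma eval_eq_of_isUnit {σ : Type*} {f : MvPolynomial σ ℂ} (h : IsUnit f) (x y : σ → ℂ) :
    eval x f = eval y f := by
  obtain ⟨r, -, hr⟩ := isUnit_iff_eq_C_of_isReduced.mp h
  simp [hr]

/-- Partial derivatives with an isolated common zero are relatively prime. -/
lemma isRelPrime_of_zeros (f g : MvPolynomial (Fin 2) ℂ)
    (h : ∀ x, eval x f = 0 → eval x g = 0 → x = 0) : IsRelPrime f g := by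
  intro p hf hg
  have key : ∀ i, ∃ n, p ∣ (X i) ^ n := fun i => by
    refine dvd_pow_of_zeros p (X i) fun x hx => ?_
    have : x = 0 := h x (by obtain ⟨c, rfl⟩ := hf; simp [hx]) (by obtain ⟨c, rfl⟩ := hg; simp [hx])
    simp [this]
  obtain ⟨n, hn⟩ := key 0
  obtain ⟨m, hm⟩ := key 1
  have h01 : IsRelPrime (X 0 : MvPolynomial (Fin 2) ℂ) (X 1) := by
    refine ((X_prime (R := ℂ) (i := (0 : Fin 2))).irreducible.isRelPrime_iff_not_dvd).mpr ?_
    rw [X_dvd_X]; simp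
  exact (IsRelPrime.pow h01) hn hm

/-- `Q(z) + Q̃(w)` as a polynomial in four variables. -/
noncomputable def qq (Q Qb : MvPolynomial (Fin 2) ℂ) : MvPolynomial (Fin 2 ⊕ Fin 2) ℂ :=
  rename Sum.inl Q + rename Sum.inr Qb

lemma eval_inl (x : Fin 2 ⊕ Fin 2 → ℂ) (p : MvPolynomial (Fin 2) ℂ) :
    eval x (rename Sum.inl p) = eval (x ∘ Sum.inl) p := eval_rename _ _ _

lemma eval_inr (x : Fin 2 ⊕ Fin 2 → ℂ) (p : MvPolynomial (Fin 2) ℂ) :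
    eval x (rename Sum.inr p) = eval (x ∘ Sum.inr) p := eval_rename _ _ _

@[simp] lemma eval_qq (Q Qb : MvPolynomial (Fin 2) ℂ) (z w : Fin 2 → ℂ) :
    eval (Sum.elim z w) (qq Q Qb) = eval z Q + eval w Qb := by
  simp [qq, eval_inl, eval_inr]

/-- Restriction of a polynomial to the slice `z = const`. -/
noncomputable def slice (z : Fin 2 → ℂ) :
    MvPolynomial (Fin 2 ⊕ Fin 2) ℂ →ₐ[ℂ] MvPolynomial (Fin 2) ℂ :=
  aeval (Sum.elim (fun i => C (z i)) X)

lemma eval_slice (z w : Fin 2 → ℂ) (p : MvPolynomial (Fin 2 ⊕ Fin 2) ℂ) :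
    eval w (slice z p) = eval (Sum.elim z w) p := by
  induction p using MvPolynomial.induction_on with
  | C r => simp [slice]
  | add p q hp hq => simp [hp, hq]
  | mul_X p i hp =>
    rw [map_mul, map_mul, map_mul, hp]
    congr 1
    cases i <;> simp [slice]

/-- If `Q̃` is not constant, `Q(z) + Q̃(w)` has no common factor with a nonzero polynomial in `z`
alone: such a factor does not depend on `w`, so at one of its zeros `Q(z) + Q̃(w)` would vanish
for all `w`. -/
lemma isRelPrime_qq_inl (Q Qb u : MvPolynomial (Fin 2) ℂ) (hu : u ≠ 0) (c c' : Fin 2 → ℂ)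
    (hc : eval c Qb ≠ eval c' Qb) : IsRelPrime (qq Q Qb) (rename Sum.inl u) := by
  intro p hp hpu
  by_contra hnu
  obtain ⟨q, hq⟩ := hpu
  -- on slices where `u` does not vanish the divisor `p` is constant
  have h1 : ∀ z w w', eval (Sum.elim z w) p * eval z u = eval (Sum.elim z w') p * eval z u := by
    intro z w w'
    by_cases hz : eval z u = 0
    · simp [hz]
    congr 1
    rw [← eval_slice, ← eval_slice]
    apply eval_eq_of_isUnit
    apply isUnit_of_no_zero
    intro w'' h0
    have := congrArg (eval (Sum.elim z w'')) hq
    rw [map_mul, ← eval_slice z w'' p, h0, eval_inl] at this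
    simp at this
    exact hz this
  have h2 : rename (Sum.elim (Sum.inl ∘ Sum.inl) Sum.inr : Fin 2 ⊕ Fin 2 → (Fin 2 ⊕ Fin 2) ⊕ Fin 2) p
      = rename Sum.inl p := by
    have hu' : (rename (Sum.inl ∘ Sum.inl) u : MvPolynomial ((Fin 2 ⊕ Fin 2) ⊕ Fin 2) ℂ) ≠ 0 := by
      rw [Ne, map_eq_zero_iff _ (rename_injective _ (Sum.inl_injective.comp Sum.inl_injective))]
      exact hu
    refine mul_right_cancel₀ hu' (MvPolynomial.funext fun x => ?_)
    have := h1 (fun i => x (Sum.inl (Sum.inl i))) (fun i => x (Sum.inr i))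
      (fun i => x (Sum.inl (Sum.inr i)))
    simp only [map_mul, eval_rename]
    have e1 : (x ∘ (Sum.elim (Sum.inl ∘ Sum.inl) Sum.inr :
        Fin 2 ⊕ Fin 2 → (Fin 2 ⊕ Fin 2) ⊕ Fin 2)) =
        Sum.elim (fun i => x (Sum.inl (Sum.inl i))) (fun i => x (Sum.inr i)) := by
      funext i; cases i <;> rfl
    have e2 : x ∘ Sum.inl =
        Sum.elim (fun i => x (Sum.inl (Sum.inl i))) (fun i => x (Sum.inl (Sum.inr i))) := by
      funext i; cases i <;> rfl
    rw [e1, e2]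
    exact this
  have h3 : ∀ z w w', eval (Sum.elim z w) p = eval (Sum.elim z w') p := by
    intro z w w'
    have := congrArg (eval (Sum.elim (Sum.elim z w') w)) h2
    simp only [eval_rename] at this
    have e1 : (Sum.elim (Sum.elim z w') w ∘ (Sum.elim (Sum.inl ∘ Sum.inl) Sum.inr :
        Fin 2 ⊕ Fin 2 → (Fin 2 ⊕ Fin 2) ⊕ Fin 2)) = Sum.elim z w := by
      funext i; cases i <;> rfl
    rwa [e1, Sum.elim_comp_inl] at this
  have h4 : ∃ x, eval x p = 0 := by
    by_contra h
    push Not at h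
    exact hnu (isUnit_of_no_zero p h)
  obtain ⟨x, hx⟩ := h4
  obtain ⟨r, hr⟩ := hp
  have h5 : ∀ w, eval (x ∘ Sum.inl) Q + eval w Qb = 0 := by
    intro w
    have := congrArg (eval (Sum.elim (x ∘ Sum.inl) w)) hr
    rw [eval_qq, map_mul, h3 _ w (x ∘ Sum.inr), Sum.elim_comp_inl_inr, hx, zero_mul] at this
    exact this
  exact hc (add_left_cancel ((h5 c).trans (h5 c').symm))

lemma pderiv_qq_inl (Q Qb : MvPolynomial (Fin 2) ℂ) (j : Fin 2) :
    pderiv (Sum.inl j) (qq Q Qb) = rename Sum.inl (pderiv j Q) := by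
  rw [qq, map_add, pderiv_rename Sum.inl_injective]
  have : pderiv (Sum.inl j) (rename Sum.inr Qb : MvPolynomial (Fin 2 ⊕ Fin 2) ℂ) = 0 := by
    apply pderiv_eq_zero_of_notMem_vars
    intro h
    have := vars_rename Sum.inr Qb h
    simp at this
  rw [this, add_zero]

lemma pderiv_qq_inr (Q Qb : MvPolynomial (Fin 2) ℂ) (j : Fin 2) :
    pderiv (Sum.inr j) (qq Q Qb) = rename Sum.inr (pderiv j Qb) := by
  rw [qq, map_add, pderiv_rename Sum.inr_injective]
  have : pderiv (Sum.inr j) (rename Sum.inl Q : MvPolynomial (Fin 2 ⊕ Fin 2) ℂ) = 0 := by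
    apply pderiv_eq_zero_of_notMem_vars
    intro h
    have := vars_rename Sum.inl Q h
    simp at this
  rw [this, zero_add]

/-- A square factor of `Q(z) + Q̃(w)` would divide its derivative `Q_{z_j}(z)`, a nonzero polynomial
in `z` alone. -/
lemma squarefree_qq (Q Qb : MvPolynomial (Fin 2) ℂ) (j : Fin 2) (hj : pderiv j Q ≠ 0)
    (c c' : Fin 2 → ℂ) (hc : eval c Qb ≠ eval c' Qb) : Squarefree (qq Q Qb) := by
  rintro p ⟨q, hq⟩
  refine isRelPrime_qq_inl Q Qb (pderiv j Q) hj c c' hc ⟨p * q, by rw [hq]; ring⟩ ?_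
  rw [← pderiv_qq_inl Q Qb j, hq]
  refine ⟨pderiv (Sum.inl j) p * q * 2 + p * pderiv (Sum.inl j) q, ?_⟩
  simp only [Derivation.leibniz, smul_eq_mul]
  ring

/-- A polynomial vanishing at the points of `{Q(z) + Q̃(w) = 0}` with `u(z) ≠ 0` is a multiple
of `Q(z) + Q̃(w)`. -/
lemma qq_dvd_of_zeros (Q Qb u : MvPolynomial (Fin 2) ℂ) (hu : u ≠ 0) (j : Fin 2)
    (hj : pderiv j Q ≠ 0) (c c' : Fin 2 → ℂ) (hc : eval c Qb ≠ eval c' Qb)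
    (p : MvPolynomial (Fin 2 ⊕ Fin 2) ℂ)
    (hp : ∀ z w, eval z Q + eval w Qb = 0 → eval z u ≠ 0 → eval (Sum.elim z w) p = 0) :
    qq Q Qb ∣ p := by
  obtain ⟨n, hn⟩ := dvd_pow_of_zeros (qq Q Qb) (rename Sum.inl u * p) (by
    intro x hx
    rw [← Sum.elim_comp_inl_inr x] at hx ⊢
    rw [eval_qq] at hx
    rw [map_mul, eval_inl, Sum.elim_comp_inl]
    by_cases h : eval (x ∘ Sum.inl) u = 0
    · simp [h]
    · rw [hp _ _ hx h, mul_zero])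
  have h1 := (squarefree_qq Q Qb j hj c c' hc).isRadical n _ hn
  exact (isRelPrime_qq_inl Q Qb u hu c c' hc).dvd_of_dvd_mul_left h1

end QH

namespace QH
open MvPolynomial

/-! ### Weighted homogeneous polynomials on level sets -/

/-- `P` is homogeneous of (possibly negative) degree `n` for the weighted scaling. -/
def Hom {σ : Type*} (W : σ → ℕ) (n : ℤ) (P : MvPolynomial σ ℂ) : Prop :=
  ∀ l : ℂ, l ≠ 0 → ∀ x, eval (sc W l x) P = l ^ n * eval x P

lemma Hom.of_wh {σ : Type*} [Fintype σ] {W : σ → ℕ} {n : ℕ} {P : MvPolynomial σ ℂ}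
    (h : P.IsWeightedHomogeneous W n) : Hom W n P := fun l _ x => by
  rw [eval_sc W h, zpow_natCast]

/-- The functional definition of homogeneity forces every monomial of `P` to have weight `n`. -/
lemma Hom.weight {σ : Type*} [Fintype σ] {W : σ → ℕ} {n : ℤ} {P : MvPolynomial σ ℂ}
    (h : Hom W n P) {m : σ →₀ ℕ} (hm : coeff m P ≠ 0) : (Finsupp.weight W m : ℤ) = n := by
  classical
  let P' : MvPolynomial σ ℂ := ∑ k ∈ P.support, monomial k ((2 : ℂ) ^ (Finsupp.weight W k) * coeff k P)
  have hP' : P' = C ((2 : ℂ) ^ n) * P := by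
    refine MvPolynomial.funext fun x => ?_
    have := h 2 two_ne_zero x
    rw [map_mul, eval_C, ← this, map_sum, eval_eq']
    refine Finset.sum_congr rfl fun k hk => ?_
    rw [eval_monomial, Finsupp.weight_apply, Finsupp.sum_fintype _ _ (by simp),
      Finsupp.prod_fintype _ _ (by simp)]
    simp only [sc, mul_pow, Finset.prod_mul_distrib, ← pow_mul]
    rw [Finset.prod_pow_eq_pow_sum]
    simp only [smul_eq_mul, mul_comm]
    ring
  have h1 : coeff m P' = (2 : ℂ) ^ (Finsupp.weight W m) * coeff m P := by
    simp only [P', coeff_sum, coeff_monomial]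
    rw [Finset.sum_ite_eq', if_pos (mem_support_iff.mpr hm)]
  rw [hP', coeff_C_mul, ← zpow_natCast] at h1
  have h2 := mul_right_cancel₀ hm h1
  have h3 : (2 : ℝ) ^ n = (2 : ℝ) ^ ((Finsupp.weight W m : ℕ) : ℤ) := by
    have := congrArg norm h2
    rwa [norm_zpow, norm_zpow, Complex.norm_ofNat] at this
  exact (zpow_right_injective₀ (by norm_num) (by norm_num) h3).symm

lemma Hom.to_wh {σ : Type*} [Fintype σ] {W : σ → ℕ} {n : ℕ} {P : MvPolynomial σ ℂ}
    (h : Hom W n P) : P.IsWeightedHomogeneous W n := fun m hm => by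
  exact_mod_cast h.weight hm

lemma Hom.mul {σ : Type*} {W : σ → ℕ} {n m : ℤ} {P R : MvPolynomial σ ℂ}
    (hP : Hom W n P) (hR : Hom W m R) : Hom W (n + m) (P * R) := fun l hl x => by
  rw [map_mul, hP l hl, hR l hl, map_mul, zpow_add₀ hl]; ring

lemma Hom.of_mul {σ : Type*} {W : σ → ℕ} {n m : ℤ} {P R : MvPolynomial σ ℂ}
    (hR : Hom W m R) (hR0 : R ≠ 0) (h : Hom W n (P * R)) : Hom W (n - m) P := by
  classical
  intro l hl
  have key : (bind₁ (fun i => C (l ^ W i) * X i) P - C (l ^ (n - m)) * P) * R = 0 := by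
    refine MvPolynomial.funext fun x => ?_
    have h1 := h l hl x
    rw [map_mul, hR l hl, map_mul] at h1
    have h2 : eval x (bind₁ (fun i => C (l ^ W i) * X i) P) = eval (sc W l x) P := by
      rw [eval, eval₂Hom_bind₁]; congr 2; funext i; simp [sc]
    rw [map_mul, map_sub, h2, map_mul, eval_C, map_zero, zpow_sub₀ hl]
    have := zpow_ne_zero m hl
    field_simp
    linear_combination h1
  have h3 := (mul_eq_zero.mp key).resolve_right hR0
  intro x
  have h2 : eval x (bind₁ (fun i => C (l ^ W i) * X i) P) = eval (sc W l x) P := by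
    rw [eval, eval₂Hom_bind₁]; congr 2; funext i; simp [sc]
  have := congrArg (eval x) h3
  rw [map_sub, h2, map_mul, eval_C, map_zero] at this
  linear_combination this

lemma Hom.zero {σ : Type*} (W : σ → ℕ) (n : ℤ) : Hom W n (0 : MvPolynomial σ ℂ) :=
  fun l _ x => by simp

lemma Hom.sub {σ : Type*} {W : σ → ℕ} {n : ℤ} {P R : MvPolynomial σ ℂ}
    (hP : Hom W n P) (hR : Hom W n R) : Hom W n (P - R) := fun l hl x => by
  rw [map_sub, hP l hl, hR l hl, map_sub]; ring

lemma Hom.add {σ : Type*} {W : σ → ℕ} {n : ℤ} {P R : MvPolynomial σ ℂ}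
    (hP : Hom W n P) (hR : Hom W n R) : Hom W n (P + R) := fun l hl x => by
  rw [map_add, hP l hl, hR l hl, map_add]; ring

lemma wh_pderiv {σ : Type*} [Fintype σ] {W : σ → ℕ} {n : ℕ} {P : MvPolynomial σ ℂ}
    (h : P.IsWeightedHomogeneous W n) (i : σ) (h0 : pderiv i P ≠ 0) : W i ≤ n := by
  classical
  by_contra hlt
  apply h0
  apply pderiv_eq_zero_of_notMem_vars
  intro hv
  obtain ⟨m, hm, hi⟩ := (mem_vars_iff_mem_support i).mp hv
  have := h (mem_support_iff.mp hm)
  have h3 : 1 ≤ m i := Nat.one_le_iff_ne_zero.mpr (Finsupp.mem_support_iff.mp hi)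
  rw [Finsupp.weight_apply, Finsupp.sum_fintype _ _ (by simp)] at this
  have h4 := Finset.single_le_sum (f := fun i => m i • W i) (fun _ _ => Nat.zero_le _)
    (Finset.mem_univ i)
  simp only [smul_eq_mul] at h4 this
  nlinarith

lemma Hom.pderiv {σ : Type*} [Fintype σ] {W : σ → ℕ} {n : ℤ} {P : MvPolynomial σ ℂ}
    (h : Hom W n P) (i : σ) : Hom W (n - W i) (pderiv i P) := by
  by_cases h0 : MvPolynomial.pderiv i P = 0
  · rw [h0]; exact Hom.zero _ _
  have hP : P ≠ 0 := fun h => h0 (by simp [h])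
  obtain ⟨m, hm⟩ := ne_zero_iff.mp hP
  have hn := h.weight hm
  subst hn
  have hw := h.to_wh
  have hle := wh_pderiv hw i h0
  have := Hom.of_wh (hw.pderiv (i := i) (n' := Finsupp.weight W m - W i) (by omega))
  rwa [Nat.cast_sub hle] at this

/-- A polynomial of degree `< d` vanishing at all `d`-th roots of `v ≠ 0` is zero. -/
lemma coeff_zero_of_roots {d : ℕ} (hd : 0 < d) {v : ℂ} (hv : v ≠ 0) (c : ℕ → ℂ)
    (h : ∀ u : ℂ, u ^ d = v → ∑ j ∈ Finset.range d, c j * u ^ j = 0) :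
    ∀ j < d, c j = 0 := by
  let p : Polynomial ℂ := ∑ j ∈ Finset.range d, Polynomial.C (c j) * Polynomial.X ^ j
  obtain ⟨u0, hu0⟩ := IsAlgClosed.exists_pow_nat_eq v hd
  have hu0' : u0 ≠ 0 := by rintro rfl; rw [zero_pow hd.ne'] at hu0; exact hv hu0.symm
  have hprim := Complex.isPrimitiveRoot_exp d hd.ne'
  set ε := Complex.exp (2 * Real.pi * Complex.I / d)
  have hp : p = 0 := by
    refine Polynomial.eq_zero_of_natDegree_lt_card_of_eval_eq_zero p
      (f := fun k : Fin d => u0 * ε ^ (k : ℕ)) ?_ ?_ ?_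
    · intro i j hij
      exact Fin.ext (hprim.pow_inj i.2 j.2 (mul_left_cancel₀ hu0' hij))
    · intro k
      have := h (u0 * ε ^ (k : ℕ)) (by
        rw [mul_pow, hu0, ← pow_mul, mul_comm, pow_mul', hprim.pow_eq_one]; simp)
      simpa [p, Polynomial.eval_finsetSum] using this
    · rw [Fintype.card_fin]
      refine lt_of_le_of_lt (Polynomial.natDegree_sum_le_of_forall_le (n := d - 1) _ _ fun j hj => ?_)
        (Nat.sub_lt hd one_pos)
      exact (Polynomial.natDegree_C_mul_X_pow_le _ _).trans
        (Nat.le_sub_one_of_lt (Finset.mem_range.mp hj))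
  intro j hj
  have := congrArg (fun q => Polynomial.coeff q j) hp
  simpa [p, Polynomial.finsetSum_coeff, Polynomial.coeff_C_mul, Polynomial.coeff_X_pow, hj] using this

lemma dvd_of_dvd_mul_both (r p x y : MvPolynomial (Fin 2) ℂ) (hr : r ≠ 0) (h : IsRelPrime x y)
    (hx : r ∣ p * x) (hy : r ∣ p * y) : r ∣ p := by
  obtain ⟨r1, r2, ⟨s, hs⟩, h2, rfl⟩ := exists_dvd_and_dvd_of_dvd_mul hx
  have hr1 : r1 ≠ 0 := left_ne_zero_of_mul hr
  rw [hs, mul_assoc, mul_dvd_mul_iff_left hr1] at hy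
  rw [hs, mul_dvd_mul_iff_left hr1]
  exact (h.of_dvd_left h2).dvd_of_dvd_mul_right hy

/-- The bracket `{g, R} = g₁ R₂ - g₂ R₁`. -/
noncomputable def br (R g : MvPolynomial (Fin 2) ℂ) : MvPolynomial (Fin 2) ℂ :=
  pderiv 0 g * pderiv 1 R - pderiv 1 g * pderiv 0 R

lemma br_add (R g g' : MvPolynomial (Fin 2) ℂ) : br R (g + g') = br R g + br R g' := by
  simp only [br, map_add]; ring

lemma br_mul_pow (R g : MvPolynomial (Fin 2) ℂ) (r : ℂ) (q : ℕ) :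
    br R (C r * (g * R ^ q)) = C r * (br R g * R ^ q) := by
  cases q with
  | zero => simp [br]; ring
  | succ q => simp [br, Derivation.leibniz, Derivation.leibniz_pow, smul_eq_mul]; ring

/-- Homogeneous polynomials in the kernel of `{·, R}` are multiples of powers of `R`. -/
lemma kernel_br {a b d : ℕ} (ha : 0 < a) (hb : 0 < b) (hd : 0 < d) (R : MvPolynomial (Fin 2) ℂ)
    (hR : R.IsWeightedHomogeneous (wt a b) d) (hrel : IsRelPrime (pderiv 0 R) (pderiv 1 R))
    (c : Fin 2 → ℂ) (hc : eval c R ≠ 0) : ∀ (n : ℕ) (p : MvPolynomial (Fin 2) ℂ),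
    p.IsWeightedHomogeneous (wt a b) n → br R p = 0 → (eval c p = 0 ∨ ¬ d ∣ n) → p = 0 := by
  have hR0 : R ≠ 0 := by rintro rfl; simp at hc
  intro n
  induction n using Nat.strong_induction_on with
  | _ n ih =>
  intro p hp hbr hcp
  rcases Nat.eq_zero_or_pos n with rfl | hn
  · have hcp := hcp.resolve_right (by simp)
    refine MvPolynomial.funext fun x => ?_
    have h1 : ∀ x, eval 0 p = eval x p := fun x => by
      have := eval_sc _ hp 0 x
      rw [pow_zero, one_mul] at this
      rw [← this]; congr 2; funext i; fin_cases i <;> simp [sc, wt, ha.ne', hb.ne']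
    rw [← h1, h1 c, hcp, map_zero]
  · by_contra hp0
    have e1 := hp.sum_weight_X_mul_pderiv
    have e2 := hR.sum_weight_X_mul_pderiv
    simp only [Fin.sum_univ_two, wt, nsmul_eq_mul] at e1 e2
    simp only [if_true, one_ne_zero, if_false] at e1 e2
    rw [br] at hbr
    have hu : IsUnit ((n : ℕ) : MvPolynomial (Fin 2) ℂ) := by
      have : ((n : ℕ) : MvPolynomial (Fin 2) ℂ) = C (n : ℂ) := by simp
      rw [this]
      exact (IsUnit.mk0 (n : ℂ) (by exact_mod_cast hn.ne')).map C
    have hdv : R ∣ p := by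
      refine dvd_of_dvd_mul_both R p _ _ hR0 hrel ?_ ?_
      · rw [← hu.dvd_mul_left]
        refine ⟨d * pderiv 0 p, ?_⟩
        linear_combination (-pderiv 0 R) * e1 + (pderiv 0 p) * e2 - b * X 1 * hbr
      · rw [← hu.dvd_mul_left]
        refine ⟨d * pderiv 1 p, ?_⟩
        linear_combination (-pderiv 1 R) * e1 + (pderiv 1 p) * e2 + a * X 0 * hbr
    obtain ⟨r, rfl⟩ := hdv
    have hr0 : r ≠ 0 := right_ne_zero_of_mul hp0
    have hrh : Hom (wt a b) (n - d : ℤ) r :=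
      Hom.of_mul (Hom.of_wh hR) hR0 (by rw [mul_comm]; exact Hom.of_wh hp)
    obtain ⟨m, hm⟩ := ne_zero_iff.mp hr0
    have hle : d ≤ n := by have := hrh.weight hm; omega
    have hbr' : br R r = 0 := by
      have := hbr
      simp only [Derivation.leibniz, smul_eq_mul] at this
      have h3 : R * br R r = 0 := by rw [br]; linear_combination this
      exact (mul_eq_zero.mp h3).resolve_left hR0
    refine hr0 (ih (n - d) (by omega) r ?_ hbr' ?_)
    · apply Hom.to_wh; rwa [Nat.cast_sub hle]
    · rcases hcp with h | h
      · left; rw [map_mul] at h; exact (mul_eq_zero.mp h).resolve_left hc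
      · right; intro h'; exact h ((Nat.dvd_sub_iff_left hle (dvd_refl d)).mp h')

lemma wh_wt_sum {a b d : ℕ} (R : MvPolynomial (Fin 2) ℂ)
    (hR : R.IsWeightedHomogeneous (wt a b) d) {k : ℕ} {g : MvPolynomial (Fin 2) ℂ}
    (hg : g.IsWeightedHomogeneous (wt a b) k) (μ : ℂ) (hμ : μ ≠ 0) (w : Fin 2 → ℂ) :
    eval (sc (wt a b) μ w) (br R g) * μ ^ (a + b) = μ ^ (k + d) * eval w (br R g) := by
  have h0 := Hom.of_wh hR |>.pderiv 0 μ hμ w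
  have h1 := Hom.of_wh hR |>.pderiv 1 μ hμ w
  have g0 := Hom.of_wh hg |>.pderiv 0 μ hμ w
  have g1 := Hom.of_wh hg |>.pderiv 1 μ hμ w
  rw [br, map_sub, map_mul, map_mul, map_sub, map_mul, map_mul, h0, h1, g0, g1]
  simp only [zpow_sub₀ hμ, zpow_natCast, wt, if_true, one_ne_zero, if_false]
  have := pow_ne_zero a hμ
  have := pow_ne_zero b hμ
  rw [pow_add, pow_add]
  field_simp

/-- Rewriting `g(μ·w)` through `μ ^ d * R(w) = u₀` as a combination of `1, μ, …, μ ^ (d - 1)` with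
homogeneous coefficients, compatibly with the bracket. -/
lemma window_br {a b d : ℕ} (hd : 0 < d) (R : MvPolynomial (Fin 2) ℂ)
    (hR : R.IsWeightedHomogeneous (wt a b) d) (u0 : ℂ) (g : MvPolynomial (Fin 2) ℂ) :
    ∃ M0, ∀ M ≥ M0, ∃ cc : ℕ → MvPolynomial (Fin 2) ℂ,
      (∀ j, (cc j).IsWeightedHomogeneous (wt a b) (j + d * M)) ∧
      ∀ w μ, μ ≠ 0 → μ ^ d * eval w R = u0 →
        (eval w R ^ M * eval (sc (wt a b) μ w) g = ∑ j ∈ Finset.range d, eval w (cc j) * μ ^ j) ∧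
        (eval w R ^ M * (eval (sc (wt a b) μ w) (br R g) * μ ^ (a + b)) =
          μ ^ d * ∑ j ∈ Finset.range d, eval w (br R (cc j)) * μ ^ j) := by
  induction g using MvPolynomial.induction_on' with
  | monomial m r =>
    set g := monomial m r with hgdef
    set k := Finsupp.weight (wt a b) m with hk
    have hg : g.IsWeightedHomogeneous (wt a b) k := isWeightedHomogeneous_monomial _ _ _ rfl
    refine ⟨k / d, fun M hM => ⟨fun j => if j = k % d then C (u0 ^ (k / d)) * (g * R ^ (M - k / d))
      else 0, ?_, ?_⟩⟩
    · intro j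
      dsimp only
      split_ifs with hj
      · have h1 := ((hg.mul (hR.pow (M - k / d))).C_mul (u0 ^ (k / d)))
        convert h1 using 1
        rw [hj, smul_eq_mul, mul_comm (M - k / d) d, Nat.mul_sub]
        have := Nat.mod_add_div k d
        have h2 : d * (k / d) ≤ d * M := Nat.mul_le_mul_left _ hM
        omega
      · exact isWeightedHomogeneous_zero _ _ _
    · intro w μ hμ hw
      have hkd : μ ^ k = μ ^ (k % d) * (μ ^ d) ^ (k / d) := by
        rw [← pow_mul, ← pow_add, Nat.mod_add_div]
      have hRM : eval w R ^ M = eval w R ^ (k / d) * eval w R ^ (M - k / d) := by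
        rw [← pow_add]; congr 1; omega
      have hmem : k % d ∈ Finset.range d := Finset.mem_range.mpr (Nat.mod_lt _ hd)
      constructor
      · rw [Finset.sum_eq_single_of_mem _ hmem (by intro j _ hj; simp [hj])]
        simp only [if_true, map_mul, map_pow, eval_C]
        rw [eval_sc _ hg, hkd, hRM, ← hw]
        ring
      · rw [Finset.sum_eq_single_of_mem _ hmem (by intro j _ hj; simp [hj, br])]
        simp only [if_true]
        rw [br_mul_pow, wh_wt_sum R hR hg μ hμ, pow_add μ k d, hkd, hRM, ← hw]
        simp only [map_mul, map_pow, eval_C]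
        ring
  | add p q hp hq =>
    obtain ⟨M1, h1⟩ := hp
    obtain ⟨M2, h2⟩ := hq
    refine ⟨max M1 M2, fun M hM => ?_⟩
    obtain ⟨c1, hc1, e1⟩ := h1 M (le_trans (le_max_left _ _) hM)
    obtain ⟨c2, hc2, e2⟩ := h2 M (le_trans (le_max_right _ _) hM)
    refine ⟨fun j => c1 j + c2 j, fun j => (hc1 j).add (hc2 j), fun w μ hμ hw => ?_⟩
    obtain ⟨e1, e1'⟩ := e1 w μ hμ hw
    obtain ⟨e2, e2'⟩ := e2 w μ hμ hw
    simp only [br_add, map_add, add_mul, Finset.sum_add_distrib, mul_add]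
    exact ⟨by rw [e1, e2], by rw [e1', e2']⟩

/-- A polynomial whose bracket with `R` vanishes on the level `{R = u₀}`, `u₀ ≠ 0`, is constant on
this level. -/
lemma const_on_level {a b d : ℕ} (ha : 0 < a) (hb : 0 < b) (hd : 0 < d)
    (R : MvPolynomial (Fin 2) ℂ)
    (hR : R.IsWeightedHomogeneous (wt a b) d) (hrel : IsRelPrime (pderiv 0 R) (pderiv 1 R))
    (c : Fin 2 → ℂ) (hc : eval c R ≠ 0) (u0 : ℂ) (hu0 : u0 ≠ 0) (g : MvPolynomial (Fin 2) ℂ)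
    (hg : ∀ w, eval w R = u0 → eval w (br R g) = 0) :
    ∃ κ, ∀ w, eval w R = u0 → eval w g = κ := by
  have hR0 : R ≠ 0 := by rintro rfl; simp at hc
  obtain ⟨M, h⟩ := window_br hd R hR u0 g
  obtain ⟨cc, hcc, hw⟩ := h M le_rfl
  have hbr : ∀ j < d, br R (cc j) = 0 := by
    intro j hj
    have : br R (cc j) * R = 0 := by
      refine MvPolynomial.funext fun w => ?_
      rw [map_mul, map_zero]
      by_cases hRw : eval w R = 0
      · rw [hRw, mul_zero]
      rw [coeff_zero_of_roots hd (v := u0 / eval w R) (div_ne_zero hu0 hRw)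
        (fun j => eval w (br R (cc j))) ?_ j hj, zero_mul]
      intro μ hμ
      have hμ0 : μ ≠ 0 := by
        rintro rfl; rw [zero_pow hd.ne'] at hμ; exact div_ne_zero hu0 hRw hμ.symm
      have hμ' : μ ^ d * eval w R = u0 := by rw [hμ]; field_simp
      have h2 := (hw w μ hμ0 hμ').2
      rw [hg _ (by rw [eval_sc _ hR, hμ'])] at h2
      rw [zero_mul, mul_zero] at h2
      exact (mul_eq_zero.mp h2.symm).resolve_left (pow_ne_zero _ hμ0)
    exact (mul_eq_zero.mp this).resolve_right hR0
  have hccj : ∀ j < d, j ≠ 0 → cc j = 0 := fun j hj hj0 =>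
    kernel_br ha hb hd R hR hrel c hc _ _ (hcc j) (hbr j hj) (Or.inr (by
      rw [Nat.dvd_add_left (dvd_mul_right d M)]
      exact Nat.not_dvd_of_pos_of_lt (Nat.pos_of_ne_zero hj0) hj))
  set κ := eval c (cc 0) / eval c R ^ M with hκ
  have hcc0 : cc 0 - C κ * (1 * R ^ M) = 0 := by
    refine kernel_br ha hb hd R hR hrel c hc (0 + d * M) _ ((hcc 0).sub ?_) ?_ (Or.inl ?_)
    · have := ((isWeightedHomogeneous_one ℂ (wt a b)).mul (hR.pow M)).C_mul κ
      rwa [smul_eq_mul, mul_comm M d] at this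
    · rw [sub_eq_add_neg, ← neg_mul, ← map_neg, br_add, br_mul_pow, hbr 0 hd]
      simp [br]
    · rw [map_sub, map_mul, map_mul, map_pow, map_one, eval_C, hκ]
      have := pow_ne_zero M hc
      field_simp
      ring
  refine ⟨κ, fun w hw0 => ?_⟩
  have h1 := (hw w 1 one_ne_zero (by rw [one_pow, one_mul, hw0])).1
  rw [sc_one, Finset.sum_eq_single_of_mem 0 (Finset.mem_range.mpr hd)
    (by intro j hj hj0; rw [hccj j (Finset.mem_range.mp hj) hj0]; simp), hw0] at h1
  have h2 := congrArg (eval w) hcc0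
  simp only [map_sub, map_mul, map_pow, map_one, eval_C, hw0, map_zero] at h2
  refine mul_left_cancel₀ (pow_ne_zero M hu0) ?_
  linear_combination h1 + h2

end QH

namespace QH
open MvPolynomial

/-! ### Polynomials vanishing on `{Re Q = 0}` -/

/-- A polynomial in `(z, w)` vanishing at all `(ζ, ζ̄)` with `ζ` small is zero. -/
lemma eq_zero_of_conj (P : MvPolynomial (Fin 2 ⊕ Fin 2) ℂ) (r : ℝ) (hr : 0 < r)
    (h : ∀ ζ : Fin 2 → ℂ, ‖ζ‖ < r → eval (Sum.elim ζ (star ζ)) P = 0) : P = 0 := by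
  -- `P'(x, y) = P(x + i y, x - i y)`
  let P' : MvPolynomial (Fin 2 ⊕ Fin 2) ℂ := bind₁ (Sum.elim
    (fun i => X (Sum.inl i) + C Complex.I * X (Sum.inr i))
    (fun i => X (Sum.inl i) - C Complex.I * X (Sum.inr i))) P
  have hev : ∀ x y : Fin 2 → ℂ, eval (Sum.elim x y) P' =
      eval (Sum.elim (fun i => x i + Complex.I * y i) (fun i => x i - Complex.I * y i)) P := by
    intro x y
    simp only [P']
    rw [eval, eval₂Hom_bind₁]
    congr 2
    funext i
    cases i <;> simp
  have hP' : P' = 0 := by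
    refine MvPolynomial.funext_set (fun _ => (fun t : ℝ => (t : ℂ)) '' Set.Ioo 0 (r / 4)) ?_ ?_
    · intro i
      exact (Set.Ioo_infinite (by positivity)).image Complex.ofReal_injective.injOn
    · intro v hv
      rw [map_zero]
      have hv' : ∀ i, ∃ t : ℝ, t ∈ Set.Ioo 0 (r / 4) ∧ (t : ℂ) = v i := fun i => hv i trivial
      choose t ht htv using hv'
      rw [← Sum.elim_comp_inl_inr v, hev]
      have hs : star (fun i => v (Sum.inl i) + Complex.I * v (Sum.inr i)) =
          (fun i => v (Sum.inl i) - Complex.I * v (Sum.inr i)) := by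
        funext i
        simp [← htv, sub_eq_add_neg]
      have := h (fun i => v (Sum.inl i) + Complex.I * v (Sum.inr i)) (by
        rw [pi_norm_lt_iff hr]
        intro i
        refine (norm_add_le _ _).trans_lt ?_
        rw [norm_mul, Complex.norm_I, one_mul, ← htv, ← htv, Complex.norm_real, Complex.norm_real,
          Real.norm_of_nonneg (ht _).1.le, Real.norm_of_nonneg (ht _).1.le]
        have := (ht (Sum.inl i)).2
        have := (ht (Sum.inr i)).2
        linarith)
      rw [hs] at this
      exact this
  refine MvPolynomial.funext fun v => ?_
  have := hev (fun i => (v (Sum.inl i) + v (Sum.inr i)) / 2)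
    (fun i => (v (Sum.inl i) - v (Sum.inr i)) / (2 * Complex.I))
  rw [hP', map_zero] at this
  rw [map_zero, this]
  congr 2
  funext i
  cases i
  · simp only [Sum.elim_inl]; field_simp; ring
  · simp only [Sum.elim_inr]; field_simp; ring

/-- Rewriting `P(u·z, w)` through `u ^ d * Q(z) = - Q̃(w)` as a combination of
`1, u, …, u ^ (d - 1)`. -/
lemma window_conj {a b d : ℕ} (hd : 0 < d) (Q Qb : MvPolynomial (Fin 2) ℂ)
    (P : MvPolynomial (Fin 2 ⊕ Fin 2) ℂ) :
    ∃ M0, ∀ M ≥ M0, ∃ cc : ℕ → MvPolynomial (Fin 2 ⊕ Fin 2) ℂ,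
      ∀ z w u, u ^ d * eval z Q = - eval w Qb →
        eval z Q ^ M * eval (Sum.elim (sc (wt a b) u z) w) P =
          ∑ j ∈ Finset.range d, eval (Sum.elim z w) (cc j) * u ^ j := by
  induction P using MvPolynomial.induction_on' with
  | monomial m r =>
    set g := monomial m r with hgdef
    set k := Finsupp.weight (Sum.elim (wt a b) 0) m with hk
    have hg : g.IsWeightedHomogeneous (Sum.elim (wt a b) 0) k :=
      isWeightedHomogeneous_monomial _ _ _ rfl
    refine ⟨k / d, fun M hM => ⟨fun j => if j = k % d then
      (rename Sum.inr (-Qb)) ^ (k / d) * (g * (rename Sum.inl Q) ^ (M - k / d)) else 0, ?_⟩⟩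
    intro z w u hu
    have hkd : u ^ k = u ^ (k % d) * (u ^ d) ^ (k / d) := by
      rw [← pow_mul, ← pow_add, Nat.mod_add_div]
    have hRM : eval z Q ^ M = eval z Q ^ (k / d) * eval z Q ^ (M - k / d) := by
      rw [← pow_add]; congr 1; omega
    have hmem : k % d ∈ Finset.range d := Finset.mem_range.mpr (Nat.mod_lt _ hd)
    rw [Finset.sum_eq_single_of_mem _ hmem (by intro j _ hj; simp [hj])]
    have hs : Sum.elim (sc (wt a b) u z) w = sc (Sum.elim (wt a b) 0) u (Sum.elim z w) := by
      funext i; cases i <;> simp [sc]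
    rw [hs, eval_sc _ hg, hkd, hRM]
    simp only [if_true, map_mul, map_pow, eval_inl, eval_inr, Sum.elim_comp_inl, Sum.elim_comp_inr,
      map_neg, ← hu]
    ring
  | add p q hp hq =>
    obtain ⟨M1, h1⟩ := hp
    obtain ⟨M2, h2⟩ := hq
    refine ⟨max M1 M2, fun M hM => ?_⟩
    obtain ⟨c1, e1⟩ := h1 M (le_trans (le_max_left _ _) hM)
    obtain ⟨c2, e2⟩ := h2 M (le_trans (le_max_right _ _) hM)
    refine ⟨fun j => c1 j + c2 j, fun z w u hu => ?_⟩
    simp only [map_add, add_mul, Finset.sum_add_distrib, mul_add]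
    rw [e1 z w u hu, e2 z w u hu]

/-- The polynomial with conjugated coefficients. -/
noncomputable def cj (Q : MvPolynomial (Fin 2) ℂ) : MvPolynomial (Fin 2) ℂ :=
  map (starRingEnd ℂ) Q

lemma eval_cj (Q : MvPolynomial (Fin 2) ℂ) (z : Fin 2 → ℂ) :
    eval (star z) (cj Q) = starRingEnd ℂ (eval z Q) := by
  rw [cj, eval_map]
  exact (eval₂_comp_left (starRingEnd ℂ) (RingHom.id ℂ) z Q).symm

/-- The weights on `ℂ⁴`. -/
def W4 (a b : ℕ) : Fin 2 ⊕ Fin 2 → ℕ := Sum.elim (wt a b) (wt a b)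

lemma sc_W4 (a b : ℕ) (l : ℂ) (z w : Fin 2 → ℂ) :
    sc (W4 a b) l (Sum.elim z w) = Sum.elim (sc (wt a b) l z) (sc (wt a b) l w) := by
  funext i; cases i <;> rfl

lemma star_sc {σ : Type*} (W : σ → ℕ) (l : ℂ) (x : σ → ℂ) :
    star (sc W l x) = sc W (starRingEnd ℂ l) (star x) := by
  funext i; simp [sc]

/-- A homogeneous polynomial vanishing at all `(ζ, ζ̄)` with `Re Q(ζ) = 0` is a multiple of
`Q(z) + Q̄(w)`. -/
lemma qq_dvd_of_real {a b d : ℕ} (hd : 0 < d) (Q : MvPolynomial (Fin 2) ℂ)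
    (hQ : Q.IsWeightedHomogeneous (wt a b) d) (j : Fin 2)
    (hj : pderiv j Q ≠ 0) (c c' : Fin 2 → ℂ) (hc : eval c (cj Q) ≠ eval c' (cj Q))
    {n : ℤ} (P : MvPolynomial (Fin 2 ⊕ Fin 2) ℂ) (hP : Hom (W4 a b) n P)
    (h : ∀ ζ : Fin 2 → ℂ, (eval ζ Q).re = 0 → eval ζ Q ≠ 0 →
      eval (Sum.elim ζ (star ζ)) P = 0) :
    qq Q (cj Q) ∣ P := by
  have hQ0 : Q ≠ 0 := by rintro rfl; simp at hj
  obtain ⟨M, hM⟩ := window_conj (a := a) (b := b) hd Q (cj Q) P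
  obtain ⟨cc, hcc⟩ := hM M le_rfl
  have hcc0 : ∀ j < d, cc j = 0 := by
    intro j hj
    have : cc j * rename Sum.inl Q = 0 := by
      refine eq_zero_of_conj _ 1 one_pos fun ζ _ => ?_
      rw [map_mul, eval_inl, Sum.elim_comp_inl]
      by_cases hζ : eval ζ Q = 0
      · rw [hζ, mul_zero]
      have hζ' : starRingEnd ℂ (eval ζ Q) ≠ 0 := by simpa using hζ
      rw [coeff_zero_of_roots hd (v := - starRingEnd ℂ (eval ζ Q) / eval ζ Q)
        (div_ne_zero (neg_ne_zero.mpr hζ') hζ)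
        (fun j => eval (Sum.elim ζ (star ζ)) (cc j)) ?_ j hj, zero_mul]
      intro u hu
      have hu' : u ^ d * eval ζ Q = - eval (star ζ) (cj Q) := by
        rw [hu, eval_cj]; field_simp
      rw [← hcc ζ (star ζ) u hu']
      have hun : ‖u‖ = 1 := by
        have := congrArg norm hu
        rw [norm_pow, norm_div, norm_neg, RCLike.norm_conj, div_self (norm_ne_zero_iff.mpr hζ)] at this
        exact (pow_eq_one_iff_of_nonneg (norm_nonneg _) hd.ne').mp this
      obtain ⟨v, hv⟩ := IsAlgClosed.exists_pow_nat_eq u two_pos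
      have hvn : ‖v‖ = 1 := by
        have := congrArg norm hv
        rw [norm_pow, hun] at this
        exact (pow_eq_one_iff_of_nonneg (norm_nonneg _) two_ne_zero).mp this
      have hv0 : v ≠ 0 := by rintro rfl; simp at hvn
      have hvc : v * starRingEnd ℂ v = 1 := by
        rw [Complex.mul_conj, Complex.normSq_eq_norm_sq, hvn]; simp
      -- rotating `ζ` by a square root `v` of `u` gives a point of `{Re Q = 0}`
      have hz := h (sc (wt a b) v ζ) ?_ ?_
      · have e : Sum.elim (sc (wt a b) u ζ) (star ζ) =
            sc (W4 a b) v (Sum.elim (sc (wt a b) v ζ) (star (sc (wt a b) v ζ))) := by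
          rw [sc_W4, star_sc, sc_mul, sc_mul, hvc, sc_one, ← hv, sq]
        rw [e, hP v hv0, hz, mul_zero, mul_zero]
      · rw [eval_sc _ hQ]
        have h1 : v ^ d * eval ζ Q + starRingEnd ℂ (v ^ d * eval ζ Q) = 0 := by
          rw [map_mul, map_pow]
          have e2 : v ^ d * (v ^ d * eval ζ Q) = - starRingEnd ℂ (eval ζ Q) := by
            rw [eval_cj] at hu'
            rw [← hu', ← hv]; ring
          have e3 : v ^ d * (starRingEnd ℂ v) ^ d = 1 := by rw [← mul_pow, hvc, one_pow]
          refine mul_left_cancel₀ (pow_ne_zero d hv0) ?_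
          linear_combination e2 + starRingEnd ℂ (eval ζ Q) * e3
        have h2 := congrArg Complex.re h1
        rw [Complex.add_re, Complex.conj_re, Complex.zero_re] at h2
        linarith
      · rw [eval_sc _ hQ]; exact mul_ne_zero (pow_ne_zero _ hv0) hζ
    refine (mul_eq_zero.mp this).resolve_right ?_
    rw [map_eq_zero_iff _ (rename_injective _ Sum.inl_injective)]
    exact hQ0
  refine qq_dvd_of_zeros Q (cj Q) Q hQ0 j hj c c' hc P fun z w hzw hz => ?_
  have h1 := hcc z w 1 (by rw [one_pow, one_mul]; linear_combination hzw)
  rw [sc_one, Finset.sum_eq_zero (fun j hj => by rw [hcc0 j (Finset.mem_range.mp hj)]; simp)] at h1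
  exact (mul_eq_zero.mp h1).resolve_left (pow_ne_zero _ hz)

end QH

namespace QH
open MvPolynomial

/-! ### Weighted order of germs -/

section OW
variable {σ : Type*} [Fintype σ]

/-- `f` has weighted order at least `N` at `0`: `f (l·x) = O(|l| ^ N)` as `l → 0`, locally
uniformly in `x`. -/
def OW (W : σ → ℕ) (N : ℤ) (f : (σ → ℂ) → ℂ) : Prop :=
  ∀ R : ℝ, 0 < R → ∃ C ε : ℝ, 0 < ε ∧ 0 ≤ C ∧ ∀ l : ℂ, l ≠ 0 → ‖l‖ < ε → ∀ x : σ → ℂ, ‖x‖ ≤ R →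
    ‖f (sc W l x)‖ ≤ C * ‖l‖ ^ N

variable {W : σ → ℕ}

lemma norm_sc_le (hW : ∀ i, 0 < W i) {l : ℂ} (hl : ‖l‖ ≤ 1) (x : σ → ℂ) :
    ‖sc W l x‖ ≤ ‖l‖ * ‖x‖ := by
  refine (pi_norm_le_iff_of_nonneg (by positivity)).mpr fun i => ?_
  rw [sc, norm_mul, norm_pow]
  gcongr
  · exact pow_le_of_le_one (norm_nonneg _) hl (hW i).ne'
  · exact norm_le_pi_norm x i

lemma sc_mem (hW : ∀ i, 0 < W i) {s : Set (σ → ℂ)} (hs : s ∈ 𝓝 (0 : σ → ℂ)) (R : ℝ) (hR : 0 < R) :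
    ∃ ε > 0, ε ≤ 1 ∧ ∀ l : ℂ, ‖l‖ < ε → ∀ x : σ → ℂ, ‖x‖ ≤ R → sc W l x ∈ s := by
  obtain ⟨δ, hδ, hs⟩ := Metric.mem_nhds_iff.mp hs
  refine ⟨min 1 (δ / R), by positivity, min_le_left _ _, fun l hl x hx => hs ?_⟩
  rw [mem_ball_zero_iff]
  have h1 : ‖l‖ < δ / R := hl.trans_le (min_le_right _ _)
  calc ‖sc W l x‖ ≤ ‖l‖ * ‖x‖ := norm_sc_le hW (hl.le.trans (min_le_left _ _)) x
    _ ≤ ‖l‖ * R := by gcongr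
    _ < δ := by rwa [lt_div_iff₀ hR] at h1

lemma OW.mono {N M : ℤ} {f : (σ → ℂ) → ℂ} (h : OW W N f) (hNM : M ≤ N) : OW W M f := by
  intro R hR
  obtain ⟨C, ε, hε, hC, h⟩ := h R hR
  refine ⟨C, min ε 1, by positivity, hC, fun l hl hl' x hx => ?_⟩
  refine (h l hl (hl'.trans_le (min_le_left _ _)) x hx).trans ?_
  gcongr C * ?_
  exact zpow_le_zpow_right_of_le_one₀ (norm_pos_iff.mpr hl) (hl'.le.trans (min_le_right _ _)) hNM

lemma OW.add {N : ℤ} {f g : (σ → ℂ) → ℂ} (hf : OW W N f) (hg : OW W N g) :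
    OW W N (fun x => f x + g x) := by
  intro R hR
  obtain ⟨C, ε, hε, hC, h⟩ := hf R hR
  obtain ⟨C', ε', hε', hC', h'⟩ := hg R hR
  refine ⟨C + C', min ε ε', by positivity, by positivity, fun l hl hl' x hx => ?_⟩
  refine (norm_add_le _ _).trans ?_
  rw [add_mul]
  exact add_le_add (h l hl (hl'.trans_le (min_le_left _ _)) x hx)
    (h' l hl (hl'.trans_le (min_le_right _ _)) x hx)

lemma OW.mul {N M : ℤ} {f g : (σ → ℂ) → ℂ} (hf : OW W N f) (hg : OW W M g) :
    OW W (N + M) (fun x => f x * g x) := by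
  intro R hR
  obtain ⟨C, ε, hε, hC, h⟩ := hf R hR
  obtain ⟨C', ε', hε', hC', h'⟩ := hg R hR
  refine ⟨C * C', min ε ε', by positivity, by positivity, fun l hl hl' x hx => ?_⟩
  rw [norm_mul, zpow_add₀ (norm_ne_zero_iff.mpr hl)]
  calc _ ≤ (C * ‖l‖ ^ N) * (C' * ‖l‖ ^ M) := by
        gcongr
        · exact h l hl (hl'.trans_le (min_le_left _ _)) x hx
        · exact h' l hl (hl'.trans_le (min_le_right _ _)) x hx
    _ = _ := by ring

lemma OW.neg {N : ℤ} {f : (σ → ℂ) → ℂ} (hf : OW W N f) : OW W N (fun x => - f x) := by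
  intro R hR
  obtain ⟨C, ε, hε, hC, h⟩ := hf R hR
  exact ⟨C, ε, hε, hC, fun l hl hl' x hx => by rw [norm_neg]; exact h l hl hl' x hx⟩

lemma OW.sub {N : ℤ} {f g : (σ → ℂ) → ℂ} (hf : OW W N f) (hg : OW W N g) :
    OW W N (fun x => f x - g x) := by
  simpa only [sub_eq_add_neg] using hf.add hg.neg

lemma OW.congr (hW : ∀ i, 0 < W i) {N : ℤ} {f g : (σ → ℂ) → ℂ} (hf : OW W N f)
    (h : ∀ᶠ x in 𝓝 0, g x = f x) : OW W N g := by
  intro R hR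
  obtain ⟨C, ε, hε, hC, hf⟩ := hf R hR
  obtain ⟨ε', hε', -, hm⟩ := sc_mem hW h R hR
  refine ⟨C, min ε ε', by positivity, hC, fun l hl hl' x hx => ?_⟩
  have : g (sc W l x) = f (sc W l x) := hm l (hl'.trans_le (min_le_right _ _)) x hx
  rw [this]
  exact hf l hl (hl'.trans_le (min_le_left _ _)) x hx

lemma OW.zero (N : ℤ) : OW W N (fun _ => 0) := fun R _ =>
  ⟨0, 1, one_pos, le_rfl, fun l _ _ x _ => by simp⟩

lemma OW.of_continuousAt (hW : ∀ i, 0 < W i) {f : (σ → ℂ) → ℂ} (hf : ContinuousAt f 0) :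
    OW W 0 f := by
  intro R hR
  have h1 : ∀ᶠ x in 𝓝 (0 : σ → ℂ), ‖f x‖ < ‖f 0‖ + 1 :=
    hf.norm.eventually (gt_mem_nhds (by linarith))
  obtain ⟨ε, hε, -, hm⟩ := sc_mem hW h1 R hR
  refine ⟨‖f 0‖ + 1, ε, hε, by positivity, fun l _ hl' x hx => ?_⟩
  rw [zpow_zero, mul_one]
  exact (hm l hl' x hx).le

lemma Hom.ow {n : ℤ} {P : MvPolynomial σ ℂ} (h : Hom W n P) : OW W n (fun x => eval x P) := by
  intro R hR
  obtain ⟨C, hC⟩ := (isCompact_closedBall (0 : σ → ℂ) R).exists_bound_of_continuousOn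
    (MvPolynomial.continuous_eval P).continuousOn
  refine ⟨max C 0, 1, one_pos, le_max_right _ _, fun l hl _ x hx => ?_⟩
  beta_reduce
  rw [h l hl, norm_mul, norm_zpow, mul_comm]
  gcongr
  exact (hC x (by simpa using hx)).trans (le_max_left _ _)

/-- A homogeneous polynomial whose weighted order exceeds its degree is zero. -/
lemma Hom.eq_zero {n : ℤ} {P : MvPolynomial σ ℂ} (h : Hom W n P)
    (h' : OW W (n + 1) (fun x => eval x P)) : P = 0 := by
  refine MvPolynomial.funext fun x => ?_
  rw [map_zero]
  obtain ⟨C, ε, hε, hC, hb⟩ := h' (‖x‖ + 1) (by positivity)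
  have key : ∀ t : ℝ, 0 < t → t < ε → ‖eval x P‖ ≤ C * t := by
    intro t ht hte
    have ht0 : (t : ℂ) ≠ 0 := by exact_mod_cast ht.ne'
    have hn : ‖(t : ℂ)‖ = t := by simp [abs_of_pos ht]
    have := hb t ht0 (by rwa [hn]) x (by linarith)
    beta_reduce at this
    rw [h _ ht0, norm_mul, norm_zpow, hn, zpow_add₀ ht.ne', zpow_one] at this
    have hp := zpow_pos ht n
    have h2 : t ^ n * ‖eval x P‖ ≤ t ^ n * (C * t) := by linarith
    exact le_of_mul_le_mul_left h2 hp
  have hlim : Tendsto (fun t : ℝ => C * t) (𝓝[>] 0) (𝓝 0) := by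
    have : Tendsto (fun t : ℝ => C * t) (𝓝 0) (𝓝 (C * 0)) :=
      (continuous_const.mul continuous_id).tendsto 0
    rw [mul_zero] at this
    exact this.mono_left nhdsWithin_le_nhds
  have : ‖eval x P‖ ≤ 0 := ge_of_tendsto hlim (by
    filter_upwards [Ioo_mem_nhdsGT hε] with t ht using key t ht.1 ht.2)
  exact norm_le_zero_iff.mp this

/-- Taylor polynomials: an analytic germ is a polynomial up to any given weighted order. -/
lemma exists_taylor (hW : ∀ i, 0 < W i) {f : (σ → ℂ) → ℂ} (hf : AnalyticAt ℂ f 0) (n : ℕ) :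
    ∃ T : MvPolynomial σ ℂ, OW W n (fun x => f x - eval x T) := by
  classical
  obtain ⟨p, hp⟩ := hf
  have hpoly : ∀ k, ∃ T : MvPolynomial σ ℂ, ∀ y, p k (fun _ => y) = eval y T := by
    intro k
    refine ⟨∑ r : Fin k → σ, C (p k (fun i => Pi.single (r i) 1)) * ∏ i, X (r i), fun y => ?_⟩
    have hy : y = ∑ j, y j • (Pi.single j 1 : σ → ℂ) := by
      funext i; simp [Finset.sum_apply, Pi.single_apply]
    conv_lhs => rw [hy]
    rw [ContinuousMultilinearMap.map_sum, map_sum]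
    refine Finset.sum_congr rfl fun r _ => ?_
    rw [ContinuousMultilinearMap.map_smul_univ, map_mul, eval_C, map_prod]
    simp [mul_comm]
  choose T hT using hpoly
  refine ⟨∑ k ∈ Finset.range n, T k, ?_⟩
  have hO := hp.isBigO_sub_partialSum_pow n
  obtain ⟨c, hc0, hc⟩ := hO.exists_nonneg
  rw [Asymptotics.isBigOWith_iff] at hc
  intro R hR
  obtain ⟨ε, hε, hε1, hm⟩ := sc_mem hW hc R hR
  refine ⟨c * R ^ n, ε, hε, by positivity, fun l hl hl' x hx => ?_⟩
  have := hm l hl' x hx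
  simp only [Set.mem_ofPred_eq, zero_add, FormalMultilinearSeries.partialSum, hT, norm_pow,
    norm_norm] at this
  beta_reduce
  rw [map_sum]
  refine this.trans ?_
  rw [zpow_natCast, mul_assoc, ← mul_pow, mul_comm R]
  gcongr
  exact (norm_sc_le hW (hl'.le.trans hε1) x).trans (by gcongr)

/-- The weighted homogeneous components of a polynomial of weighted order `≥ n` vanish below `n`. -/
lemma component_eq_zero {n : ℕ} {T : MvPolynomial σ ℂ}
    (h : OW W n (fun x => eval x T)) : ∀ k < n, weightedHomogeneousComponent W k T = 0 := by
  classical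
  intro k
  induction k using Nat.strong_induction_on with
  | _ k ih =>
  intro hk
  set Tk := weightedHomogeneousComponent W k T with hTk
  have hTkh : Tk.IsWeightedHomogeneous W k := weightedHomogeneousComponent_isWeightedHomogeneous k T
  refine Hom.eq_zero (Hom.of_wh hTkh) ?_
  -- the difference `T - Tk` consists of components of degree `> k`
  have hrest : OW W ((k : ℤ) + 1) (fun x => eval x (T - Tk)) := by
    have hsum : T - Tk = ∑ m ∈ (T - Tk).support, monomial m (coeff m (T - Tk)) :=
      (support_sum_monomial_coeff (T - Tk)).symm
    have hmon : ∀ m ∈ (T - Tk).support, OW W ((k : ℤ) + 1)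
        (fun x => eval x (monomial m (coeff m (T - Tk)))) := by
      intro m hm
      have hw : ((monomial m (coeff m (T - Tk)) : MvPolynomial σ ℂ)).IsWeightedHomogeneous W
        (Finsupp.weight W m) := isWeightedHomogeneous_monomial _ _ _ rfl
      refine (Hom.of_wh hw).ow.mono ?_
      by_contra hlt
      push Not at hlt
      have hle : Finsupp.weight W m ≤ k := by omega
      apply mem_support_iff.mp hm
      rw [coeff_sub, hTk, coeff_weightedHomogeneousComponent]
      split_ifs with he
      · rw [sub_self]
      · have := ih _ (lt_of_le_of_ne hle he) (by omega)
        have h2 := congrArg (coeff m) this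
        rw [coeff_weightedHomogeneousComponent, if_pos rfl, coeff_zero] at h2
        rw [h2, sub_zero]
    rw [hsum]
    simp only [map_sum]
    have : ∀ s : Finset (σ →₀ ℕ), s ⊆ (T - Tk).support → OW W ((k : ℤ) + 1)
        (fun x => ∑ m ∈ s, eval x (monomial m (coeff m (T - Tk)))) := by
      intro s
      induction s using Finset.induction_on with
      | empty => intro _; simpa using OW.zero _
      | insert m s hms ihs =>
        intro hsub
        simp only [Finset.sum_insert hms]
        exact (hmon m (hsub (Finset.mem_insert_self _ _))).add
          (ihs fun x hx => hsub (Finset.mem_insert_of_mem hx))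
    exact this _ subset_rfl
  have h1 : OW W ((k : ℤ) + 1) (fun x => eval x T) := h.mono (by omega)
  have := h1.sub hrest
  simpa using this

/-- The leading weighted homogeneous part of an analytic germ. -/
lemma exists_leading (hW : ∀ i, 0 < W i) {f : (σ → ℂ) → ℂ} (hf : AnalyticAt ℂ f 0) {N : ℤ}
    (h : OW W N f) : ∃ P : MvPolynomial σ ℂ, Hom W N P ∧ OW W (N + 1) (fun x => f x - eval x P) := by
  classical
  rcases lt_or_ge N 0 with hN | hN
  · refine ⟨0, Hom.zero _ _, ?_⟩
    have := (OW.of_continuousAt hW hf.continuousAt).mono (M := N + 1) (by omega)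
    simpa using this
  obtain ⟨n, rfl⟩ := Int.eq_ofNat_of_zero_le hN
  obtain ⟨T, hT⟩ := exists_taylor hW hf (n + 1)
  have hTn : OW W n (fun x => eval x T) := by
    have := h.sub (hT.mono (M := n) (by push_cast; omega))
    simpa using this
  set P := weightedHomogeneousComponent W n T with hP
  have hPh : P.IsWeightedHomogeneous W n := weightedHomogeneousComponent_isWeightedHomogeneous n T
  refine ⟨P, Hom.of_wh hPh, ?_⟩
  obtain ⟨P', hP', hP'T⟩ : ∃ P' : MvPolynomial σ ℂ, P' = T - P ∧
      OW W ((n : ℤ) + 1) (fun x => eval x P') := by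
    refine ⟨T - P, rfl, ?_⟩
    have hz := component_eq_zero hTn
    rw [← support_sum_monomial_coeff (T - P)]
    simp only [map_sum]
    have : ∀ s : Finset (σ →₀ ℕ), s ⊆ (T - P).support → OW W ((n : ℤ) + 1)
        (fun x => ∑ m ∈ s, eval x (monomial m (coeff m (T - P)))) := by
      intro s
      induction s using Finset.induction_on with
      | empty => intro _; simpa using OW.zero _
      | insert m s hms ihs =>
        intro hsub
        simp only [Finset.sum_insert hms]
        refine OW.add ?_ (ihs fun x hx => hsub (Finset.mem_insert_of_mem hx))
        have hw : ((monomial m (coeff m (T - P)) : MvPolynomial σ ℂ)).IsWeightedHomogeneous W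
          (Finsupp.weight W m) := isWeightedHomogeneous_monomial _ _ _ rfl
        refine (Hom.of_wh hw).ow.mono ?_
        by_contra hlt
        push Not at hlt
        apply mem_support_iff.mp (hsub (Finset.mem_insert_self _ _))
        rw [coeff_sub, hP, coeff_weightedHomogeneousComponent]
        split_ifs with he
        · rw [sub_self]
        · have h2 := congrArg (coeff m) (hz (Finsupp.weight W m) (by omega))
          rw [coeff_weightedHomogeneousComponent, if_pos rfl, coeff_zero] at h2
          rw [h2, sub_zero]
    exact this _ subset_rfl
  have h3 := (hT.mono (M := (n : ℤ) + 1) (by push_cast; omega)).add hP'T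
  rw [hP'] at h3
  simpa using h3

lemma analyticAt_eval (P : MvPolynomial σ ℂ) (x : σ → ℂ) : AnalyticAt ℂ (fun x => eval x P) x := by
  have := AnalyticOnNhd.eval_mvPolynomial (𝕜 := ℂ) P x trivial
  exact this

variable [DecidableEq σ]

/-- Partial derivative of a function on `ℂ^σ`. -/
noncomputable def pd (f : (σ → ℂ) → ℂ) (k : σ) (x : σ → ℂ) : ℂ := fderiv ℂ f x (Pi.single k 1)

lemma analyticAt_pd {f : (σ → ℂ) → ℂ} {x : σ → ℂ} (h : AnalyticAt ℂ f x) (k : σ) :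
    AnalyticAt ℂ (pd f k) x := 
  ((ContinuousLinearMap.apply ℂ ℂ (Pi.single k 1 : σ → ℂ)).analyticAt _).comp h.fderiv

lemma pd_eval (P : MvPolynomial σ ℂ) (k : σ) (x : σ → ℂ) :
    pd (fun x => eval x P) k x = eval x (pderiv k P) := by
  have hd : ∀ P : MvPolynomial σ ℂ, DifferentiableAt ℂ (fun x => eval x P) x := fun P =>
    (analyticAt_eval P x).differentiableAt
  induction P using MvPolynomial.induction_on with
  | C r => simp [pd]
  | add p q hp hq =>
    simp only [pd, map_add] at hp hq ⊢
    rw [fderiv_fun_add (hd p) (hd q), add_apply, hp, hq]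
  | mul_X p i hp =>
    have hX : HasFDerivAt (fun x : σ → ℂ => x i) (ContinuousLinearMap.proj (R := ℂ) i) x :=
      hasFDerivAt_apply i x
    have := ((hd p).hasFDerivAt.fun_mul hX).fderiv
    simp only [pd] at hp ⊢
    simp only [map_mul, eval_X]
    rw [this]
    simp only [add_apply, smul_apply, hp,
      ContinuousLinearMap.proj_apply, smul_eq_mul, Derivation.leibniz, map_add, map_mul, eval_X,
      pderiv_X]
    by_cases h : k = i
    · subst h; simp
    · simp [Ne.symm h]

/-- Differentiation lowers the weighted order by the weight of the variable (Cauchy's estimate). -/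
lemma OW.pd (hW : ∀ i, 0 < W i) {N : ℤ} {f : (σ → ℂ) → ℂ} (hf : OW W N f)
    (hd : AnalyticAt ℂ f 0) (k : σ) : OW W (N - W k) (QH.pd f k) := by
  intro R hR
  obtain ⟨C, ε, hε, hC, hb⟩ := hf (R + 1) (by positivity)
  have hd' : ∀ᶠ x in 𝓝 (0 : σ → ℂ), DifferentiableAt ℂ f x :=
    hd.eventually_analyticAt.mono fun x hx => hx.differentiableAt
  obtain ⟨ε', hε', -, hm⟩ := sc_mem hW hd' (R + 1) (by positivity)
  refine ⟨C, min ε ε', by positivity, hC, fun l hl hl' x hx => ?_⟩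
  -- apply the Cauchy estimate to the function `t ↦ f (l·(x + t e_k))` on the unit disc
  set φ : ℂ → ℂ := fun t => f (sc W l (x + Pi.single k t)) with hφ
  have hxt : ∀ t : ℂ, ‖t‖ ≤ 1 → ‖x + Pi.single k t‖ ≤ R + 1 := fun t ht => by
    refine (norm_add_le _ _).trans (add_le_add hx ?_)
    rw [Pi.norm_single]; exact ht
  have hinner : ∀ t : ℂ, HasDerivAt (fun t : ℂ => sc W l (x + Pi.single k t))
      (Pi.single k (l ^ W k)) t := by
    intro t
    rw [hasDerivAt_pi]
    intro i
    by_cases hi : i = k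
    · subst hi
      simp only [sc, Pi.add_apply, Pi.single_eq_same]
      have := ((hasDerivAt_id t).const_add (x i)).const_mul (l ^ W i)
      simpa using this
    · simp only [sc, Pi.add_apply, Pi.single_eq_of_ne hi]
      exact hasDerivAt_const _ _
  have hφd : ∀ t : ℂ, ‖t‖ ≤ 1 → HasDerivAt φ
      (fderiv ℂ f (sc W l (x + Pi.single k t)) (Pi.single k (l ^ W k))) t := by
    intro t ht
    have h1 : DifferentiableAt ℂ f (sc W l (x + Pi.single k t)) :=
      hm l (hl'.trans_le (min_le_right _ _)) _ (hxt t ht)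
    exact h1.hasFDerivAt.comp_hasDerivAt t (hinner t)
  have hdc : DiffContOnCl ℂ φ (Metric.ball 0 1) := by
    refine DifferentiableOn.diffContOnCl fun t ht => ?_
    refine (hφd t ?_).differentiableAt.differentiableWithinAt
    rw [closure_ball _ one_ne_zero] at ht
    simpa using ht
  have hest := Complex.norm_deriv_le_of_forall_mem_sphere_norm_le (c := 0) (C := C * ‖l‖ ^ N)
    one_pos hdc (fun t ht => by
      have ht' : ‖t‖ ≤ 1 := by simp at ht; exact ht.le
      exact hb l hl (hl'.trans_le (min_le_left _ _)) _ (hxt t ht'))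
  rw [(hφd 0 (by simp)).deriv, Pi.single_zero, add_zero, div_one] at hest
  have e : (Pi.single k (l ^ W k) : σ → ℂ) = l ^ W k • Pi.single k 1 := by
    rw [← Pi.single_smul]; simp
  rw [e, map_smul, norm_smul, norm_pow] at hest
  have hlp : 0 < ‖l‖ := norm_pos_iff.mpr hl
  rw [zpow_sub₀ hlp.ne', zpow_natCast, ← mul_div_assoc, le_div_iff₀ (by positivity), mul_comm]
  exact hest

end OW

end QH

namespace QH
open MvPolynomial

/-! ### The initial part of the defining function -/

/-- Standing data: `G` is a holomorphic germ at `0 ∈ ℂ⁴` with weighted initial part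
`Q(z) + Q̄(w)`, where `Q` is quasihomogeneous with an isolated critical point. -/
structure Data (a b d : ℕ) (Q : MvPolynomial (Fin 2) ℂ) (G : (Fin 2 ⊕ Fin 2 → ℂ) → ℂ) : Prop where
  ha : 0 < a
  hb : 0 < b
  hd : 0 < d
  hQ : Q.IsWeightedHomogeneous (wt a b) d
  crit : ∀ x, (∀ i, eval x (pderiv i Q) = 0) → x = 0
  hG : AnalyticAt ℂ G 0
  hGo : OW (W4 a b) (d + 1) (fun x => G x - eval x (qq Q (cj Q)))

lemma wt_pos {a b : ℕ} (ha : 0 < a) (hb : 0 < b) (i : Fin 2) : 0 < wt a b i := by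
  rw [wt]; split_ifs <;> assumption

lemma W4_pos {a b : ℕ} (ha : 0 < a) (hb : 0 < b) (i : Fin 2 ⊕ Fin 2) : 0 < W4 a b i := by
  cases i <;> exact wt_pos ha hb _

lemma sc_zero {σ : Type*} {W : σ → ℕ} (hW : ∀ i, 0 < W i) (x : σ → ℂ) : sc W 0 x = 0 := by
  funext i; simp [sc, (hW i).ne']

lemma wh_cj {a b d : ℕ} {Q : MvPolynomial (Fin 2) ℂ} (hQ : Q.IsWeightedHomogeneous (wt a b) d) :
    (cj Q).IsWeightedHomogeneous (wt a b) d := by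
  intro m hm
  apply hQ
  intro h
  rw [cj, coeff_map, h, map_zero] at hm
  exact hm rfl

lemma pderiv_cj (Q : MvPolynomial (Fin 2) ℂ) (i : Fin 2) : pderiv i (cj Q) = cj (pderiv i Q) := by
  rw [cj, cj, pderiv_map]

section
variable {a b d : ℕ} {Q : MvPolynomial (Fin 2) ℂ} {G : (Fin 2 ⊕ Fin 2 → ℂ) → ℂ}

lemma Data.hW (D : Data a b d Q G) : ∀ i, 0 < W4 a b i := W4_pos D.ha D.hb

lemma Data.exists_j (D : Data a b d Q G) : ∃ j, pderiv j Q ≠ 0 := by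
  by_contra! h
  have := D.crit 1 (fun i => by rw [h i, map_zero])
  exact one_ne_zero (congrFun this 0)

lemma Data.crit_cj (D : Data a b d Q G) (x : Fin 2 → ℂ)
    (h : ∀ i, eval x (pderiv i (cj Q)) = 0) : x = 0 := by
  have := D.crit (star x) fun i => by
    have h1 := h i
    rw [pderiv_cj, ← star_star x, eval_cj] at h1
    exact (map_eq_zero _).mp h1
  rw [← star_star x, this, star_zero]

lemma Data.relPrime (D : Data a b d Q G) :
    IsRelPrime (pderiv 0 (cj Q)) (pderiv 1 (cj Q)) := by
  refine isRelPrime_of_zeros _ _ fun x h0 h1 => D.crit_cj x ?_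
  exact Fin.forall_fin_two.mpr ⟨h0, h1⟩

lemma Data.Q_ne (D : Data a b d Q G) : Q ≠ 0 := by
  rintro rfl
  obtain ⟨j, hj⟩ := D.exists_j
  simp at hj

lemma Data.exists_c (D : Data a b d Q G) : ∃ c : Fin 2 → ℂ, eval c (cj Q) = 1 ∧ c 1 ≠ 0 := by
  have h0 : cj Q ≠ 0 := fun h => D.Q_ne <| by
    refine map_injective (starRingEnd ℂ) (RingHom.injective _) ?_
    rw [map_zero]; exact h
  have h1 : cj Q * X 1 ≠ 0 := mul_ne_zero h0 (X_ne_zero _)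
  obtain ⟨x, hx⟩ : ∃ x, eval x (cj Q * X 1) ≠ 0 := by
    by_contra! h
    exact h1 (MvPolynomial.funext fun x => by rw [h x, map_zero])
  rw [map_mul, eval_X, mul_ne_zero_iff] at hx
  obtain ⟨l, hl⟩ := IsAlgClosed.exists_pow_nat_eq (eval x (cj Q))⁻¹ D.hd
  have hl0 : l ≠ 0 := by
    rintro rfl
    rw [zero_pow D.hd.ne'] at hl
    exact inv_ne_zero hx.1 hl.symm
  refine ⟨sc (wt a b) l x, ?_, ?_⟩
  · rw [eval_sc _ (wh_cj D.hQ), hl, inv_mul_cancel₀ hx.1]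
  · exact mul_ne_zero (pow_ne_zero _ hl0) hx.2

lemma eval_zero_wh {a b d : ℕ} (ha : 0 < a) (hb : 0 < b) (hd : 0 < d) {Q : MvPolynomial (Fin 2) ℂ}
    (hQ : Q.IsWeightedHomogeneous (wt a b) d) : eval (0 : Fin 2 → ℂ) Q = 0 := by
  have := eval_sc (wt a b) hQ 0 0
  rwa [sc_zero (wt_pos ha hb), zero_pow hd.ne', zero_mul] at this

lemma elim_eta (x : Fin 2 ⊕ Fin 2 → ℂ) : Sum.elim (x ∘ Sum.inl) (x ∘ Sum.inr) = x := by
  funext i; cases i <;> rfl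

lemma hom_inl {n : ℤ} {P : MvPolynomial (Fin 2) ℂ} (h : Hom (wt a b) n P) :
    Hom (W4 a b) n (rename Sum.inl P) := by
  intro l hl x
  rw [eval_inl, eval_inl, ← h l hl]
  rfl

lemma hom_inr {n : ℤ} {P : MvPolynomial (Fin 2) ℂ} (h : Hom (wt a b) n P) :
    Hom (W4 a b) n (rename Sum.inr P) := by
  intro l hl x
  rw [eval_inr, eval_inr, ← h l hl]
  rfl

lemma hom_qq (hQ : Q.IsWeightedHomogeneous (wt a b) d) : Hom (W4 a b) d (qq Q (cj Q)) :=
  (hom_inl (Hom.of_wh hQ)).add (hom_inr (Hom.of_wh (wh_cj hQ)))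

lemma Data.hom_qq (D : Data a b d Q G) : Hom (W4 a b) d (qq Q (cj Q)) := QH.hom_qq D.hQ

lemma Data.qq_ne (D : Data a b d Q G) : qq Q (cj Q) ≠ 0 := by
  intro h
  obtain ⟨c, hc, -⟩ := D.exists_c
  have := eval_qq Q (cj Q) 0 c
  rw [h, hc, eval_zero_wh D.ha D.hb D.hd D.hQ] at this
  simp at this

lemma Data.ow (D : Data a b d Q G) : OW (W4 a b) d G := by
  have := (D.hGo.mono (M := d) (by omega)).add D.hom_qq.ow
  simpa using this

lemma Data.ow_pd (D : Data a b d Q G) (k : Fin 2 ⊕ Fin 2) :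
    OW (W4 a b) (d - W4 a b k + 1) (fun x => pd G k x - eval x (pderiv k (qq Q (cj Q)))) := by
  have h := D.hGo.pd D.hW (D.hG.sub (analyticAt_eval _ _)) k
  refine OW.congr D.hW (h.mono (by omega)) ?_
  filter_upwards [D.hG.eventually_analyticAt] with x hx
  rw [← pd_eval]
  simp only [pd]
  rw [fderiv_fun_sub hx.differentiableAt (analyticAt_eval _ x).differentiableAt]
  rfl

lemma Data.ow_pd' (D : Data a b d Q G) (k : Fin 2 ⊕ Fin 2) :
    OW (W4 a b) (d - W4 a b k) (pd G k) := D.ow.pd D.hW D.hG k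

/-- If the initial part of `G · T` is `P`, then `P` is a multiple of the initial part of `G`. -/
lemma Data.dvd_of_mul (D : Data a b d Q G) {T : (Fin 2 ⊕ Fin 2 → ℂ) → ℂ} (hT : AnalyticAt ℂ T 0)
    {n : ℤ} {P : MvPolynomial (Fin 2 ⊕ Fin 2) ℂ} (hP : Hom (W4 a b) n P)
    (h : OW (W4 a b) (n + 1) (fun x => G x * T x - eval x P)) : qq Q (cj Q) ∣ P := by
  have key : ∀ (m : ℤ) (T' : MvPolynomial (Fin 2 ⊕ Fin 2) ℂ),
      OW (W4 a b) m T → OW (W4 a b) (m + 1) (fun x => T x - eval x T') →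
      OW (W4 a b) (d + m + 1) (fun x => G x * T x - eval x (qq Q (cj Q) * T')) := by
    intro m T' h1 h2
    have h3 := (D.hGo.mul h1).mono (M := d + m + 1) (by omega)
    have h4 := (D.hom_qq.ow.mul h2).mono (M := d + m + 1) (by omega)
    have h5 := h3.add h4
    convert h5 using 2 with x
    rw [map_mul]; ring
  have step : ∀ m : ℤ, m < n - d → OW (W4 a b) m T → OW (W4 a b) (m + 1) T := by
    intro m hm h1
    obtain ⟨T', hT', h2⟩ := exists_leading D.hW hT h1
    have h3 := key m T' h1 h2
    have h4 := (h.mono (M := d + m + 1) (by omega)).sub h3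
    have h5 := h4.add (hP.ow.mono (M := d + m + 1) (by omega))
    have h0 : qq Q (cj Q) * T' = 0 := by
      refine (D.hom_qq.mul hT').eq_zero ?_
      convert h5 using 2 with x
      ring
    have h0' : T' = 0 := (mul_eq_zero.mp h0).resolve_left D.qq_ne
    simpa [h0'] using h2
  have hbase : OW (W4 a b) (min 0 (n - d)) T :=
    (OW.of_continuousAt D.hW hT.continuousAt).mono (min_le_left _ _)
  have hfin : OW (W4 a b) (n - d) T := by
    have : ∀ m : ℤ, min 0 (n - d) ≤ m → m ≤ n - d → OW (W4 a b) m T := by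
      intro m hm
      induction m, hm using Int.leInduction with
      | base => intro _; exact hbase
      | succ m hm ih => intro h; exact step m (by omega) (ih (by omega))
    exact this _ (min_le_right _ _) le_rfl
  obtain ⟨T', hT', h2⟩ := exists_leading D.hW hT hfin
  have h3 := key _ T' hfin h2
  have h4 := (h3.mono (M := n + 1) (by omega)).sub h
  have hPe : P - qq Q (cj Q) * T' = 0 := by
    refine Hom.eq_zero (n := n) (W := W4 a b) (hP.sub ?_) ?_
    · have := D.hom_qq.mul hT'
      rwa [show (d : ℤ) + (n - d) = n by ring] at this
    · convert h4 using 2 with x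
      rw [map_sub]; ring
  exact ⟨T', sub_eq_zero.mp hPe⟩

/-- If `f` is relatively small at points `l·x` with `l → 0` and `x → x₀` then its initial part
vanishes at `x₀`. -/
lemma leading_zero {σ : Type*} [Fintype σ] {W : σ → ℕ} {f : (σ → ℂ) → ℂ} {N : ℤ}
    {P : MvPolynomial σ ℂ} (hP : Hom W N P) (h : OW W (N + 1) (fun x => f x - eval x P))
    (x₀ : σ → ℂ) (hz : ∀ ε > 0, ∃ l : ℂ, l ≠ 0 ∧ ‖l‖ < ε ∧ ∃ x, dist x x₀ < ε ∧
      ‖f (sc W l x)‖ ≤ ε * ‖l‖ ^ N) : eval x₀ P = 0 := by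
  by_contra hne
  obtain ⟨C, ε, hε, hC, hb⟩ := h (‖x₀‖ + 1) (by positivity)
  have hpos : 0 < ‖eval x₀ P‖ := norm_pos_iff.mpr hne
  obtain ⟨δ, hδ, hc⟩ := Metric.continuous_iff.mp (MvPolynomial.continuous_eval P) x₀
    (‖eval x₀ P‖ / 2) (by positivity)
  set e := min (min ε δ) (min 1 (‖eval x₀ P‖ / (2 * (C + 1)))) with he
  have he0 : 0 < e := by positivity
  obtain ⟨l, hl, hle, x, hx, hf⟩ := hz e he0
  have e1 : e ≤ ε := (min_le_left _ _).trans (min_le_left _ _)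
  have e2 : e ≤ δ := (min_le_left _ _).trans (min_le_right _ _)
  have e3 : e ≤ 1 := (min_le_right _ _).trans (min_le_left _ _)
  have e4 : e ≤ ‖eval x₀ P‖ / (2 * (C + 1)) := (min_le_right _ _).trans (min_le_right _ _)
  have hxn : ‖x‖ ≤ ‖x₀‖ + 1 := by
    have : ‖x - x₀‖ < 1 := by rw [← dist_eq_norm]; linarith
    have := norm_le_norm_add_norm_sub' x x₀
    linarith
  have h1 := hb l hl (by linarith) x hxn
  have h2 := hc x (by linarith)
  beta_reduce at h1
  rw [hP l hl] at h1
  have hlp : 0 < ‖l‖ := norm_pos_iff.mpr hl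
  have h3 : ‖l‖ ^ N * ‖eval x P‖ ≤ ‖l‖ ^ N * (C * ‖l‖ + e) := by
    rw [← norm_zpow, ← norm_mul, norm_zpow]
    have := norm_sub_norm_le (l ^ N * eval x P) (f (sc W l x))
    rw [norm_sub_rev] at this
    rw [zpow_add₀ hlp.ne', zpow_one] at h1
    nlinarith
  have h4 := le_of_mul_le_mul_left h3 (zpow_pos hlp N)
  rw [dist_eq_norm] at h2
  have h5 := norm_sub_norm_le (eval x₀ P) (eval x P)
  rw [norm_sub_rev] at h5
  have h6 : e * (2 * (C + 1)) ≤ ‖eval x₀ P‖ := by rwa [le_div_iff₀ (by positivity)] at e4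
  nlinarith

end

/-- A function holomorphic on a punctured disc which is `O(λ ^ N)` for every `N` vanishes. -/
lemma flat_zero {f : ℂ → ℂ} {r : ℝ} (hf : DifferentiableOn ℂ f (Metric.ball 0 r \ {0}))
    (h : ∀ N : ℕ, ∃ C ε : ℝ, 0 < ε ∧ ∀ l : ℂ, l ≠ 0 → ‖l‖ < ε → ‖f l‖ ≤ C * ‖l‖ ^ N) :
    ∀ l : ℂ, l ≠ 0 → ‖l‖ < r → f l = 0 := by
  intro l hl hlr
  have hr : 0 < r := (norm_nonneg _).trans_lt hlr
  -- extend by `0` at the origin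
  set g : ℂ → ℂ := Function.update f 0 0 with hg
  have hgd : DifferentiableOn ℂ g (Metric.ball 0 r) := by
    refine (Complex.differentiableOn_compl_singleton_and_continuousAt_iff (c := 0)
      (Metric.ball_mem_nhds 0 hr)).mp ⟨?_, ?_⟩
    · refine hf.congr fun x hx => ?_
      rw [hg, Function.update_of_ne hx.2]
    · obtain ⟨C, ε, hε, hb⟩ := h 1
      rw [continuousAt_iff_punctured_nhds, hg, Function.update_self]
      have h1 : Tendsto (fun l : ℂ => C * ‖l‖ ^ 1) (𝓝[≠] 0) (𝓝 0) := by
        have : Tendsto (fun l : ℂ => C * ‖l‖ ^ 1) (𝓝 0) (𝓝 (C * ‖(0 : ℂ)‖ ^ 1)) :=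
          (continuous_const.mul (continuous_norm.pow 1)).tendsto 0
        simp only [norm_zero] at this
        simp only [ne_eq, one_ne_zero, not_false_eq_true, zero_pow, mul_zero] at this
        exact this.mono_left nhdsWithin_le_nhds
      refine squeeze_zero_norm' ?_ h1
      filter_upwards [self_mem_nhdsWithin, nhdsWithin_le_nhds (Metric.ball_mem_nhds (0 : ℂ) hε)]
        with x hx hx'
      have hx0 : x ≠ 0 := hx
      rw [Function.update_of_ne hx0]
      exact hb x hx0 (by simpa using hx')
  have hga : AnalyticOnNhd ℂ g (Metric.ball 0 r) := hgd.analyticOnNhd Metric.isOpen_ball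
  have h0 : (0 : ℂ) ∈ Metric.ball (0 : ℂ) r := Metric.mem_ball_self hr
  have hev : g =ᶠ[𝓝 0] 0 := by
    by_contra hcon
    have hord : analyticOrderAt g 0 ≠ ⊤ := fun ht => hcon (analyticOrderAt_eq_top.mp ht)
    obtain ⟨u, hu, hu0, hgu⟩ := (hga 0 h0).analyticOrderAt_ne_top.mp hord
    set n := analyticOrderNatAt g 0
    obtain ⟨C, ε, hε, hb⟩ := h (n + 1)
    have hlim : Tendsto (fun l : ℂ => ‖u l‖) (𝓝[≠] 0) (𝓝 ‖u 0‖) :=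
      hu.continuousAt.norm.tendsto.mono_left nhdsWithin_le_nhds
    have hlim0 : Tendsto (fun l : ℂ => C * ‖l‖) (𝓝[≠] 0) (𝓝 0) := by
      have : Tendsto (fun l : ℂ => C * ‖l‖) (𝓝 0) (𝓝 (C * ‖(0 : ℂ)‖)) :=
        (continuous_const.mul continuous_norm).tendsto 0
      rw [norm_zero, mul_zero] at this
      exact this.mono_left nhdsWithin_le_nhds
    have : ‖u 0‖ ≤ 0 := by
      refine le_of_tendsto_of_tendsto hlim hlim0 ?_
      filter_upwards [self_mem_nhdsWithin, nhdsWithin_le_nhds (Metric.ball_mem_nhds (0 : ℂ) hε),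
        nhdsWithin_le_nhds hgu] with x hx hx' hxg
      have hx0 : x ≠ 0 := hx
      have h1 := hb x hx0 (by simpa using hx')
      rw [hg, Function.update_of_ne hx0] at hxg
      rw [hxg, sub_zero, smul_eq_mul, norm_mul, norm_pow, pow_succ] at h1
      have hp : 0 < ‖x‖ ^ n := pow_pos (norm_pos_iff.mpr hx0) n
      have h2 : ‖x‖ ^ n * ‖u x‖ ≤ ‖x‖ ^ n * (C * ‖x‖) := by linarith
      exact le_of_mul_le_mul_left h2 hp
    exact hu0 (norm_le_zero_iff.mp this)
  have := hga.eqOn_zero_of_preconnected_of_eventuallyEq_zero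
    (convex_ball 0 r).isPreconnected h0 hev (by simpa using hlr : l ∈ Metric.ball (0 : ℂ) r)
  rwa [hg, Function.update_of_ne hl] at this

end QH

namespace QH
open MvPolynomial

/-! ### Germs vanishing on the real hypersurface -/

/-- The real-linear embedding `p ↦ (p, p̄)` of `ℂ²` into `ℂ⁴`. -/
noncomputable def emb : (Fin 2 → ℂ) →L[ℝ] (Fin 2 ⊕ Fin 2 → ℂ) :=
  ContinuousLinearMap.pi (Sum.elim (fun i => ContinuousLinearMap.proj (R := ℝ) i)
    (fun i => Complex.conjCLE.toContinuousLinearMap.comp (ContinuousLinearMap.proj (R := ℝ) i)))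

lemma emb_apply (p : Fin 2 → ℂ) : emb p = Sum.elim p (star p) := by
  funext i; cases i <;> simp [emb]

lemma emb_sc (a b : ℕ) (t : ℝ) (p : Fin 2 → ℂ) :
    emb (sc (wt a b) t p) = sc (W4 a b) t (emb p) := by
  rw [emb_apply, emb_apply, sc_W4, star_sc, Complex.conj_ofReal]

lemma tendsto_emb : Tendsto emb (𝓝 0) (𝓝 0) := by
  have := emb.continuous.tendsto 0
  rwa [map_zero] at this

section Real
variable {a b d : ℕ} {Q : MvPolynomial (Fin 2) ℂ} {G : (Fin 2 ⊕ Fin 2 → ℂ) → ℂ}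

/-- The real hypersurface `{G(p, p̄) = 0}` meets every weighted neighbourhood of a ray through `ζ`
with `Re Q(ζ) = 0 ≠ Q(ζ)`. -/
lemma Data.real_zeros (D : Data a b d Q G) (hreal : ∀ᶠ p in 𝓝 (0 : Fin 2 → ℂ), (G (emb p)).im = 0)
    (ζ : Fin 2 → ℂ) (hre : (eval ζ Q).re = 0) (hne : eval ζ Q ≠ 0) (ε : ℝ) (hε : 0 < ε) :
    ∃ t : ℝ, 0 < t ∧ t < ε ∧ ∃ ξ : Fin 2 → ℂ, dist ξ ζ < ε ∧ G (emb (sc (wt a b) t ξ)) = 0 := by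
  set s := (eval ζ Q).im with hs
  have hs0 : s ≠ 0 := fun h => hne (Complex.ext hre h)
  have hQe : eval ζ Q = s * Complex.I := Complex.ext (by simp [hre]) (by simp [hs])
  -- rotation by a small angle
  have hrot : Continuous fun θ : ℝ => sc (wt a b) (Complex.exp (θ * Complex.I)) ζ := by
    refine continuous_pi fun i => ?_
    simp only [sc]
    fun_prop
  obtain ⟨δ₀, hδ₀, hδ⟩ := Metric.continuous_iff.mp hrot 0 ε hε
  have hd0 : (0 : ℝ) < d := by exact_mod_cast D.hd
  set δ := min (δ₀ / 2) (1 / d) with hδdef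
  have hδpos : 0 < δ := by positivity
  have hsin : 0 < Real.sin (d * δ) := by
    refine Real.sin_pos_of_pos_of_lt_pi (by positivity) ?_
    have : d * δ ≤ d * (1 / d) := by gcongr; exact min_le_right _ _
    rw [mul_one_div_cancel hd0.ne'] at this
    linarith [Real.pi_gt_three]
  have hnear : ∀ θ : ℝ, |θ| ≤ δ → dist (sc (wt a b) (Complex.exp (θ * Complex.I)) ζ) ζ < ε := by
    intro θ hθ
    have := hδ θ (by
      rw [Real.dist_eq, sub_zero]
      have : δ ≤ δ₀ / 2 := min_le_left _ _
      linarith)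
    simpa using this
  have hnorm : ∀ θ : ℝ, ‖sc (wt a b) (Complex.exp (θ * Complex.I)) ζ‖ ≤ ‖ζ‖ := by
    intro θ
    refine (pi_norm_le_iff_of_nonneg (by positivity)).mpr fun i => ?_
    rw [sc, norm_mul, norm_pow, Complex.norm_exp_ofReal_mul_I, one_pow, one_mul]
    exact norm_le_pi_norm ζ i
  have hnorm' : ∀ p : Fin 2 → ℂ, ‖emb p‖ ≤ ‖p‖ := by
    intro p
    rw [emb_apply]
    refine (pi_norm_le_iff_of_nonneg (by positivity)).mpr fun i => ?_
    rcases i with i | i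
    · exact norm_le_pi_norm p i
    · simpa using norm_le_pi_norm p i
  obtain ⟨C, ε₁, hε₁, hC, hb⟩ := D.hGo (‖ζ‖ + 1) (by positivity)
  have hcont : ∀ᶠ x in 𝓝 (0 : Fin 2 ⊕ Fin 2 → ℂ), ContinuousAt G x :=
    D.hG.eventually_analyticAt.mono fun x hx => hx.continuousAt
  obtain ⟨ε₂, hε₂, -, hm₂⟩ := sc_mem D.hW hcont (‖ζ‖ + 1) (by positivity)
  obtain ⟨ε₃, hε₃, -, hm₃⟩ := sc_mem (wt_pos D.ha D.hb) hreal (‖ζ‖ + 1) (by positivity)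
  set m := 2 * |s| * Real.sin (d * δ) with hm
  have hmpos : 0 < m := by have := abs_pos.mpr hs0; positivity
  obtain ⟨t, ht0, ht⟩ : ∃ t : ℝ, 0 < t ∧ t < min (min ε ε₁) (min (min ε₂ ε₃) (m / (C + 1))) :=
    exists_between (by positivity)
  simp only [lt_min_iff] at ht
  obtain ⟨⟨htε, ht1⟩, ⟨ht2, ht3⟩, ht4⟩ := ht
  have htn : ‖(t : ℂ)‖ = t := by simp [abs_of_pos ht0]
  have ht0' : (t : ℂ) ≠ 0 := by exact_mod_cast ht0.ne'
  refine ⟨t, ht0, htε, ?_⟩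
  set ρ : ℝ → (Fin 2 → ℂ) := fun θ => sc (wt a b) (Complex.exp (θ * Complex.I)) ζ with hρ
  set φ : ℝ → ℝ := fun θ => s * (G (emb (sc (wt a b) t (ρ θ)))).re with hφ
  have hφc : ContinuousOn φ (Set.Icc (-δ) δ) := by
    intro θ _
    have h1 : ContinuousAt G (emb (sc (wt a b) t (ρ θ))) := by
      rw [emb_sc]
      exact hm₂ t (by rwa [htn]) _ (((hnorm' _).trans (hnorm θ)).trans (by linarith))
    have h2 : Continuous fun θ => emb (sc (wt a b) t (ρ θ)) := by
      refine emb.continuous.comp (continuous_pi fun i => ?_)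
      simp only [sc, hρ]
      fun_prop
    have h3 : ContinuousAt (fun θ => G (emb (sc (wt a b) t (ρ θ)))) θ :=
      ContinuousAt.comp (f := fun θ => emb (sc (wt a b) t (ρ θ))) h1 h2.continuousAt
    exact (continuousAt_const.mul (Complex.continuous_re.continuousAt.comp h3)).continuousWithinAt
  have hval : ∀ θ : ℝ, |(G (emb (sc (wt a b) t (ρ θ)))).re - t ^ d * (- 2 * s * Real.sin (d * θ))|
      ≤ C * t ^ (d + 1) := by
    intro θ
    have h1 := hb t ht0' (by rwa [htn]) (emb (ρ θ))
      (((hnorm' _).trans (hnorm θ)).trans (by linarith))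
    rw [htn, ← emb_sc] at h1
    have hq : eval (emb (sc (wt a b) t (ρ θ))) (qq Q (cj Q)) =
        ((t ^ d * (- 2 * s * Real.sin (d * θ)) : ℝ) : ℂ) := by
      rw [emb_apply, eval_qq, eval_cj, eval_sc _ D.hQ, hρ, eval_sc _ D.hQ, hQe, ← Complex.exp_nat_mul,
        Complex.add_conj]
      congr 1
      rw [show (d : ℂ) * (θ * Complex.I) = ((d * θ : ℝ) : ℂ) * Complex.I by push_cast; ring,
        Complex.exp_mul_I, ← Complex.ofReal_cos, ← Complex.ofReal_sin, ← Complex.ofReal_pow]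
      simp [Complex.mul_re, Complex.mul_im, -Complex.ofReal_pow, -Complex.ofReal_mul,
        -Complex.ofReal_cos, -Complex.ofReal_sin]
      ring
    beta_reduce at h1
    rw [hq] at h1
    have h2 := (Complex.abs_re_le_norm _).trans h1
    rw [Complex.sub_re, Complex.ofReal_re] at h2
    exact_mod_cast h2
  have hsmall : C * t ^ (d + 1) < t ^ d * m := by
    rw [pow_succ]
    have h1 : t * (C + 1) < m := by rwa [lt_div_iff₀ (by positivity)] at ht4
    have h2 : C * t < m := by nlinarith
    have := mul_lt_mul_of_pos_left h2 (pow_pos ht0 d)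
    linarith
  have hss : s * s = |s| * |s| := (abs_mul_abs_self s).symm
  have habs : 0 < |s| := abs_pos.mpr hs0
  have hpos : 0 ≤ φ (-δ) := by
    have h1 := hval (-δ)
    rw [mul_neg, Real.sin_neg] at h1
    have h2 : |s * ((G (emb (sc (wt a b) t (ρ (-δ))))).re -
        t ^ d * (-2 * s * -Real.sin (d * δ)))| < |s| * (t ^ d * m) := by
      rw [abs_mul]; exact mul_lt_mul_of_pos_left (h1.trans_lt hsmall) habs
    have h3 := (abs_lt.mp h2).1
    have h4 : |s| * (t ^ d * m) = s * (t ^ d * (-2 * s * -Real.sin (d * δ))) := by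
      rw [hm]; linear_combination (-2 * t ^ d * Real.sin (d * δ)) * hss
    rw [hφ]; beta_reduce
    linarith
  have hneg : φ δ ≤ 0 := by
    have h1 := hval δ
    have h2 : |s * ((G (emb (sc (wt a b) t (ρ δ)))).re -
        t ^ d * (-2 * s * Real.sin (d * δ)))| < |s| * (t ^ d * m) := by
      rw [abs_mul]; exact mul_lt_mul_of_pos_left (h1.trans_lt hsmall) habs
    have h3 := (abs_lt.mp h2).2
    have h4 : |s| * (t ^ d * m) = - (s * (t ^ d * (-2 * s * Real.sin (d * δ)))) := by
      rw [hm]; linear_combination (-2 * t ^ d * Real.sin (d * δ)) * hss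
    rw [hφ]; beta_reduce
    linarith
  obtain ⟨θ, hθ, hz⟩ := intermediate_value_Icc' (by linarith : -δ ≤ δ) hφc ⟨hneg, hpos⟩
  refine ⟨ρ θ, hnear θ (abs_le.mpr hθ), ?_⟩
  have h0 : (G (emb (sc (wt a b) t (ρ θ)))).re = 0 := (mul_eq_zero.mp hz).resolve_left hs0
  exact Complex.ext h0 (hm₃ t (by rwa [htn]) _ ((hnorm θ).trans (by linarith)))

/-- The initial part of a germ vanishing on the real hypersurface `{G(p, p̄) = 0}` is a multiple of
the initial part of `G`. -/
lemma Data.lead_dvd (D : Data a b d Q G) (hreal : ∀ᶠ p in 𝓝 (0 : Fin 2 → ℂ), (G (emb p)).im = 0)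
    {Φ : (Fin 2 ⊕ Fin 2 → ℂ) → ℂ}
    (hΦ : ∀ᶠ p in 𝓝 (0 : Fin 2 → ℂ), G (emb p) = 0 → Φ (emb p) = 0)
    {N : ℤ} {P : MvPolynomial (Fin 2 ⊕ Fin 2) ℂ} (hP : Hom (W4 a b) N P)
    (h : OW (W4 a b) (N + 1) (fun x => Φ x - eval x P)) : qq Q (cj Q) ∣ P := by
  obtain ⟨j, hj⟩ := D.exists_j
  obtain ⟨c, hc, -⟩ := D.exists_c
  refine qq_dvd_of_real D.hd Q D.hQ j hj c 0
    (by rw [hc, eval_zero_wh D.ha D.hb D.hd (wh_cj D.hQ)]; exact one_ne_zero) P hP ?_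
  intro ζ hre hne
  rw [← emb_apply]
  refine leading_zero hP h _ fun ε hε => ?_
  obtain ⟨δ, hδ, hc⟩ := Metric.continuous_iff.mp emb.continuous ζ ε hε
  obtain ⟨ε₁, hε₁, -, hm⟩ := sc_mem (wt_pos D.ha D.hb) hΦ (‖ζ‖ + 1) (by positivity)
  obtain ⟨t, ht, hte, ξ, hξ, h0⟩ := D.real_zeros hreal ζ hre hne (min (min ε δ) (min 1 ε₁))
    (by positivity)
  simp only [lt_min_iff] at hte hξ
  have htn : ‖(t : ℂ)‖ = t := by simp [abs_of_pos ht]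
  refine ⟨t, by exact_mod_cast ht.ne', by rw [htn]; exact hte.1.1, emb ξ, hc ξ hξ.1.2, ?_⟩
  have hξn : ‖ξ‖ ≤ ‖ζ‖ + 1 := by
    have h1 : ‖ξ - ζ‖ < 1 := by rw [← dist_eq_norm]; exact hξ.2.1
    have := norm_le_norm_add_norm_sub' ξ ζ
    linarith
  rw [← emb_sc, hm t (by rw [htn]; exact hte.2.2) ξ hξn h0, norm_zero]
  positivity

/-- A germ vanishing on the real hypersurface is a multiple of `G` up to any weighted order. -/
lemma Data.formal_dvd (D : Data a b d Q G)
    (hreal : ∀ᶠ p in 𝓝 (0 : Fin 2 → ℂ), (G (emb p)).im = 0)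
    {Φ : (Fin 2 ⊕ Fin 2 → ℂ) → ℂ} (hΦa : AnalyticAt ℂ Φ 0)
    (hΦ : ∀ᶠ p in 𝓝 (0 : Fin 2 → ℂ), G (emb p) = 0 → Φ (emb p) = 0) (N : ℕ) :
    ∃ A : MvPolynomial (Fin 2 ⊕ Fin 2) ℂ, OW (W4 a b) N (fun x => Φ x - eval x A * G x) := by
  induction N with
  | zero =>
    refine ⟨0, ?_⟩
    simpa using OW.of_continuousAt D.hW hΦa.continuousAt
  | succ N ih =>
    obtain ⟨A, hA⟩ := ih
    have han : AnalyticAt ℂ (fun x => Φ x - eval x A * G x) 0 :=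
      hΦa.sub ((analyticAt_eval A 0).mul D.hG)
    obtain ⟨P, hP, hlead⟩ := exists_leading D.hW han hA
    have hdvd := D.lead_dvd hreal (Φ := fun x => Φ x - eval x A * G x)
      (hΦ.mono fun p hp h0 => by rw [hp h0, h0]; ring) hP hlead
    obtain ⟨A', rfl⟩ := hdvd
    rw [mul_comm] at hP
    have hA' := Hom.of_mul D.hom_qq D.qq_ne hP
    refine ⟨A + A', ?_⟩
    have h1 := (hA'.ow.mul D.hGo).mono (M := N + 1) (by omega)
    have h2 := hlead.sub h1
    push_cast
    convert h2 using 2 with x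
    rw [map_add, map_mul]; ring

end Real

end QH

namespace QH
open MvPolynomial

/-! ### The complexified defining function -/

/-- The splitting `ℂ⁴ → ℂ² × ℂ²`. -/
noncomputable def split : (Fin 2 ⊕ Fin 2 → ℂ) →L[ℂ] (Fin 2 → ℂ) × (Fin 2 → ℂ) :=
  (ContinuousLinearMap.pi fun i => ContinuousLinearMap.proj (R := ℂ) (Sum.inl i)).prod
    (ContinuousLinearMap.pi fun i => ContinuousLinearMap.proj (R := ℂ) (Sum.inr i))

lemma split_apply (x : Fin 2 ⊕ Fin 2 → ℂ) : split x = (x ∘ Sum.inl, x ∘ Sum.inr) := rfl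

lemma split_emb (p : Fin 2 → ℂ) : split (emb p) = (p, star p) := by
  rw [emb_apply]; rfl

/-- Twice the complexification of `F` has initial part `Q(z) + Q̄(w)`. The growth of `H` is only known
along rays at real points; since a polynomial is determined by its values at the points `(ζ, ζ̄)`,
this bounds the weighted order of the complexified remainder on all of `ℂ⁴`. -/
lemma data_of_hyp (a b d : ℕ) (ha : 0 < a) (hb : 0 < b) (hd : 0 < d)
    (Q : MvPolynomial (Fin 2) ℂ)
    (hQqh : ∀ m ∈ Q.support, a * m 0 + b * m 1 = d)
    (hQsing : ∀ᶠ z in 𝓝 (0 : Fin 2 → ℂ),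
      (∀ i, MvPolynomial.eval z (MvPolynomial.pderiv i Q) = 0) → z = 0)
    (F H : (Fin 2 → ℂ) → ℝ)
    (hFeq : ∀ᶠ z in 𝓝 (0 : Fin 2 → ℂ), F z = (MvPolynomial.eval z Q).re + H z)
    (hHord : ∃ r > (0:ℝ), ∀ z : Fin 2 → ℂ, ‖z‖ < r →
      Tendsto (fun lam : ℝ => H (fun i => (lam : ℂ) ^ (if i = 0 then a else b) * z i) / lam ^ d)
        (𝓝[>] 0) (𝓝 0))
    (FC : ((Fin 2 → ℂ) × (Fin 2 → ℂ)) → ℂ) (hFC : IsComplexification F FC) :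
    Data a b d Q (fun x => 2 * FC (split x)) := by
  have hQ : Q.IsWeightedHomogeneous (wt a b) d := by
    intro m hm
    have := hQqh m (mem_support_iff.mpr hm)
    rw [Finsupp.weight_apply, Finsupp.sum_fintype _ _ (by simp)]
    simp only [Fin.sum_univ_two, wt, smul_eq_mul]
    simp only [↓reduceIte, one_ne_zero]
    linarith
  have hW := W4_pos ha hb
  have hG : AnalyticAt ℂ (fun x => 2 * FC (split x)) 0 := by
    refine analyticAt_const.mul ?_
    refine AnalyticAt.comp (g := FC) (f := split) ?_ (split.analyticAt 0)
    rw [map_zero]; exact hFC.1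
  refine ⟨ha, hb, hd, hQ, ?_, hG, ?_⟩
  · intro x hx
    obtain ⟨ε, hε, -, hm⟩ := sc_mem (wt_pos ha hb) hQsing (‖x‖ + 1) (by positivity)
    have hl : ((ε / 2 : ℝ) : ℂ) ≠ 0 := by
      have : ε / 2 ≠ 0 := by positivity
      exact_mod_cast this
    have hn : ‖((ε / 2 : ℝ) : ℂ)‖ < ε := by
      rw [Complex.norm_real, Real.norm_eq_abs, abs_of_pos (by positivity)]; linarith
    have := hm _ hn x (by linarith) (fun i => by
      rw [(Hom.of_wh hQ).pderiv i _ hl, hx i, mul_zero])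
    funext i
    have h1 := congrFun this i
    exact (mul_eq_zero.mp h1).resolve_left (pow_ne_zero _ hl)
  · -- the components of degree `≤ d` of `G - q₀` vanish at all points `(ζ, ζ̄)`
    obtain ⟨r, hr, hH⟩ := hHord
    set f : (Fin 2 ⊕ Fin 2 → ℂ) → ℂ := fun x => 2 * FC (split x) - eval x (qq Q (cj Q)) with hf
    have hfa : AnalyticAt ℂ f 0 := hG.sub (analyticAt_eval _ _)
    have hfH : ∀ᶠ p in 𝓝 (0 : Fin 2 → ℂ), f (emb p) = ((2 * H p : ℝ) : ℂ) := by
      filter_upwards [hFC.2, hFeq] with p h1 h2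
      rw [hf]
      beta_reduce
      rw [split_emb, h1, emb_apply, eval_qq, eval_cj, Complex.add_conj, h2]
      push_cast; ring
    have step : ∀ m : ℕ, m ≤ d → OW (W4 a b) m f → OW (W4 a b) (m + 1) f := by
      intro m hmd hm
      obtain ⟨P, hP, hl⟩ := exists_leading hW hfa hm
      have hP0 : P = 0 := by
        refine eq_zero_of_conj P r hr fun ζ hζ => ?_
        rw [← emb_apply]
        refine leading_zero hP hl _ fun ε hε => ?_
        obtain ⟨ε₁, hε₁, -, hm₁⟩ := sc_mem (wt_pos ha hb) hfH (‖ζ‖ + 1) (by positivity)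
        have h1 := (hH ζ hζ).eventually (Metric.ball_mem_nhds (0 : ℝ) (half_pos hε))
        obtain ⟨t, ht, hte⟩ := (h1.and (Ioo_mem_nhdsGT
          (show 0 < min (min ε ε₁) 1 by positivity))).exists
        obtain ⟨ht0, ht1⟩ := hte
        simp only [lt_min_iff] at ht1
        have htn : ‖(t : ℂ)‖ = t := by simp [abs_of_pos ht0]
        refine ⟨t, by exact_mod_cast ht0.ne', by rw [htn]; exact ht1.1.1, emb ζ, by simpa using hε, ?_⟩
        have h2 : f (emb (sc (wt a b) t ζ)) = ((2 * H (sc (wt a b) t ζ) : ℝ) : ℂ) :=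
          hm₁ t (by rw [htn]; exact ht1.1.2) ζ (by linarith)
        rw [← emb_sc, h2, htn, Complex.norm_real, Real.norm_eq_abs, abs_mul, zpow_natCast]
        have h3 : |H (sc (wt a b) t ζ) / t ^ d| < ε / 2 := by
          rw [← Real.norm_eq_abs, ← sub_zero (_ / _), ← dist_eq_norm]; exact ht
        rw [abs_div, abs_of_pos (pow_pos ht0 d), div_lt_iff₀ (pow_pos ht0 d)] at h3
        have h4 : t ^ d ≤ t ^ m := pow_le_pow_of_le_one ht0.le ht1.2.le hmd
        have h5 : ε / 2 * t ^ d ≤ ε / 2 * t ^ m := by gcongr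
        rw [abs_two]
        linarith
      simpa [hP0] using hl
    have all : ∀ m : ℕ, m ≤ d + 1 → OW (W4 a b) m f := by
      intro m
      induction m with
      | zero => intro _; exact OW.of_continuousAt hW hfa.continuousAt
      | succ m ih => intro h; exact_mod_cast step m (by omega) (ih (by omega))
    exact_mod_cast all (d + 1) le_rfl

/-! ### Wirtinger derivatives and the Levi form -/

lemma emb_single_one (j : Fin 2) :
    emb (Pi.single j 1) = Pi.single (Sum.inl j) 1 + Pi.single (Sum.inr j) 1 := by
  rw [emb_apply]
  funext i
  rcases i with i | i <;> by_cases h : i = j <;> simp [h]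

lemma emb_single_I (j : Fin 2) :
    emb (Pi.single j Complex.I) =
      Complex.I • (Pi.single (Sum.inl j) 1 - Pi.single (Sum.inr j) 1 : Fin 2 ⊕ Fin 2 → ℂ) := by
  rw [emb_apply]
  funext i
  rcases i with i | i <;> by_cases h : i = j <;> simp [h]

lemma fderiv_comp_emb {f : (Fin 2 ⊕ Fin 2 → ℂ) → ℂ} {p : Fin 2 → ℂ}
    (hf : DifferentiableAt ℂ f (emb p)) (v : Fin 2 → ℂ) :
    fderiv ℝ (fun z => f (emb z)) p v = fderiv ℂ f (emb p) (emb v) := by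
  have h1 : HasFDerivAt f ((fderiv ℂ f (emb p)).restrictScalars ℝ) (emb p) :=
    hf.hasFDerivAt.restrictScalars ℝ
  have h2 := (h1.comp p emb.hasFDerivAt).fderiv
  have : (fun z => f (emb z)) = f ∘ emb := rfl
  rw [this, h2]
  rfl

lemma wirtZ_emb {f : (Fin 2 ⊕ Fin 2 → ℂ) → ℂ} {g : (Fin 2 → ℂ) → ℂ} {p : Fin 2 → ℂ}
    (hf : DifferentiableAt ℂ f (emb p)) (hg : g =ᶠ[𝓝 p] fun z => f (emb z)) (j : Fin 2) :
    wirtZ g j p = pd f (Sum.inl j) (emb p) := by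
  rw [wirtZ, hg.fderiv_eq, fderiv_comp_emb hf, fderiv_comp_emb hf, emb_single_one, emb_single_I,
    map_smul, map_add, map_sub, pd, smul_eq_mul, ← mul_assoc, Complex.I_mul_I]
  ring

lemma wirtZbar_emb {f : (Fin 2 ⊕ Fin 2 → ℂ) → ℂ} {g : (Fin 2 → ℂ) → ℂ} {p : Fin 2 → ℂ}
    (hf : DifferentiableAt ℂ f (emb p)) (hg : g =ᶠ[𝓝 p] fun z => f (emb z)) (j : Fin 2) :
    wirtZbar g j p = pd f (Sum.inr j) (emb p) := by
  rw [wirtZbar, hg.fderiv_eq, fderiv_comp_emb hf, fderiv_comp_emb hf, emb_single_one, emb_single_I,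
    map_smul, map_add, map_sub, pd, smul_eq_mul, ← mul_assoc, Complex.I_mul_I]
  ring

/-- The vector field `G_{w₂} ∂_{w₁} - G_{w₁} ∂_{w₂}`, tangent to the levels of `G`. -/
noncomputable def Y (G f : (Fin 2 ⊕ Fin 2 → ℂ) → ℂ) (x : Fin 2 ⊕ Fin 2 → ℂ) : ℂ :=
  pd G (Sum.inr 1) x * pd f (Sum.inr 0) x - pd G (Sum.inr 0) x * pd f (Sum.inr 1) x

/-- The complexified Levi determinant of `G`. -/
noncomputable def levi (G : (Fin 2 ⊕ Fin 2 → ℂ) → ℂ) (x : Fin 2 ⊕ Fin 2 → ℂ) : ℂ :=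
  pd G (Sum.inl 1) x * Y G (pd G (Sum.inl 0)) x - pd G (Sum.inl 0) x * Y G (pd G (Sum.inl 1)) x

lemma fderiv_ofReal {F : (Fin 2 → ℂ) → ℝ} {p : Fin 2 → ℂ} (hF : DifferentiableAt ℝ F p)
    (v : Fin 2 → ℂ) : fderiv ℝ (fun z => ((F z : ℝ) : ℂ)) p v = ((fderiv ℝ F p v : ℝ) : ℂ) := by
  have h := (Complex.ofRealCLM.hasFDerivAt (x := F p)).comp p hF.hasFDerivAt
  have := h.fderiv
  have e : (fun z => ((F z : ℝ) : ℂ)) = Complex.ofRealCLM ∘ F := rfl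
  rw [e, this]
  rfl

lemma conj_wirtZ {F : (Fin 2 → ℂ) → ℝ} {p : Fin 2 → ℂ} (hF : DifferentiableAt ℝ F p) (j : Fin 2) :
    starRingEnd ℂ (wirtZ (fun z => ((F z : ℝ) : ℂ)) j p) =
      wirtZbar (fun z => ((F z : ℝ) : ℂ)) j p := by
  rw [wirtZ, wirtZbar, fderiv_ofReal hF, fderiv_ofReal hF, map_div₀, Complex.conj_ofNat]
  simp

/-- Levi-flatness, tested on the tangent vector `(F_{z₂}, -F_{z₁})`, says that the Levi determinant
vanishes at the points `(p, p̄)` of the hypersurface. -/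
lemma levi_zero {F : (Fin 2 → ℂ) → ℝ} (hF : AnalyticAt ℝ F 0) (hLF : LeviFlatGerm F)
    {g : (Fin 2 ⊕ Fin 2 → ℂ) → ℂ} (hg : AnalyticAt ℂ g 0)
    (hFg : ∀ᶠ p in 𝓝 (0 : Fin 2 → ℂ), g (emb p) = ((F p : ℝ) : ℂ)) :
    ∀ᶠ p in 𝓝 (0 : Fin 2 → ℂ), g (emb p) = 0 → levi g (emb p) = 0 := by
  have hga : ∀ᶠ p in 𝓝 (0 : Fin 2 → ℂ), AnalyticAt ℂ g (emb p) :=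
    tendsto_emb.eventually hg.eventually_analyticAt
  have hw : ∀ᶠ p in 𝓝 (0 : Fin 2 → ℂ), ∀ i,
      wirtZ (fun z => ((F z : ℝ) : ℂ)) i p = pd g (Sum.inl i) (emb p) := by
    filter_upwards [hga, hFg.eventually_nhds] with p h1 h2 i
    exact wirtZ_emb h1.differentiableAt (h2.mono fun q hq => hq.symm) i
  filter_upwards [hga, hFg, hFg.eventually_nhds, hw, hw.eventually_nhds, hLF,
    hF.eventually_analyticAt] with p h1 h2 h2' h3 h4 h5 h6 h0
  have hF0 : F p = 0 := by rw [h2] at h0; exact_mod_cast h0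
  have hwb : ∀ j, pd g (Sum.inr j) (emb p) = starRingEnd ℂ (pd g (Sum.inl j) (emb p)) := by
    intro j
    rw [← h3, conj_wirtZ h6.differentiableAt]
    exact (wirtZbar_emb h1.differentiableAt (h2'.mono fun q hq => hq.symm) j).symm
  by_cases hdF : fderiv ℝ F p = 0
  · have : ∀ j, pd g (Sum.inl j) (emb p) = 0 := by
      intro j
      rw [← h3, wirtZ, fderiv_ofReal h6.differentiableAt, fderiv_ofReal h6.differentiableAt, hdF]
      simp
    rw [levi, this, this]; ring
  · have h7 := h5 hF0 hdF ![pd g (Sum.inl 1) (emb p), - pd g (Sum.inl 0) (emb p)] (by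
      simp only [Fin.sum_univ_two, h3]; simp; ring)
    have h8 : ∀ i j, wirtZbar (wirtZ (fun z => ((F z : ℝ) : ℂ)) i) j p =
        pd (pd g (Sum.inl i)) (Sum.inr j) (emb p) := fun i j =>
      wirtZbar_emb (analyticAt_pd h1 _).differentiableAt (h4.mono fun q hq => hq i) j
    simp only [Fin.sum_univ_two, h8, Matrix.cons_val_zero, Matrix.cons_val_one, map_neg,
      ← hwb] at h7
    rw [levi, Y, Y, ← h7]
    ring

lemma pd_const_mul (c : ℂ) (g : (Fin 2 ⊕ Fin 2 → ℂ) → ℂ) (k : Fin 2 ⊕ Fin 2) :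
    pd (fun x => c * g x) k = fun x => c * pd g k x := by
  funext x
  simp only [pd]
  change fderiv ℂ (c • g) x _ = _
  rw [fderiv_const_smul_field]; rfl

lemma levi_const_mul (c : ℂ) (g : (Fin 2 ⊕ Fin 2 → ℂ) → ℂ) (x : Fin 2 ⊕ Fin 2 → ℂ) :
    levi (fun x => c * g x) x = c ^ 3 * levi g x := by
  simp only [levi, Y, pd_const_mul]
  ring

lemma analyticAt_Y {G f : (Fin 2 ⊕ Fin 2 → ℂ) → ℂ} {x : Fin 2 ⊕ Fin 2 → ℂ}
    (hG : AnalyticAt ℂ G x) (hf : AnalyticAt ℂ f x) : AnalyticAt ℂ (Y G f) x :=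
  ((analyticAt_pd hG _).mul (analyticAt_pd hf _)).sub ((analyticAt_pd hG _).mul (analyticAt_pd hf _))

lemma analyticAt_levi {G : (Fin 2 ⊕ Fin 2 → ℂ) → ℂ} {x : Fin 2 ⊕ Fin 2 → ℂ}
    (hG : AnalyticAt ℂ G x) : AnalyticAt ℂ (levi G) x :=
  ((analyticAt_pd hG _).mul (analyticAt_Y hG (analyticAt_pd hG _))).sub
    ((analyticAt_pd hG _).mul (analyticAt_Y hG (analyticAt_pd hG _)))

end QH

namespace QH
open MvPolynomial

/-! ### Parametric circle integrals and Osgood's lemma -/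

/-- Differentiation under the integral sign. -/
lemma hasFDerivAt_circleIntegral {E : Type*} [NormedAddCommGroup E] [NormedSpace ℂ E]
    [ProperSpace E] {U : Set E} (hU : IsOpen U) {ρ : ℝ} (hρ : 0 ≤ ρ) {k : E → ℂ → ℂ}
    {k' : E → ℂ → E →L[ℂ] ℂ}
    (hk : ∀ z ∈ U, ∀ t ∈ Metric.sphere (0 : ℂ) ρ, HasFDerivAt (fun z => k z t) (k' z t) z)
    (hk' : ContinuousOn (Function.uncurry k') (U ×ˢ Metric.sphere (0 : ℂ) ρ))
    (hc : ∀ z ∈ U, ContinuousOn (k z) (Metric.sphere (0 : ℂ) ρ)) {z₀ : E} (hz₀ : z₀ ∈ U) :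
    HasFDerivAt (fun z => ∮ t in C(0, ρ), k z t) (∮ t in C(0, ρ), k' z₀ t) z₀ := by
  obtain ⟨δ, hδ, hδU⟩ := Metric.nhds_basis_closedBall.mem_iff.mp (hU.mem_nhds hz₀)
  have hcomp : IsCompact (Metric.closedBall z₀ δ ×ˢ Metric.sphere (0 : ℂ) ρ) :=
    (isCompact_closedBall _ _).prod (isCompact_sphere _ _)
  obtain ⟨C, hC⟩ := hcomp.exists_bound_of_continuousOn
    (hk'.mono (Set.prod_mono hδU subset_rfl))
  have hmem : ∀ θ : ℝ, circleMap 0 ρ θ ∈ Metric.sphere (0 : ℂ) ρ := fun θ =>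
    circleMap_mem_sphere _ hρ θ
  have hKc : ∀ z ∈ U, Continuous fun θ : ℝ => deriv (circleMap 0 ρ) θ • k z (circleMap 0 ρ θ) := by
    intro z hz
    refine Continuous.fun_smul ?_ ((hc z hz).comp_continuous (continuous_circleMap 0 ρ) hmem)
    rw [show deriv (circleMap 0 ρ) = fun θ => circleMap 0 ρ θ * Complex.I from
      funext fun θ => deriv_circleMap 0 ρ θ]
    exact (continuous_circleMap 0 ρ).mul continuous_const
  have hKc' : Continuous fun θ : ℝ => deriv (circleMap 0 ρ) θ • k' z₀ (circleMap 0 ρ θ) := by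
    refine Continuous.fun_smul ?_ (hk'.comp_continuous (f := fun θ => (z₀, circleMap 0 ρ θ))
      (by have := continuous_circleMap 0 ρ; fun_prop) fun θ => ⟨hz₀, hmem θ⟩)
    rw [show deriv (circleMap 0 ρ) = fun θ => circleMap 0 ρ θ * Complex.I from
      funext fun θ => deriv_circleMap 0 ρ θ]
    exact (continuous_circleMap 0 ρ).mul continuous_const
  have hball : Metric.ball z₀ δ ⊆ U := Metric.ball_subset_closedBall.trans hδU
  refine (intervalIntegral.hasFDerivAt_integral_of_dominated_of_fderiv_le
    (F := fun z θ => deriv (circleMap 0 ρ) θ • k z (circleMap 0 ρ θ))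
    (F' := fun z θ => deriv (circleMap 0 ρ) θ • k' z (circleMap 0 ρ θ))
    (bound := fun _ => ρ * C) (Metric.ball_mem_nhds z₀ hδ) ?_ ?_ ?_ ?_ ?_ ?_)
  · filter_upwards [Metric.ball_mem_nhds z₀ hδ] with z hz
    exact (hKc z (hball hz)).aestronglyMeasurable
  · exact (hKc z₀ hz₀).intervalIntegrable _ _
  · exact hKc'.aestronglyMeasurable
  · refine MeasureTheory.ae_of_all _ fun θ _ z hz => ?_
    rw [norm_smul, deriv_circleMap, norm_mul, Complex.norm_I, mul_one, norm_circleMap_zero,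
      abs_of_nonneg hρ]
    gcongr
    exact hC (z, circleMap 0 ρ θ) ⟨Metric.ball_subset_closedBall hz, hmem θ⟩
  · exact intervalIntegrable_const
  · refine MeasureTheory.ae_of_all _ fun θ _ z hz => ?_
    exact (hk z (hball hz) _ (hmem θ)).fun_const_smul _

open BoundedContinuousFunction in
/-- Osgood's lemma in two variables: a holomorphic function near a closed bidisc is analytic at its
centre. The Cauchy kernel is an analytic map into the Banach algebra of bounded continuous
functions on `ℝ²`, and the function is its composition with a continuous linear functional. -/
lemma osgood {f : (Fin 2 → ℂ) → ℂ} {R : ℝ} (hR : 0 < R)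
    (hf : DifferentiableOn ℂ f (Metric.ball 0 R)) : AnalyticAt ℂ f 0 := by
  obtain ⟨r, hr, hrR⟩ := exists_between hR
  have hpt : ∀ u v : ℂ, ‖u‖ ≤ r → ‖v‖ ≤ r → (![u, v] : Fin 2 → ℂ) ∈ Metric.ball (0 : Fin 2 → ℂ) R := by
    intro u v hu hv
    rw [mem_ball_zero_iff]
    refine lt_of_le_of_lt ((pi_norm_le_iff_of_nonneg hr.le).mpr ?_) hrR
    exact Fin.forall_fin_two.mpr ⟨hu, hv⟩
  have hcm : ∀ θ : ℝ, ‖circleMap 0 r θ‖ = r := fun θ => by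
    rw [norm_circleMap_zero, abs_of_pos hr]
  -- the two coordinate functions on the torus, and the values of `f`
  let e1 : ℝ × ℝ →ᵇ ℂ := BoundedContinuousFunction.ofNormedAddCommGroup
    (fun x => circleMap 0 r x.1) (by have := continuous_circleMap 0 r; fun_prop) r
    (fun x => (hcm _).le)
  let e2 : ℝ × ℝ →ᵇ ℂ := BoundedContinuousFunction.ofNormedAddCommGroup
    (fun x => circleMap 0 r x.2) (by have := continuous_circleMap 0 r; fun_prop) r
    (fun x => (hcm _).le)
  have hinv : Continuous fun θ : ℝ => (circleMap 0 r θ)⁻¹ :=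
    (continuous_circleMap 0 r).inv₀ fun θ h => by
      have := hcm θ; rw [h, norm_zero] at this; exact hr.ne this
  let i1 : ℝ × ℝ →ᵇ ℂ := BoundedContinuousFunction.ofNormedAddCommGroup
    (fun x => (circleMap 0 r x.1)⁻¹) (hinv.comp continuous_fst) r⁻¹
    (fun x => by rw [norm_inv, hcm])
  let i2 : ℝ × ℝ →ᵇ ℂ := BoundedContinuousFunction.ofNormedAddCommGroup
    (fun x => (circleMap 0 r x.2)⁻¹) (hinv.comp continuous_snd) r⁻¹
    (fun x => by rw [norm_inv, hcm])
  have hne : ∀ θ : ℝ, circleMap 0 r θ ≠ 0 := fun θ h => by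
    have := hcm θ; rw [h, norm_zero] at this; exact hr.ne this
  have hu1 : IsUnit e1 := IsUnit.of_mul_eq_one i1 (by
    ext x; exact mul_inv_cancel₀ (hne _))
  have hu2 : IsUnit e2 := IsUnit.of_mul_eq_one i2 (by
    ext x; exact mul_inv_cancel₀ (hne _))
  have hfc : Continuous fun x : ℝ × ℝ => f ![circleMap 0 r x.1, circleMap 0 r x.2] := by
    refine hf.continuousOn.comp_continuous (f := fun x : ℝ × ℝ =>
      (![circleMap 0 r x.1, circleMap 0 r x.2] : Fin 2 → ℂ)) ?_ fun x => hpt _ _ (hcm _).le (hcm _).le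
    refine continuous_pi (Fin.forall_fin_two.mpr ⟨?_, ?_⟩)
    · have := continuous_circleMap 0 r
      simp only [Matrix.cons_val_zero]; fun_prop
    · have := continuous_circleMap 0 r
      simp only [Matrix.cons_val_one]; fun_prop
  obtain ⟨Cf, hCf⟩ := (isCompact_closedBall (0 : Fin 2 → ℂ) r).exists_bound_of_continuousOn
    (hf.continuousOn.mono (Metric.closedBall_subset_ball hrR))
  let g : ℝ × ℝ →ᵇ ℂ := BoundedContinuousFunction.ofNormedAddCommGroup
    (fun x => f ![circleMap 0 r x.1, circleMap 0 r x.2]) hfc Cf (fun x => hCf _ (by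
      rw [mem_closedBall_zero_iff]
      exact (pi_norm_le_iff_of_nonneg hr.le).mpr
        (Fin.forall_fin_two.mpr ⟨(hcm _).le, (hcm _).le⟩)))
  -- the functional
  let ν : MeasureTheory.Measure ℝ := MeasureTheory.volume.restrict (Set.Ioc 0 (2 * Real.pi))
  let μ : MeasureTheory.Measure (ℝ × ℝ) := ν.prod ν
  let c : ℝ × ℝ →ᵇ ℂ := g * (e1 * e2)
  let Λ : (ℝ × ℝ →ᵇ ℂ) →L[ℂ] ℂ := LinearMap.mkContinuous
    { toFun := fun k => ∫ x, (c * k) x ∂μ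
      map_add' := fun k l => by
        rw [← MeasureTheory.integral_add ((c * k).integrable μ) ((c * l).integrable μ)]
        congr 1; ext x; simp [mul_add]
      map_smul' := fun s k => by
        rw [RingHom.id_apply, ← MeasureTheory.integral_smul]
        congr 1; ext x; simp }
    (‖c‖ * μ.real Set.univ) (fun k => by
      refine (MeasureTheory.norm_integral_le_of_norm_le_const (C := ‖c‖ * ‖k‖)
        (MeasureTheory.ae_of_all _ fun x => ?_)).trans (le_of_eq (by ring))
      exact ((c * k).norm_coe_le_norm x).trans (norm_mul_le _ _))
  -- the kernel
  let K : (Fin 2 → ℂ) → (ℝ × ℝ →ᵇ ℂ) := fun z =>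
    Ring.inverse (e1 - z 0 • 1) * Ring.inverse (e2 - z 1 • 1)
  have hK : AnalyticAt ℂ K 0 := by
    have hlin : ∀ (e : ℝ × ℝ →ᵇ ℂ) (i : Fin 2), IsUnit e →
        AnalyticAt ℂ (fun z : Fin 2 → ℂ => Ring.inverse (e - z i • 1)) 0 := by
      intro e i he
      obtain ⟨u, rfl⟩ := he
      have h1 : AnalyticAt ℂ (fun z : Fin 2 → ℂ => (u : ℝ × ℝ →ᵇ ℂ) - z i • 1) 0 := by
        refine analyticAt_const.fun_sub (AnalyticAt.fun_smul ?_ analyticAt_const)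
        exact (ContinuousLinearMap.proj (R := ℂ) (φ := fun _ : Fin 2 => ℂ) i).analyticAt 0
      refine AnalyticAt.comp (g := Ring.inverse) (f := fun z : Fin 2 → ℂ => (u : ℝ × ℝ →ᵇ ℂ) - z i • 1)
        ?_ h1
      simpa using analyticAt_inverse (𝕜 := ℂ) u
    exact (hlin e1 0 hu1).mul (hlin e2 1 hu2)
  have hmain : ∀ᶠ z in 𝓝 (0 : Fin 2 → ℂ), ((2 * Real.pi) ^ 2 : ℂ)⁻¹ * Λ (K z) = f z := by
    have hz : ∀ i : Fin 2, ∀ᶠ z in 𝓝 (0 : Fin 2 → ℂ), ‖z i‖ < r := fun i => by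
      have : ContinuousAt (fun z : Fin 2 → ℂ => ‖z i‖) 0 := (continuous_apply i).norm.continuousAt
      exact this.eventually (gt_mem_nhds (by simpa using hr))
    have hun : ∀ (e : ℝ × ℝ →ᵇ ℂ) (i : Fin 2), IsUnit e →
        ∀ᶠ z in 𝓝 (0 : Fin 2 → ℂ), IsUnit (e - z i • 1) := by
      intro e i he
      have h1 : ContinuousAt (fun z : Fin 2 → ℂ => e - z i • (1 : ℝ × ℝ →ᵇ ℂ)) 0 :=
        (continuous_const.sub ((continuous_apply i).smul continuous_const)).continuousAt
      refine h1.eventually (Units.isOpen.mem_nhds ?_)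
      simpa using he
    filter_upwards [hz 0, hz 1, hun e1 0 hu1, hun e2 1 hu2] with z hz0 hz1 hun1 hun2
    have hk1 : ∀ x, Ring.inverse (e1 - z 0 • 1) x = (circleMap 0 r x.1 - z 0)⁻¹ := by
      intro x
      have h1 := DFunLike.congr_fun (Ring.mul_inverse_cancel _ hun1) x
      have h2 : (circleMap 0 r x.1 - z 0) * Ring.inverse (e1 - z 0 • 1) x = 1 := by
        simpa [e1] using h1
      exact eq_inv_of_mul_eq_one_right h2
    have hk2 : ∀ x, Ring.inverse (e2 - z 1 • 1) x = (circleMap 0 r x.2 - z 1)⁻¹ := by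
      intro x
      have h1 := DFunLike.congr_fun (Ring.mul_inverse_cancel _ hun2) x
      have h2 : (circleMap 0 r x.2 - z 1) * Ring.inverse (e2 - z 1 • 1) x = 1 := by
        simpa [e2] using h1
      exact eq_inv_of_mul_eq_one_right h2
    have hΛ : Λ (K z) = ∫ x, (c * K z) x ∂μ := rfl
    have hI : Complex.I * Complex.I = -1 := Complex.I_mul_I
    have hslice1 : ∀ v : ℂ, ‖v‖ ≤ r → DifferentiableOn ℂ (fun u => f ![u, v]) (Metric.closedBall 0 r) := by
      intro v hv
      refine DifferentiableOn.comp (g := f) (f := fun u => ![u, v]) hf ?_ ?_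
      · refine differentiableOn_pi.mpr (Fin.forall_fin_two.mpr ⟨?_, ?_⟩)
        · simp only [Matrix.cons_val_zero, Matrix.cons_val_one]; exact differentiableOn_id
        · simp
      · intro u hu
        exact hpt u v (by simpa using hu) hv
    have hslice2 : ∀ u : ℂ, ‖u‖ ≤ r → DifferentiableOn ℂ (fun v => f ![u, v]) (Metric.closedBall 0 r) := by
      intro u hu
      refine DifferentiableOn.comp (g := f) (f := fun v => ![u, v]) hf ?_ ?_
      · refine differentiableOn_pi.mpr (Fin.forall_fin_two.mpr ⟨?_, ?_⟩)
        · simp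
        · simp only [Matrix.cons_val_zero, Matrix.cons_val_one]; exact differentiableOn_id
      · intro v hv
        exact hpt u v hu (by simpa using hv)
    -- one-variable Cauchy formula, written with respect to `ν`
    have hcauchy : ∀ (φ : ℂ → ℂ), DifferentiableOn ℂ φ (Metric.closedBall 0 r) → ∀ w : ℂ, ‖w‖ < r →
        ∫ θ, φ (circleMap 0 r θ) * (circleMap 0 r θ * (circleMap 0 r θ - w)⁻¹) ∂ν =
          2 * Real.pi * φ w := by
      intro φ hφ w hw
      have h1 := DifferentiableOn.circleIntegral_sub_inv_smul hφ (w := w) (by simpa using hw)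
      rw [circleIntegral, intervalIntegral.integral_of_le (by positivity)] at h1
      simp only [deriv_circleMap, smul_eq_mul] at h1
      have h2 : Complex.I * ∫ θ, φ (circleMap 0 r θ) *
          (circleMap 0 r θ * (circleMap 0 r θ - w)⁻¹) ∂ν = Complex.I * (2 * Real.pi * φ w) := by
        rw [← MeasureTheory.integral_const_mul]
        refine Eq.trans ?_ (h1.trans (by ring))
        congr 1; ext θ; ring
      exact mul_left_cancel₀ Complex.I_ne_zero h2
    rw [hΛ, MeasureTheory.integral_prod _ ((c * K z).integrable μ)]
    have hin : ∀ θ₁ : ℝ, ∫ θ₂, (c * K z) (θ₁, θ₂) ∂ν = (2 * Real.pi) *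
        (f ![circleMap 0 r θ₁, z 1] * (circleMap 0 r θ₁ * (circleMap 0 r θ₁ - z 0)⁻¹)) := by
      intro θ₁
      have h1 := hcauchy _ (hslice2 (circleMap 0 r θ₁) (hcm _).le) (z 1) hz1
      have h2 : ∀ θ₂, (c * K z) (θ₁, θ₂) = (circleMap 0 r θ₁ * (circleMap 0 r θ₁ - z 0)⁻¹) *
          (f ![circleMap 0 r θ₁, circleMap 0 r θ₂] *
            (circleMap 0 r θ₂ * (circleMap 0 r θ₂ - z 1)⁻¹)) := by
        intro θ₂
        have : (c * K z) (θ₁, θ₂) = f ![circleMap 0 r θ₁, circleMap 0 r θ₂] *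
          (circleMap 0 r θ₁ * circleMap 0 r θ₂) *
          (Ring.inverse (e1 - z 0 • 1) (θ₁, θ₂) * Ring.inverse (e2 - z 1 • 1) (θ₁, θ₂)) := rfl
        rw [this, hk1, hk2]
        ring
      simp only [h2]
      rw [MeasureTheory.integral_const_mul, h1]
      ring
    simp only [hin]
    rw [MeasureTheory.integral_const_mul, hcauchy _ (hslice1 (z 1) hz1.le) (z 0) hz0]
    have hpi : (2 * Real.pi : ℂ) ≠ 0 := by
      exact_mod_cast Real.two_pi_pos.ne'
    have hzz : (![z 0, z 1] : Fin 2 → ℂ) = z := by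
      funext i; fin_cases i <;> rfl
    rw [hzz]
    field_simp
  exact (analyticAt_const.mul ((Λ.analyticAt _).comp hK)).congr hmain

end QH

namespace QH
open MvPolynomial

/-! ### The first integral as a period -/

section Setup
variable {a b d : ℕ} {Q : MvPolynomial (Fin 2) ℂ} {G : (Fin 2 ⊕ Fin 2 → ℂ) → ℂ}

/-- The point `(z, γ(t))` of `ℂ⁴`, where `γ(t) = t·c` is the orbit of `c`. -/
def pt (a b : ℕ) (c z : Fin 2 → ℂ) (t : ℂ) : Fin 2 ⊕ Fin 2 → ℂ := Sum.elim z (sc (wt a b) t c)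

/-- Choice of a base point `c` with `Q̄(c) = 1` and of radii such that `G(z, γ(t))` is close to
`t ^ d` as long as `z` is weighted-small with respect to `t`. -/
structure Setup (a b d : ℕ) (Q : MvPolynomial (Fin 2) ℂ) (G : (Fin 2 ⊕ Fin 2 → ℂ) → ℂ)
    (c : Fin 2 → ℂ) (ρ η R₀ : ℝ) : Prop where
  data : Data a b d Q G
  hc : eval c (cj Q) = 1
  hc1 : c 1 ≠ 0
  hρ : 0 < ρ
  hη : 0 < η
  hR₀ : 0 < R₀
  an : ∀ x, ‖x‖ < R₀ → AnalyticAt ℂ G x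
  mem : ∀ (t : ℂ) (ξ : Fin 2 → ℂ), ‖t‖ ≤ ρ → ‖ξ‖ ≤ η → ‖sc (W4 a b) t (Sum.elim ξ c)‖ < R₀
  nv : ∀ (t : ℂ) (ξ : Fin 2 → ℂ), t ≠ 0 → ‖t‖ ≤ ρ → ‖ξ‖ ≤ η →
    ‖G (sc (W4 a b) t (Sum.elim ξ c)) - t ^ d‖ ≤ ‖t‖ ^ d / 2
  small : ∀ ξ : Fin 2 → ℂ, ‖ξ‖ ≤ η → ‖eval ξ Q‖ ≤ 1 / 4

lemma norm_elim_le (z w : Fin 2 → ℂ) : ‖(Sum.elim z w : Fin 2 ⊕ Fin 2 → ℂ)‖ ≤ ‖z‖ + ‖w‖ := by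
  refine (pi_norm_le_iff_of_nonneg (by positivity)).mpr fun i => ?_
  rcases i with i | i
  · exact (norm_le_pi_norm z i).trans (by simp)
  · exact (norm_le_pi_norm w i).trans (by simp)

lemma Data.exists_setup (D : Data a b d Q G) : ∃ c ρ η R₀, Setup a b d Q G c ρ η R₀ := by
  obtain ⟨c, hc, hc1⟩ := D.exists_c
  obtain ⟨R₀, hR₀, han⟩ := Metric.eventually_nhds_iff.mp D.hG.eventually_analyticAt
  obtain ⟨δ, hδ, hQ⟩ := Metric.continuous_iff.mp (MvPolynomial.continuous_eval Q) 0 (1 / 4)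
    (by norm_num)
  rw [eval_zero_wh D.ha D.hb D.hd D.hQ] at hQ
  obtain ⟨C, ε, hε, hC, hb⟩ := D.hGo (‖c‖ + 1) (by positivity)
  obtain ⟨ε', hε', -, hm⟩ := sc_mem D.hW (Metric.ball_mem_nhds 0 hR₀) (‖c‖ + 1) (by positivity)
  have hη : 0 < min (δ / 2) 1 := by positivity
  set ρ := min (min (ε / 2) (ε' / 2)) (1 / (4 * (C + 1))) with hρdef
  have hρ : 0 < ρ := by positivity
  have hρ1 : ρ < ε := ((min_le_left _ _).trans (min_le_left _ _)).trans_lt (by linarith)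
  have hρ2 : ρ < ε' := ((min_le_left _ _).trans (min_le_right _ _)).trans_lt (by linarith)
  have hρ3 : C * ρ ≤ 1 / 4 := by
    have : ρ ≤ 1 / (4 * (C + 1)) := min_le_right _ _
    rw [le_div_iff₀ (by positivity)] at this
    nlinarith
  have hn : ∀ ξ : Fin 2 → ℂ, ‖ξ‖ ≤ min (δ / 2) 1 →
      ‖(Sum.elim ξ c : Fin 2 ⊕ Fin 2 → ℂ)‖ ≤ ‖c‖ + 1 := fun ξ hξ => by
    have := norm_elim_le ξ c
    have := hξ.trans (min_le_right _ _)
    linarith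
  have hsm : ∀ ξ : Fin 2 → ℂ, ‖ξ‖ ≤ min (δ / 2) 1 → ‖eval ξ Q‖ ≤ 1 / 4 := fun ξ hξ => by
    have h1 := hQ ξ (by
      rw [dist_zero_right]
      have := hξ.trans (min_le_left _ _)
      linarith)
    rw [dist_zero_right] at h1
    exact h1.le
  refine ⟨c, ρ, min (δ / 2) 1, R₀, D, hc, hc1, hρ, hη, hR₀, ?_, ?_, ?_, hsm⟩
  · intro x hx
    exact han (by simpa using hx)
  · intro t ξ ht hξ
    simpa using hm t (ht.trans_lt hρ2) _ (hn ξ hξ)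
  · intro t ξ ht0 ht hξ
    have h1 := hb t ht0 (ht.trans_lt hρ1) _ (hn ξ hξ)
    beta_reduce at h1
    rw [D.hom_qq t ht0, eval_qq, hc, zpow_natCast] at h1
    have h2 := hsm ξ hξ
    have htp : 0 < ‖t‖ := norm_pos_iff.mpr ht0
    have h3 : G (sc (W4 a b) t (Sum.elim ξ c)) - t ^ d =
      (G (sc (W4 a b) t (Sum.elim ξ c)) - t ^ d * (eval ξ Q + 1)) + t ^ d * eval ξ Q := by ring
    rw [h3]
    refine (norm_add_le _ _).trans ?_
    rw [norm_mul, norm_pow]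
    have h4 : C * ‖t‖ ^ ((d : ℤ) + 1) ≤ ‖t‖ ^ d * (1 / 4) := by
      rw [zpow_add₀ htp.ne', zpow_natCast, zpow_one]
      have : C * ‖t‖ ≤ 1 / 4 := (mul_le_mul_of_nonneg_left ht hC).trans hρ3
      have := mul_le_mul_of_nonneg_left this (pow_pos htp d).le
      linarith
    have h5 : ‖t‖ ^ d * ‖eval ξ Q‖ ≤ ‖t‖ ^ d * (1 / 4) := by gcongr
    linarith

variable {c : Fin 2 → ℂ} {ρ η R₀ : ℝ}

lemma norm_sc_le' (W : Fin 2 → ℕ) {l : ℂ} (hl : ‖l‖ ≤ 1) (x : Fin 2 → ℂ) : ‖sc W l x‖ ≤ ‖x‖ := by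
  refine (pi_norm_le_iff_of_nonneg (by positivity)).mpr fun i => ?_
  rw [sc, norm_mul, norm_pow]
  exact (mul_le_of_le_one_left (norm_nonneg _) (pow_le_one₀ (norm_nonneg _) hl)).trans
    (norm_le_pi_norm x i)

lemma pt_sc (a b : ℕ) (c ζ : Fin 2 → ℂ) {l t : ℂ} (ht : t ≠ 0) :
    pt a b c (sc (wt a b) l ζ) t = sc (W4 a b) t (Sum.elim (sc (wt a b) (l / t) ζ) c) := by
  rw [sc_W4, sc_mul, mul_div_cancel₀ _ ht, pt]

lemma Setup.pt_facts (A : Setup a b d Q G c ρ η R₀) {l t : ℂ} {ζ : Fin 2 → ℂ} (ht : t ≠ 0)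
    (hlt : ‖l‖ ≤ ‖t‖) (htρ : ‖t‖ ≤ ρ) (hζ : ‖ζ‖ ≤ η) :
    ‖pt a b c (sc (wt a b) l ζ) t‖ < R₀ ∧
      ‖G (pt a b c (sc (wt a b) l ζ) t) - t ^ d‖ ≤ ‖t‖ ^ d / 2 ∧
      G (pt a b c (sc (wt a b) l ζ) t) ≠ 0 := by
  have h1 : ‖sc (wt a b) (l / t) ζ‖ ≤ η := by
    refine (norm_sc_le' _ ?_ _).trans hζ
    rw [norm_div]
    exact div_le_one_of_le₀ hlt (norm_nonneg _)
  have h2 := A.nv t _ ht htρ h1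
  rw [pt_sc _ _ _ _ ht]
  refine ⟨A.mem t _ htρ h1, h2, fun h0 => ?_⟩
  rw [h0, zero_sub, norm_neg, norm_pow] at h2
  have := pow_pos (norm_pos_iff.mpr ht) d
  linarith

/-- The neighbourhood of `0 ∈ ℂ²` on which the period is defined. -/
def Udom (a b : ℕ) (ρ η : ℝ) : Set (Fin 2 → ℂ) := {z | ‖sc (wt a b) (ρ : ℂ)⁻¹ z‖ < η}

lemma continuous_sc {σ : Type*} (W : σ → ℕ) (l : ℂ) : Continuous (sc W l) :=
  continuous_pi fun i => continuous_const.mul (continuous_apply i)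

lemma isOpen_Udom : IsOpen (Udom a b ρ η) :=
  isOpen_lt (continuous_sc _ _).norm continuous_const

lemma Setup.Udom_mem (A : Setup a b d Q G c ρ η R₀) : Udom a b ρ η ∈ 𝓝 (0 : Fin 2 → ℂ) := by
  refine isOpen_Udom.mem_nhds ?_
  have : sc (wt a b) (ρ : ℂ)⁻¹ 0 = 0 := by funext i; simp [sc]
  simp only [Udom]
  change ‖_‖ < η
  rw [this, norm_zero]; exact A.hη

lemma Setup.pt_facts' (A : Setup a b d Q G c ρ η R₀) {z : Fin 2 → ℂ} (hz : z ∈ Udom a b ρ η)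
    {t : ℂ} (ht : t ∈ Metric.sphere (0 : ℂ) ρ) :
    t ≠ 0 ∧ ‖pt a b c z t‖ < R₀ ∧ ‖G (pt a b c z t) - t ^ d‖ ≤ ‖t‖ ^ d / 2 ∧
      G (pt a b c z t) ≠ 0 := by
  have htn : ‖t‖ = ρ := by simpa using ht
  have ht0 : t ≠ 0 := by rw [← norm_pos_iff, htn]; exact A.hρ
  have hρ0 : (ρ : ℂ) ≠ 0 := by exact_mod_cast A.hρ.ne'
  have hz' : z = sc (wt a b) (ρ : ℂ) (sc (wt a b) (ρ : ℂ)⁻¹ z) := by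
    rw [sc_mul, mul_inv_cancel₀ hρ0, sc_one]
  refine ⟨ht0, ?_⟩
  rw [hz']
  exact A.pt_facts ht0 (by rw [htn]; simp [abs_of_pos A.hρ]) htn.le hz.le

/-- `z ↦ (z, 0)`. -/
noncomputable def inlL : (Fin 2 → ℂ) →L[ℂ] (Fin 2 ⊕ Fin 2 → ℂ) :=
  ContinuousLinearMap.pi (Sum.elim (fun i => ContinuousLinearMap.proj (R := ℂ) i) (fun _ => 0))

lemma inlL_single (j : Fin 2) : inlL (Pi.single j 1) = Pi.single (Sum.inl j) 1 := by
  funext i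
  rcases i with i | i <;> by_cases h : i = j <;> simp [inlL, h]

lemma hasFDerivAt_pt (a b : ℕ) (c z : Fin 2 → ℂ) (t : ℂ) :
    HasFDerivAt (fun z => pt a b c z t) inlL z := by
  have h : (fun z => pt a b c z t) = fun z => inlL z +
      (Sum.elim (0 : Fin 2 → ℂ) (sc (wt a b) t c) : Fin 2 ⊕ Fin 2 → ℂ) := by
    funext z i
    rcases i with i | i <;> simp [pt, inlL]
  rw [h]
  exact inlL.hasFDerivAt.add_const _

lemma continuous_pt (a b : ℕ) (c : Fin 2 → ℂ) :
    Continuous (Function.uncurry (pt a b c)) := by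
  refine continuous_pi fun i => ?_
  rcases i with i | i
  · exact (continuous_apply i).comp continuous_fst
  · exact (continuous_snd.pow _).mul continuous_const

lemma mem_slitPlane_of_close {u : ℂ} (h : ‖u - 1‖ ≤ 1 / 2) : u ∈ Complex.slitPlane := by
  refine Or.inl ?_
  have := (Complex.abs_re_le_norm _).trans h
  rw [Complex.sub_re, Complex.one_re] at this
  linarith [(abs_le.mp this).1]

/-- The period `S(z) = ∮ t ^ (d - 1) log (G(z, γ(t)) / t ^ d) dt`: its partial derivatives are the
periods of `G_{z_j} / G`. -/
lemma Setup.exists_S (A : Setup a b d Q G c ρ η R₀) : ∃ S : (Fin 2 → ℂ) → ℂ, AnalyticAt ℂ S 0 ∧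
    ∀ᶠ z in 𝓝 (0 : Fin 2 → ℂ), ∀ j, pd S j z =
      ∮ t in C(0, ρ), t ^ (d - 1) * (pd G (Sum.inl j) (pt a b c z t) / G (pt a b c z t)) := by
  set k : (Fin 2 → ℂ) → ℂ → ℂ := fun z t => t ^ (d - 1) * Complex.log (G (pt a b c z t) / t ^ d)
    with hkdef
  set k' : (Fin 2 → ℂ) → ℂ → ((Fin 2 → ℂ) →L[ℂ] ℂ) := fun z t =>
    (t ^ (d - 1) / G (pt a b c z t)) • (fderiv ℂ G (pt a b c z t)).comp inlL with hk'def
  have hslit : ∀ z ∈ Udom a b ρ η, ∀ t ∈ Metric.sphere (0 : ℂ) ρ,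
      G (pt a b c z t) / t ^ d ∈ Complex.slitPlane := by
    intro z hz t ht
    obtain ⟨h0, -, h2, -⟩ := A.pt_facts' hz ht
    refine mem_slitPlane_of_close ?_
    have htd : t ^ d ≠ 0 := pow_ne_zero _ h0
    rw [div_sub_one htd, norm_div, norm_pow, div_le_iff₀ (pow_pos (norm_pos_iff.mpr h0) d)]
    linarith
  have hk : ∀ z ∈ Udom a b ρ η, ∀ t ∈ Metric.sphere (0 : ℂ) ρ,
      HasFDerivAt (fun z => k z t) (k' z t) z := by
    intro z hz t ht
    obtain ⟨h0, h1, -, h3⟩ := A.pt_facts' hz ht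
    have hg := ((A.an _ h1).differentiableAt.hasFDerivAt.comp z (hasFDerivAt_pt a b c z t))
    have hg2 := (hg.mul_const (t ^ d)⁻¹).clog (by simpa [div_eq_mul_inv] using hslit z hz t ht)
    have hg3 := hg2.const_mul (t ^ (d - 1))
    have htd : t ^ d ≠ 0 := pow_ne_zero _ h0
    have e : k' z t = t ^ (d - 1) • ((G ∘ fun z => pt a b c z t) z * (t ^ d)⁻¹)⁻¹ •
        (t ^ d)⁻¹ • (fderiv ℂ G (pt a b c z t)).comp inlL := by
      rw [hk'def, smul_smul, smul_smul]
      simp only [Function.comp]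
      field_simp
    rw [e]
    exact hg3
  have hk' : ContinuousOn (Function.uncurry k') (Udom a b ρ η ×ˢ Metric.sphere (0 : ℂ) ρ) := by
    rintro ⟨z, t⟩ ⟨hz, ht⟩
    obtain ⟨h0, h1, -, h3⟩ := A.pt_facts' hz ht
    have hp : ContinuousAt (Function.uncurry (pt a b c)) (z, t) := (continuous_pt a b c).continuousAt
    have hG : ContinuousAt (fun x : (Fin 2 → ℂ) × ℂ => G (pt a b c x.1 x.2)) (z, t) :=
      ContinuousAt.comp (g := G) (f := Function.uncurry (pt a b c)) (A.an _ h1).continuousAt hp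
    have hG' : ContinuousAt (fun x : (Fin 2 → ℂ) × ℂ => fderiv ℂ G (pt a b c x.1 x.2)) (z, t) :=
      ContinuousAt.comp (g := fderiv ℂ G) (f := Function.uncurry (pt a b c))
        (A.an _ h1).fderiv.continuousAt hp
    have : ContinuousAt (Function.uncurry k') (z, t) := by
      refine ContinuousAt.smul (ContinuousAt.div (by fun_prop) hG h3) ?_
      exact hG'.clm_comp continuousAt_const
    exact this.continuousWithinAt
  have hc : ∀ z ∈ Udom a b ρ η, ContinuousOn (k z) (Metric.sphere (0 : ℂ) ρ) := by
    intro z hz t ht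
    obtain ⟨h0, h1, -, h3⟩ := A.pt_facts' hz ht
    have hp : ContinuousAt (pt a b c z) t :=
      ((continuous_pt a b c).comp (Continuous.prodMk_right z)).continuousAt
    have hG : ContinuousAt (fun t => G (pt a b c z t)) t :=
      ContinuousAt.comp (g := G) (f := pt a b c z) (A.an _ h1).continuousAt hp
    have : ContinuousAt (k z) t := by
      refine ContinuousAt.mul (by fun_prop) (ContinuousAt.clog
        (ContinuousAt.div hG (by fun_prop) (pow_ne_zero _ h0)) (hslit z hz t ht))
    exact this.continuousWithinAt
  have hder := fun z (hz : z ∈ Udom a b ρ η) =>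
    hasFDerivAt_circleIntegral isOpen_Udom A.hρ.le hk hk' hc hz
  refine ⟨fun z => ∮ t in C(0, ρ), k z t, ?_, ?_⟩
  · obtain ⟨R, hR, hRU⟩ := Metric.mem_nhds_iff.mp A.Udom_mem
    exact osgood hR fun z hz => (hder z (hRU hz)).differentiableAt.differentiableWithinAt
  · filter_upwards [A.Udom_mem] with z hz j
    rw [pd, (hder z hz).fderiv]
    have hci : Continuous fun θ : ℝ => deriv (circleMap 0 ρ) θ • k' z (circleMap 0 ρ θ) := by
      refine Continuous.fun_smul ?_ (hk'.comp_continuous (f := fun θ => (z, circleMap 0 ρ θ))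
        (by have := continuous_circleMap 0 ρ; fun_prop)
        fun θ => ⟨hz, circleMap_mem_sphere _ A.hρ.le θ⟩)
      rw [show deriv (circleMap 0 ρ) = fun θ => circleMap 0 ρ θ * Complex.I from
        funext fun θ => deriv_circleMap 0 ρ θ]
      exact (continuous_circleMap 0 ρ).mul continuous_const
    rw [circleIntegral, ContinuousLinearMap.intervalIntegral_apply (hci.intervalIntegrable _ _),
      circleIntegral]
    congr 1
    funext θ
    simp only [hk'def, smul_apply, ContinuousLinearMap.comp_apply, inlL_single, smul_eq_mul, pd]
    ring

end Setup

end QH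

namespace QH
open MvPolynomial

/-! ### Vanishing periods and initial parts -/

section Period
variable {a b d : ℕ} {Q : MvPolynomial (Fin 2) ℂ} {G : (Fin 2 ⊕ Fin 2 → ℂ) → ℂ}
  {c : Fin 2 → ℂ} {ρ η R₀ : ℝ}

lemma differentiable_pt (a b : ℕ) (c z : Fin 2 → ℂ) : Differentiable ℂ (pt a b c z) := by
  refine differentiable_pi.mpr fun i => ?_
  rcases i with i | i
  · exact differentiable_const _
  · simp only [pt, sc, Sum.elim_inr]; fun_prop

lemma circleIntegral_rescale {l : ℝ} (f : ℂ → ℂ) :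
    (∮ t in C(0, l), f t) = ∮ t in C(0, 1), l * f (l * t) := by
  rw [circleIntegral, circleIntegral]
  congr 1
  funext θ
  have : circleMap 0 l θ = l * circleMap 0 1 θ := by simp [circleMap]
  rw [deriv_circleMap, deriv_circleMap, this]
  simp only [smul_eq_mul]
  ring

lemma differentiable_eval (P : MvPolynomial (Fin 2 ⊕ Fin 2) ℂ) :
    Differentiable ℂ fun x : Fin 2 ⊕ Fin 2 → ℂ => eval x P :=
  fun x => (analyticAt_eval P x).differentiableAt

lemma quot_bound {P q u v : ℂ} {C₁ C₂ C₃ l : ℝ} (hC₂ : 0 ≤ C₂) (hl : 0 ≤ l)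
    (h1 : ‖u - q‖ ≤ C₁ * l) (h2 : ‖v - P‖ ≤ C₂ * l) (h3 : ‖P‖ ≤ C₃) (hu : 1 / 2 ≤ ‖u‖)
    (hq : 3 / 4 ≤ ‖q‖) (hq' : ‖q‖ ≤ 5 / 4) : ‖P / q - v / u‖ ≤ 4 * (C₃ * C₁ + 2 * C₂) * l := by
  have hu0 : u ≠ 0 := by rw [← norm_pos_iff]; linarith
  have hq0 : q ≠ 0 := by rw [← norm_pos_iff]; linarith
  have hC₃ : 0 ≤ C₃ := (norm_nonneg _).trans h3
  have e : P / q - v / u = (P * (u - q) - q * (v - P)) / (q * u) := by field_simp; ring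
  rw [e, norm_div, norm_mul, div_le_iff₀ (by positivity)]
  have h4 : ‖P * (u - q) - q * (v - P)‖ ≤ C₃ * (C₁ * l) + 5 / 4 * (C₂ * l) := by
    refine (norm_sub_le _ _).trans ?_
    rw [norm_mul, norm_mul]
    gcongr
  have h5 : 3 / 8 ≤ ‖q‖ * ‖u‖ := by nlinarith
  have h6 : 0 ≤ C₃ * (C₁ * l) := mul_nonneg hC₃ ((norm_nonneg _).trans h1)
  have h7 : 0 ≤ C₂ * l := by positivity
  refine h4.trans ?_
  have h8 : 0 ≤ 4 * (C₃ * C₁ + 2 * C₂) * l := by nlinarith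
  nlinarith

lemma Setup.continuousOn_quot (A : Setup a b d Q G c ρ η R₀) {Φ : (Fin 2 ⊕ Fin 2 → ℂ) → ℂ} {δ : ℝ}
    (hΦ : ∀ x, ‖x‖ < R₀ → ‖x ∘ Sum.inl‖ < δ → DifferentiableAt ℂ Φ x) {l t : ℂ} {ζ : Fin 2 → ℂ}
    (ht : t ≠ 0) (hlt : ‖l‖ ≤ ‖t‖) (htρ : ‖t‖ ≤ ρ) (hζ : ‖ζ‖ ≤ η)
    (hδ : ‖sc (wt a b) l ζ‖ < δ) : DifferentiableAt ℂ (fun t => t ^ (d - 1) *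
      (Φ (pt a b c (sc (wt a b) l ζ) t) / G (pt a b c (sc (wt a b) l ζ) t))) t := by
  obtain ⟨h1, -, h3⟩ := A.pt_facts ht hlt htρ hζ
  have hp := (differentiable_pt a b c (sc (wt a b) l ζ)) t
  have hG : DifferentiableAt ℂ (fun t => G (pt a b c (sc (wt a b) l ζ) t)) t :=
    DifferentiableAt.comp (g := G) (f := pt a b c (sc (wt a b) l ζ)) t (A.an _ h1).differentiableAt hp
  have hΦ' : DifferentiableAt ℂ (fun t => Φ (pt a b c (sc (wt a b) l ζ) t)) t :=
    DifferentiableAt.comp (g := Φ) (f := pt a b c (sc (wt a b) l ζ)) t (hΦ _ h1 (by exact hδ)) hp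
  exact DifferentiableAt.fun_mul (by fun_prop) (hΦ'.fun_div hG h3)

/-- If the periods of `Φ / G` vanish and `P` is the initial part of `Φ` modulo `G`, then the periods
of `P / (Q(z) + Q̄(w))` vanish. -/
lemma Setup.period_zero (A : Setup a b d Q G c ρ η R₀) {Φ : (Fin 2 ⊕ Fin 2 → ℂ) → ℂ} {δ : ℝ}
    (hδ : 0 < δ) (hΦ : ∀ x, ‖x‖ < R₀ → ‖x ∘ Sum.inl‖ < δ → DifferentiableAt ℂ Φ x)
    (hE : ∀ᶠ z in 𝓝 (0 : Fin 2 → ℂ),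
      (∮ t in C(0, ρ), t ^ (d - 1) * (Φ (pt a b c z t) / G (pt a b c z t))) = 0)
    {T : MvPolynomial (Fin 2 ⊕ Fin 2) ℂ} {n : ℤ} {P : MvPolynomial (Fin 2 ⊕ Fin 2) ℂ}
    (hP : Hom (W4 a b) n P)
    (h : OW (W4 a b) (n + 1) (fun x => Φ x - eval x T * G x - eval x P)) {ζ : Fin 2 → ℂ}
    (hζ : ‖ζ‖ ≤ η) :
    (∮ t in C(0, 1), t ^ (d - 1) * (eval (pt a b c ζ t) P / (eval ζ Q + t ^ d))) = 0 := by
  have D := A.data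
  set R := ‖ζ‖ + ‖c‖ + 1 with hR
  have hRpos : 0 < R := by positivity
  have hxR : ∀ t : ℂ, ‖t‖ = 1 → ‖pt a b c ζ t‖ ≤ R := fun t ht => by
    refine (norm_elim_le _ _).trans ?_
    have := norm_sc_le' (wt a b) ht.le c
    linarith
  obtain ⟨C₁, ε₁, hε₁, hC₁, hb₁⟩ := D.hGo R hRpos
  obtain ⟨C₂, ε₂, hε₂, hC₂, hb₂⟩ := h R hRpos
  obtain ⟨C₃, ε₃, hε₃, hC₃, hb₃⟩ := hP.ow R hRpos
  have hE' : ∀ᶠ z in 𝓝 (0 : Fin 2 → ℂ), ‖z‖ < δ ∧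
      (∮ t in C(0, ρ), t ^ (d - 1) * (Φ (pt a b c z t) / G (pt a b c z t))) = 0 := by
    refine Filter.Eventually.and ?_ hE
    filter_upwards [Metric.ball_mem_nhds 0 hδ] with z hz
    simpa using hz
  obtain ⟨ε₄, hε₄, -, hm⟩ := sc_mem (wt_pos D.ha D.hb) hE' (‖ζ‖ + 1) (by positivity)
  set ε := min (min (min ε₁ ε₂) ε₃) (min ε₄ ρ) with hε
  have hεpos : 0 < ε := by have := A.hρ; positivity
  set C := 4 * (C₃ * C₁ + 2 * C₂) with hC
  set f : ℂ → ℂ := fun t => t ^ (d - 1) * (eval (pt a b c ζ t) P / (eval ζ Q + t ^ d)) with hf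
  have hq : ∀ t : ℂ, ‖t‖ = 1 → 3 / 4 ≤ ‖eval ζ Q + t ^ d‖ ∧ ‖eval ζ Q + t ^ d‖ ≤ 5 / 4 := by
    intro t ht
    have h1 := A.small ζ hζ
    have h2 : ‖t ^ d‖ = 1 := by rw [norm_pow, ht, one_pow]
    have h3 := norm_add_le (eval ζ Q) (t ^ d)
    have h4 := norm_sub_le (eval ζ Q + t ^ d) (eval ζ Q)
    rw [add_sub_cancel_left] at h4
    constructor <;> linarith
  have hfc : ContinuousOn f (Metric.sphere 0 1) := by
    intro t ht
    have ht : ‖t‖ = 1 := by simpa using ht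
    have h0 : eval ζ Q + t ^ d ≠ 0 := by rw [← norm_pos_iff]; linarith [(hq t ht).1]
    have h1 : ContinuousAt (fun t => eval (pt a b c ζ t) P) t :=
      ((differentiable_eval P).comp (differentiable_pt a b c ζ)).continuous.continuousAt
    exact (ContinuousAt.mul (by fun_prop) (h1.div (by fun_prop) h0)).continuousWithinAt
  -- for every small `l > 0` the integral is at most `2 π C l`
  have key : ∀ l : ℝ, 0 < l → l < ε → ‖∮ t in C(0, 1), f t‖ ≤ 2 * Real.pi * 1 * (C * l) := by
    intro l hl hlε
    simp only [hε, lt_min_iff] at hlε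
    obtain ⟨⟨⟨hl1, hl2⟩, hl3⟩, hl4, hlρ⟩ := hlε
    have hln : ‖(l : ℂ)‖ = l := by simp [abs_of_pos hl]
    have hl0 : (l : ℂ) ≠ 0 := by exact_mod_cast hl.ne'
    obtain ⟨hzδ, hint⟩ := hm l (by rwa [hln]) ζ (by linarith)
    set z := sc (wt a b) (l : ℂ) ζ with hz
    have hdiff : ∀ t : ℂ, l ≤ ‖t‖ → ‖t‖ ≤ ρ → DifferentiableAt ℂ (fun t => t ^ (d - 1) *
        (Φ (pt a b c z t) / G (pt a b c z t))) t := fun t ht1 ht2 =>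
      A.continuousOn_quot hΦ (by rw [← norm_pos_iff]; linarith) (by rwa [hln]) ht2 hζ hzδ
    -- move the path of integration to the circle of radius `l`
    rw [Complex.circleIntegral_eq_of_differentiable_on_annulus_off_countable hl hlρ.le
      Set.countable_empty (fun t ht => (hdiff t (by simpa using ht.2)
        (by simpa using ht.1)).continuousAt.continuousWithinAt)
      (fun t ht => hdiff t (by have := ht.1.2; simp at this; exact this.le)
        (by have := ht.1.1; simp at this; exact this.le))] at hint
    have hTd : Differentiable ℂ fun t => t ^ (d - 1) * eval (pt a b c z t) T :=
      Differentiable.mul (by fun_prop) ((differentiable_eval T).comp (differentiable_pt a b c z))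
    have hT0 : (∮ t in C(0, l), t ^ (d - 1) * eval (pt a b c z t) T) = 0 :=
      Complex.circleIntegral_eq_zero_of_differentiable_on_off_countable hl.le
        Set.countable_empty hTd.continuous.continuousOn fun t _ => hTd t
    have hci1 : CircleIntegrable (fun t => t ^ (d - 1) *
        (Φ (pt a b c z t) / G (pt a b c z t))) 0 l :=
      ContinuousOn.circleIntegrable hl.le fun t ht => by
        have : ‖t‖ = l := by simpa using ht
        exact (hdiff t this.ge (by linarith)).continuousAt.continuousWithinAt
    have hci2 : CircleIntegrable (fun t => t ^ (d - 1) * eval (pt a b c z t) T) 0 l :=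
      hTd.continuous.continuousOn.circleIntegrable hl.le
    have h1 := circleIntegral.integral_sub hci1 hci2
    have hci3 := hci1.sub hci2
    rw [hint, hT0, sub_zero, circleIntegral_rescale] at h1
    set g : ℂ → ℂ := fun t => (l : ℂ) ^ (-n) * (l * ((l * t) ^ (d - 1) *
      (Φ (pt a b c z (l * t)) / G (pt a b c z (l * t))) - (l * t) ^ (d - 1) *
        eval (pt a b c z (l * t)) T)) with hg
    have hg0 : (∮ t in C(0, 1), g t) = 0 := by
      rw [hg, circleIntegral.integral_const_mul, h1, mul_zero]
    have hgc : ContinuousOn g (Metric.sphere 0 1) := by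
      intro t ht
      have ht : ‖t‖ = 1 := by simpa using ht
      have h2 : DifferentiableAt ℂ (fun t => t ^ (d - 1) *
        (Φ (pt a b c z t) / G (pt a b c z t)) - t ^ (d - 1) * eval (pt a b c z t) T) (l * t) :=
        (hdiff (l * t) (by simp [ht, abs_of_pos hl]) (by simp [ht, abs_of_pos hl, hlρ.le])).fun_sub
          (hTd (l * t))
      have h3 : ContinuousAt (fun t : ℂ => (l : ℂ) * t) t := by fun_prop
      have h4 := ContinuousAt.comp (f := fun t : ℂ => (l : ℂ) * t) h2.continuousAt h3
      exact (continuousAt_const.mul (continuousAt_const.mul h4)).continuousWithinAt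
    have hsub := circleIntegral.integral_sub (hfc.circleIntegrable zero_le_one)
      (hgc.circleIntegrable zero_le_one)
    rw [hg0, sub_zero] at hsub
    rw [← hsub]
    refine circleIntegral.norm_integral_le_of_norm_le_const zero_le_one fun t ht => ?_
    have ht : ‖t‖ = 1 := by simpa using ht
    have hpt : pt a b c z (l * t) = sc (W4 a b) l (pt a b c ζ t) := by
      rw [pt, pt, sc_W4, sc_mul]
    have hlt0 : (l : ℂ) * t ≠ 0 := mul_ne_zero hl0 (by rw [← norm_pos_iff, ht]; exact one_pos)
    have hltn : ‖(l : ℂ) * t‖ = l := by rw [norm_mul, ht, mul_one, hln]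
    obtain ⟨-, hcl, hne⟩ := A.pt_facts (l := l) hlt0 (by rw [hltn, hln]) (by rw [hltn]; exact hlρ.le) hζ
    rw [← hz, hltn] at hcl
    rw [← hz] at hne
    have e1 := hb₁ l hl0 (by rwa [hln]) _ (hxR t ht)
    have e2 := hb₂ l hl0 (by rwa [hln]) _ (hxR t ht)
    have e3 := hb₃ l hl0 (by rwa [hln]) _ (hxR t ht)
    beta_reduce at e1 e2 e3
    have hq0 : eval (pt a b c ζ t) (qq Q (cj Q)) = eval ζ Q + t ^ d := by
      rw [pt, eval_qq, eval_sc _ (wh_cj D.hQ), A.hc, mul_one]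
    rw [D.hom_qq l hl0, ← hpt, hq0, hln] at e1
    rw [hP l hl0, ← hpt, hln] at e2
    rw [hP l hl0, norm_mul, norm_zpow, hln] at e3
    set x := pt a b c z (l * t) with hx
    have hlp : ∀ m : ℤ, 0 < l ^ m := fun m => zpow_pos hl m
    have hnz : ∀ m : ℤ, (l : ℂ) ^ m ≠ 0 := fun m => zpow_ne_zero m hl0
    have hnn : ∀ m : ℤ, ‖(l : ℂ) ^ m‖ = l ^ m := fun m => by rw [norm_zpow, hln]
    have f1 : ‖(l : ℂ) ^ (-(d : ℤ)) * G x - (eval ζ Q + t ^ d)‖ ≤ C₁ * l := by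
      have : (l : ℂ) ^ (-(d : ℤ)) * G x - (eval ζ Q + t ^ d) =
          (l : ℂ) ^ (-(d : ℤ)) * (G x - (l : ℂ) ^ (d : ℤ) * (eval ζ Q + t ^ d)) := by
        rw [mul_sub, ← mul_assoc, ← zpow_add₀ hl0]; simp
      rw [this, norm_mul, hnn]
      calc _ ≤ l ^ (-(d : ℤ)) * (C₁ * l ^ ((d : ℤ) + 1)) := by gcongr
        _ = C₁ * l := by rw [mul_left_comm, ← zpow_add₀ hl.ne']; simp
    have f2 : ‖(l : ℂ) ^ (-n) * (Φ x - eval x T * G x) - eval (pt a b c ζ t) P‖ ≤ C₂ * l := by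
      have : (l : ℂ) ^ (-n) * (Φ x - eval x T * G x) - eval (pt a b c ζ t) P =
          (l : ℂ) ^ (-n) * (Φ x - eval x T * G x - (l : ℂ) ^ n * eval (pt a b c ζ t) P) := by
        rw [mul_sub _ (Φ x - eval x T * G x), ← mul_assoc, ← zpow_add₀ hl0]; simp
      rw [this, norm_mul, hnn]
      calc _ ≤ l ^ (-n) * (C₂ * l ^ (n + 1)) := by gcongr
        _ = C₂ * l := by rw [mul_left_comm, ← zpow_add₀ hl.ne']; simp
    have f3 : ‖eval (pt a b c ζ t) P‖ ≤ C₃ := by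
      rw [mul_comm] at e3
      exact le_of_mul_le_mul_right e3 (hlp n)
    have f4 : 1 / 2 ≤ ‖(l : ℂ) ^ (-(d : ℤ)) * G x‖ := by
      have h5 := norm_sub_norm_le ((l * t : ℂ) ^ d) ((l * t : ℂ) ^ d - G x)
      rw [sub_sub_cancel, norm_pow, hltn, norm_sub_rev] at h5
      rw [norm_mul, hnn, zpow_neg, zpow_natCast]
      have h6 : 0 < l ^ d := pow_pos hl d
      rw [inv_mul_eq_div, le_div_iff₀ h6]
      linarith
    have hb := quot_bound hC₂ hl.le f1 f2 f3 f4 (hq t ht).1 (hq t ht).2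
    have hfg : f t - g t = t ^ (d - 1) * (eval (pt a b c ζ t) P / (eval ζ Q + t ^ d) -
        (l : ℂ) ^ (-n) * (Φ x - eval x T * G x) / ((l : ℂ) ^ (-(d : ℤ)) * G x)) := by
      simp only [hf, hg]
      rw [mul_sub (t ^ (d - 1))]
      congr 1
      rw [← hx]
      obtain ⟨e, rfl⟩ : ∃ e, d = e + 1 := ⟨d - 1, by have := D.hd; omega⟩
      rw [zpow_neg _ ((e + 1 : ℕ) : ℤ), zpow_natCast, Nat.add_sub_cancel]
      field_simp
      rw [mul_pow]; ring
    change ‖f t - g t‖ ≤ _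
    rw [hfg, norm_mul, norm_pow, ht, one_pow, one_mul]
    exact hb
  rw [← norm_le_zero_iff]
  have hlim : Tendsto (fun l : ℝ => 2 * Real.pi * 1 * (C * l)) (𝓝[>] 0) (𝓝 0) := by
    have : Continuous fun l : ℝ => 2 * Real.pi * 1 * (C * l) := by fun_prop
    simpa using (this.tendsto 0).mono_left nhdsWithin_le_nhds
  refine ge_of_tendsto hlim ?_
  filter_upwards [Ioo_mem_nhdsGT hεpos] with l hl
  exact key l hl.1 hl.2

/-- The period of the constant `1` is not zero: the integrand is close to `t⁻¹`. -/
lemma Setup.period_one (A : Setup a b d Q G c ρ η R₀) {ζ : Fin 2 → ℂ} (hζ : ‖ζ‖ ≤ η) :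
    (∮ t in C(0, 1), t ^ (d - 1) * (1 / (eval ζ Q + t ^ d))) ≠ 0 := by
  intro h0
  have hq := A.small ζ hζ
  set q := eval ζ Q
  have hlow : ∀ t : ℂ, ‖t‖ = 1 → 3 / 4 ≤ ‖q + t ^ d‖ := fun t ht => by
    have h2 : ‖t ^ d‖ = 1 := by rw [norm_pow, ht, one_pow]
    have h4 := norm_sub_le (q + t ^ d) q
    rw [add_sub_cancel_left] at h4
    linarith
  have hc1 : ContinuousOn (fun t : ℂ => t ^ (d - 1) * (1 / (q + t ^ d))) (Metric.sphere 0 1) := by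
    intro t ht
    have ht : ‖t‖ = 1 := by simpa using ht
    have hne : q + t ^ d ≠ 0 := by rw [← norm_pos_iff]; linarith [hlow t ht]
    have : ContinuousAt (fun t : ℂ => t ^ (d - 1) * (1 / (q + t ^ d))) t :=
      ContinuousAt.mul (by fun_prop) (ContinuousAt.div (by fun_prop) (by fun_prop) hne)
    exact this.continuousWithinAt
  have hc2 : ContinuousOn (fun t : ℂ => (t - 0)⁻¹) (Metric.sphere 0 1) := by
    intro t ht
    have ht : ‖t‖ = 1 := by simpa using ht
    have hne : t - 0 ≠ 0 := by rw [← norm_pos_iff, sub_zero, ht]; exact one_pos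
    have h3 : ContinuousAt (fun t : ℂ => t - 0) t := by fun_prop
    exact (h3.inv₀ hne).continuousWithinAt
  have h1 := circleIntegral.integral_sub (hc2.circleIntegrable zero_le_one)
    (hc1.circleIntegrable zero_le_one)
  rw [h0, sub_zero, circleIntegral.integral_sub_center_inv _ one_ne_zero] at h1
  have h2 : ‖∮ t in C(0, 1), ((t - 0)⁻¹ - t ^ (d - 1) * (1 / (q + t ^ d)))‖ ≤
      2 * Real.pi * 1 * (1 / 3) := by
    refine circleIntegral.norm_integral_le_of_norm_le_const zero_le_one fun t ht => ?_
    have ht : ‖t‖ = 1 := by simpa using ht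
    have hne : q + t ^ d ≠ 0 := by rw [← norm_pos_iff]; linarith [hlow t ht]
    have ht0 : t ≠ 0 := by rw [← norm_pos_iff, ht]; exact one_pos
    have e : (t - 0)⁻¹ - t ^ (d - 1) * (1 / (q + t ^ d)) = q / (t * (q + t ^ d)) := by
      obtain ⟨e, rfl⟩ : ∃ e, d = e + 1 := ⟨d - 1, by have := A.data.hd; omega⟩
      rw [Nat.add_sub_cancel, sub_zero]
      field_simp
      ring
    rw [e, norm_div, norm_mul, ht, one_mul, div_le_iff₀ (by linarith [hlow t ht])]
    linarith [hlow t ht]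
  rw [h1] at h2
  have : ‖(2 * Real.pi * Complex.I : ℂ)‖ = 2 * Real.pi := by
    simp [abs_of_pos Real.pi_pos]
  rw [this] at h2
  linarith [Real.pi_pos]

/-- A polynomial vanishing at the roots of `t ^ d = u`, `u ≠ 0`, is divisible by `t ^ d - u`. -/
lemma X_pow_sub_C_dvd (hd : 0 < d) {u : ℂ} (hu : u ≠ 0) (p : Polynomial ℂ)
    (h : ∀ t, t ^ d = u → p.eval t = 0) : (Polynomial.X ^ d - Polynomial.C u) ∣ p := by
  by_cases hp : p = 0
  · rw [hp]; exact dvd_zero _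
  have hne : (Polynomial.X ^ d - Polynomial.C u : Polynomial ℂ) ≠ 0 :=
    Polynomial.X_pow_sub_C_ne_zero hd u
  have hsep : (Polynomial.X ^ d - Polynomial.C u : Polynomial ℂ).Separable :=
    Polynomial.separable_X_pow_sub_C u (by exact_mod_cast hd.ne') hu
  refine Polynomial.Splits.dvd_of_roots_le_roots (IsAlgClosed.splits _) hne ?_
  refine (Multiset.le_iff_subset (Polynomial.nodup_roots hsep)).mpr fun t ht => ?_
  rw [Polynomial.mem_roots hne] at ht
  rw [Polynomial.mem_roots hp]
  refine h t ?_
  have h3 : t ^ d - u = 0 := by simpa [Polynomial.IsRoot] using ht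
  exact sub_eq_zero.mp h3

/-- Along the orbit `t ↦ (ζ, γ(t))`, a polynomial in `(z, w)` is a polynomial in `t`. -/
lemma exists_pt_poly (a b : ℕ) (c ζ : Fin 2 → ℂ) (P : MvPolynomial (Fin 2 ⊕ Fin 2) ℂ) :
    ∃ p : Polynomial ℂ, ∀ t, p.eval t = eval (pt a b c ζ t) P := by
  refine ⟨aeval (Sum.elim (fun i => Polynomial.C (ζ i))
    (fun i => Polynomial.X ^ wt a b i * Polynomial.C (c i))) P, fun t => ?_⟩
  induction P using MvPolynomial.induction_on with
  | C r => simp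
  | add p q hp hq => rw [map_add, Polynomial.eval_add, hp, hq, map_add]
  | mul_X p i hp =>
    rw [map_mul, Polynomial.eval_mul, hp, map_mul, aeval_X, eval_X]
    rcases i with i | i
    · simp [pt]
    · simp only [Sum.elim_inr, Polynomial.eval_mul, Polynomial.eval_pow, Polynomial.eval_X,
        Polynomial.eval_C, pt, sc]

/-- If `P(ζ, ·)` is constant on the level `{Q̄ = -Q(ζ)}` and the period of `P / (Q(ζ) + Q̄)` is
zero, then this constant is zero. -/
lemma Setup.const_zero (A : Setup a b d Q G c ρ η R₀) {ζ : Fin 2 → ℂ} (hζ : ‖ζ‖ ≤ η)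
    (hQζ : eval ζ Q ≠ 0) {P : MvPolynomial (Fin 2 ⊕ Fin 2) ℂ} {κ : ℂ}
    (hP : ∀ w, eval w (cj Q) = - eval ζ Q → eval (Sum.elim ζ w) P = κ)
    (h0 : (∮ t in C(0, 1), t ^ (d - 1) * (eval (pt a b c ζ t) P / (eval ζ Q + t ^ d))) = 0) :
    κ = 0 := by
  obtain ⟨p, hp⟩ := exists_pt_poly a b c ζ P
  obtain ⟨s, hs⟩ := X_pow_sub_C_dvd A.data.hd (neg_ne_zero.mpr hQζ) (p - Polynomial.C κ)
    fun t ht => by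
      rw [Polynomial.eval_sub, Polynomial.eval_C, hp, pt, hP, sub_self]
      rw [eval_sc _ (wh_cj A.data.hQ), A.hc, mul_one, ht]
  have hs' : ∀ t, eval (pt a b c ζ t) P = κ + (eval ζ Q + t ^ d) * s.eval t := fun t => by
    have := congrArg (Polynomial.eval t) hs
    simp only [Polynomial.eval_sub, Polynomial.eval_C, hp, Polynomial.eval_mul,
      Polynomial.eval_pow, Polynomial.eval_X] at this
    linear_combination this
  have hq := A.small ζ hζ
  have hne : ∀ t : ℂ, t ∈ Metric.sphere (0 : ℂ) 1 → eval ζ Q + t ^ d ≠ 0 := fun t ht h => by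
    have ht : ‖t‖ = 1 := by simpa using ht
    have h2 : ‖t ^ d‖ = 1 := by rw [norm_pow, ht, one_pow]
    rw [eq_neg_of_add_eq_zero_left h, norm_neg, h2] at hq
    norm_num at hq
  have e : (∮ t in C(0, 1), t ^ (d - 1) * (eval (pt a b c ζ t) P / (eval ζ Q + t ^ d))) =
      ∮ t in C(0, 1), (κ * (t ^ (d - 1) * (1 / (eval ζ Q + t ^ d))) + t ^ (d - 1) * s.eval t) := by
    refine circleIntegral.integral_congr zero_le_one fun t ht => ?_
    have := hne t ht
    simp only [hs']
    field_simp
  have hc1 : ContinuousOn (fun t : ℂ => κ * (t ^ (d - 1) * (1 / (eval ζ Q + t ^ d))))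
      (Metric.sphere 0 1) := by
    intro t ht
    have : ContinuousAt (fun t : ℂ => κ * (t ^ (d - 1) * (1 / (eval ζ Q + t ^ d)))) t :=
      continuousAt_const.mul (ContinuousAt.mul (by fun_prop)
        (ContinuousAt.div (by fun_prop) (by fun_prop) (hne t ht)))
    exact this.continuousWithinAt
  have hsd : Differentiable ℂ fun t : ℂ => t ^ (d - 1) * s.eval t :=
    Differentiable.fun_mul (by fun_prop) s.differentiable
  rw [e, circleIntegral.integral_add (hc1.circleIntegrable zero_le_one)
    (hsd.continuous.continuousOn.circleIntegrable zero_le_one),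
    circleIntegral.integral_const_mul,
    Complex.circleIntegral_eq_zero_of_differentiable_on_off_countable zero_le_one
        Set.countable_empty hsd.continuous.continuousOn fun t _ => hsd t, add_zero] at h0
  exact (mul_eq_zero.mp h0).resolve_right (A.period_one hζ)

end Period

end QH

namespace QH
open MvPolynomial

/-! ### Formal divisibility of the tangency function -/

section Jac
variable {a b d : ℕ} {Q : MvPolynomial (Fin 2) ℂ} {G : (Fin 2 ⊕ Fin 2 → ℂ) → ℂ}
  {c : Fin 2 → ℂ} {ρ η R₀ : ℝ} {S : (Fin 2 → ℂ) → ℂ}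

/-- `(z, w) ↦ z`. -/
noncomputable def prL : (Fin 2 ⊕ Fin 2 → ℂ) →L[ℂ] (Fin 2 → ℂ) :=
  ContinuousLinearMap.pi fun i => ContinuousLinearMap.proj (R := ℂ) (Sum.inl i)

lemma prL_apply (x : Fin 2 ⊕ Fin 2 → ℂ) : prL x = x ∘ Sum.inl := rfl

/-- `S_{z_j}` as a function of `(z, w)`. -/
noncomputable def lift (S : (Fin 2 → ℂ) → ℂ) (j : Fin 2) (x : Fin 2 ⊕ Fin 2 → ℂ) : ℂ :=
  pd S j (prL x)

/-- The coefficient of `dS ∧ (G_{z₁} dz₁ + G_{z₂} dz₂)`. -/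
noncomputable def jac (S : (Fin 2 → ℂ) → ℂ) (G : (Fin 2 ⊕ Fin 2 → ℂ) → ℂ)
    (x : Fin 2 ⊕ Fin 2 → ℂ) : ℂ :=
  lift S 0 x * pd G (Sum.inl 1) x - lift S 1 x * pd G (Sum.inl 0) x

lemma analyticAt_lift {x : Fin 2 ⊕ Fin 2 → ℂ} (hS : AnalyticAt ℂ S (prL x)) (j : Fin 2) :
    AnalyticAt ℂ (lift S j) x :=
  (analyticAt_pd hS j).comp (prL.analyticAt x)

lemma analyticAt_jac {x : Fin 2 ⊕ Fin 2 → ℂ} (hS : AnalyticAt ℂ S (prL x)) (hG : AnalyticAt ℂ G x) :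
    AnalyticAt ℂ (jac S G) x :=
  ((analyticAt_lift hS 0).mul (analyticAt_pd hG _)).sub
    ((analyticAt_lift hS 1).mul (analyticAt_pd hG _))

lemma pd_lift {x : Fin 2 ⊕ Fin 2 → ℂ} (hS : AnalyticAt ℂ S (prL x)) (j i : Fin 2) :
    pd (lift S j) (Sum.inr i) x = 0 := by
  have h := ((analyticAt_pd hS j).differentiableAt.hasFDerivAt.comp x prL.hasFDerivAt).fderiv
  have h0 : prL (Pi.single (Sum.inr i) 1) = 0 := by
    funext k; simp [prL]
  rw [pd, show lift S j = pd S j ∘ prL from rfl, h, ContinuousLinearMap.comp_apply, h0, map_zero]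

lemma pd_mul {σ : Type*} [Fintype σ] [DecidableEq σ] {f g : (σ → ℂ) → ℂ} {x : σ → ℂ} (hf : AnalyticAt ℂ f x)
    (hg : AnalyticAt ℂ g x) (k : σ) : pd (fun y => f y * g y) k x = f x * pd g k x + pd f k x * g x := by
  rw [pd, fderiv_fun_mul hf.differentiableAt hg.differentiableAt]
  simp [pd]
  ring

lemma pd_sub {σ : Type*} [Fintype σ] [DecidableEq σ] {f g : (σ → ℂ) → ℂ} {x : σ → ℂ} (hf : AnalyticAt ℂ f x)
    (hg : AnalyticAt ℂ g x) (k : σ) : pd (fun y => f y - g y) k x = pd f k x - pd g k x := by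
  rw [pd, fderiv_fun_sub hf.differentiableAt hg.differentiableAt]
  simp [pd]

/-- The identity `G_{z_j} Y K = K Y G_{z_j} - S_{z_j} B + G (…)` for `K = J - A G`. -/
lemma jac_identity {x : Fin 2 ⊕ Fin 2 → ℂ} (hS : AnalyticAt ℂ S (prL x)) (hG : AnalyticAt ℂ G x)
    (A : MvPolynomial (Fin 2 ⊕ Fin 2) ℂ) (j : Fin 2) :
    pd G (Sum.inl j) x * Y G (fun y => jac S G y - eval y A * G y) x =
      (jac S G x - eval x A * G x) * Y G (pd G (Sum.inl j)) x - lift S j x * levi G x +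
      G x * (eval x A * Y G (pd G (Sum.inl j)) x - pd G (Sum.inl j) x * Y G (fun y => eval y A) x) := by
  have hA := analyticAt_eval A x
  have e : ∀ i, pd (fun y => jac S G y - eval y A * G y) (Sum.inr i) x =
      lift S 0 x * pd (pd G (Sum.inl 1)) (Sum.inr i) x - lift S 1 x * pd (pd G (Sum.inl 0)) (Sum.inr i) x
      - (eval x A * pd G (Sum.inr i) x + pd (fun y => eval y A) (Sum.inr i) x * G x) := by
    intro i
    have h1 := analyticAt_lift hS 0
    have h2 := analyticAt_lift hS 1
    have h3 := analyticAt_pd hG (Sum.inl 0)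
    have h4 := analyticAt_pd hG (Sum.inl 1)
    rw [pd_sub (analyticAt_jac hS hG) (hA.fun_mul hG), pd_mul hA hG]
    rw [show jac S G = fun y => lift S 0 y * pd G (Sum.inl 1) y - lift S 1 y * pd G (Sum.inl 0) y
      from rfl]
    rw [pd_sub (h1.fun_mul h4) (h2.fun_mul h3), pd_mul h1 h4, pd_mul h2 h3, pd_lift hS, pd_lift hS]
    ring
  simp only [Y, levi, e]
  simp only [jac]
  revert j
  refine Fin.forall_fin_two.mpr ⟨?_, ?_⟩ <;> ring

lemma OW.lead_mul {σ : Type*} [Fintype σ] {W : σ → ℕ} {n m : ℤ} {f g : (σ → ℂ) → ℂ}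
    {p r : MvPolynomial σ ℂ} (hf : OW W n f) (hfp : OW W (n + 1) (fun x => f x - eval x p))
    (hgr : OW W (m + 1) (fun x => g x - eval x r)) (hr : Hom W m r) :
    OW W (n + m + 1) (fun x => f x * g x - eval x (p * r)) := by
  have h := ((hf.mul hgr).mono (M := n + m + 1) (by omega)).add
    ((hfp.mul hr.ow).mono (M := n + m + 1) (by omega))
  convert h using 2 with x
  rw [map_mul]; ring

/-- The initial part of the vector field `Y`. -/
noncomputable def Y₀ (Q P : MvPolynomial (Fin 2 ⊕ Fin 2) ℂ) : MvPolynomial (Fin 2 ⊕ Fin 2) ℂ :=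
  pderiv (Sum.inr 1) Q * pderiv (Sum.inr 0) P - pderiv (Sum.inr 0) Q * pderiv (Sum.inr 1) P

lemma Data.lead_Y (D : Data a b d Q G) {K : (Fin 2 ⊕ Fin 2 → ℂ) → ℂ} (hK : AnalyticAt ℂ K 0)
    {N : ℤ} {P : MvPolynomial (Fin 2 ⊕ Fin 2) ℂ} (hP : Hom (W4 a b) N P)
    (h : OW (W4 a b) (N + 1) (fun x => K x - eval x P)) :
    OW (W4 a b) (d + N - W4 a b (Sum.inr 0) - W4 a b (Sum.inr 1) + 1)
      (fun x => Y G K x - eval x (Y₀ (qq Q (cj Q)) P)) := by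
  have hk : ∀ k, OW (W4 a b) (N - W4 a b k + 1) (fun x => pd K k x - eval x (pderiv k P)) := by
    intro k
    refine OW.congr D.hW ((h.pd D.hW (hK.sub (analyticAt_eval _ _)) k).mono (by omega)) ?_
    filter_upwards [hK.eventually_analyticAt] with x hx
    rw [pd_sub hx (analyticAt_eval _ _), pd_eval]
  have h1 := (D.ow_pd' (Sum.inr 1)).lead_mul (D.ow_pd (Sum.inr 1)) (hk (Sum.inr 0))
    (hP.pderiv (Sum.inr 0))
  have h2 := (D.ow_pd' (Sum.inr 0)).lead_mul (D.ow_pd (Sum.inr 0)) (hk (Sum.inr 1))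
    (hP.pderiv (Sum.inr 1))
  have h3 := (h1.mono (M := d + N - W4 a b (Sum.inr 0) - W4 a b (Sum.inr 1) + 1) (by omega)).sub
    (h2.mono (M := d + N - W4 a b (Sum.inr 0) - W4 a b (Sum.inr 1) + 1) (by omega))
  convert h3 using 2 with x
  rw [Y, Y₀, map_sub]; ring

lemma Data.ow_Y (D : Data a b d Q G) {K : (Fin 2 ⊕ Fin 2 → ℂ) → ℂ} (hK : AnalyticAt ℂ K 0)
    {N : ℤ} (h : OW (W4 a b) N K) :
    OW (W4 a b) (d + N - W4 a b (Sum.inr 0) - W4 a b (Sum.inr 1)) (Y G K) := by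
  have h1 := (D.ow_pd' (Sum.inr 1)).mul (h.pd D.hW hK (Sum.inr 0))
  have h2 := (D.ow_pd' (Sum.inr 0)).mul (h.pd D.hW hK (Sum.inr 1))
  exact (h1.mono (M := d + N - W4 a b (Sum.inr 0) - W4 a b (Sum.inr 1)) (by omega)).sub
    (h2.mono (M := d + N - W4 a b (Sum.inr 0) - W4 a b (Sum.inr 1)) (by omega))

/-- `Y G_{z_j}` has order one more than expected, since the initial part of `G_{z_j}` only depends
on `z`. -/
lemma Data.ow_Y_pd (D : Data a b d Q G) (j : Fin 2) :
    OW (W4 a b) (d + (d - W4 a b (Sum.inl j) + 1) - W4 a b (Sum.inr 0) - W4 a b (Sum.inr 1))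
      (Y G (pd G (Sum.inl j))) := by
  have h := D.ow_Y ((analyticAt_pd D.hG _).fun_sub (analyticAt_eval _ _)) (D.ow_pd (Sum.inl j))
  refine OW.congr D.hW h ?_
  filter_upwards [D.hG.eventually_analyticAt] with x hx
  have e : ∀ i, pderiv (Sum.inr i) (pderiv (Sum.inl j) (qq Q (cj Q))) = 0 := by
    intro i
    rw [pderiv_qq_inl]
    refine pderiv_eq_zero_of_notMem_vars fun hmem => ?_
    obtain ⟨k, -, hk⟩ := Finset.mem_image.mp (vars_rename Sum.inl _ hmem)
    exact Sum.inl_ne_inr hk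
  rw [Y, Y, pd_sub (analyticAt_pd hx _) (analyticAt_eval _ _), pd_eval, e, map_zero, sub_zero,
    pd_sub (analyticAt_pd hx _) (analyticAt_eval _ _), pd_eval, e, map_zero, sub_zero]

/-- If `P` is the initial part of `J - A G`, then `Q_{z_j} Y₀ P` is a multiple of `Q(z) + Q̄(w)`.
Indeed `G_{z_j} Y(J)` lies in the ideal generated by `J` and the Levi determinant, and the latter is a
multiple of `G` to every order. -/
lemma Data.dvd_Y₀ (D : Data a b d Q G) (hS : AnalyticAt ℂ S 0)
    (hB : ∀ N : ℕ, ∃ A : MvPolynomial (Fin 2 ⊕ Fin 2) ℂ,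
      OW (W4 a b) N (fun x => levi G x - eval x A * G x))
    {A : MvPolynomial (Fin 2 ⊕ Fin 2) ℂ} {N : ℤ} {P : MvPolynomial (Fin 2 ⊕ Fin 2) ℂ}
    (hK : OW (W4 a b) N (fun x => jac S G x - eval x A * G x)) (hP : Hom (W4 a b) N P)
    (h : OW (W4 a b) (N + 1) (fun x => jac S G x - eval x A * G x - eval x P)) (j : Fin 2) :
    qq Q (cj Q) ∣ rename Sum.inl (pderiv j Q) * Y₀ (qq Q (cj Q)) P := by
  have hS0 : AnalyticAt ℂ S (prL 0) := by rwa [map_zero]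
  have hKa : AnalyticAt ℂ (fun x => jac S G x - eval x A * G x) 0 :=
    (analyticAt_jac hS0 D.hG).fun_sub ((analyticAt_eval A 0).fun_mul D.hG)
  set M : ℤ := d + N - W4 a b (Sum.inr 0) - W4 a b (Sum.inr 1) with hM
  set n : ℤ := d - W4 a b (Sum.inl j) + M with hn
  obtain ⟨B', hB'⟩ := hB (n + 1).toNat
  have hY₀ : Hom (W4 a b) M (Y₀ (qq Q (cj Q)) P) := by
    have h1 := (D.hom_qq.pderiv (Sum.inr 1)).mul (hP.pderiv (Sum.inr 0))
    have h2 := (D.hom_qq.pderiv (Sum.inr 0)).mul (hP.pderiv (Sum.inr 1))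
    rw [show (d : ℤ) - W4 a b (Sum.inr 1) + (N - W4 a b (Sum.inr 0)) = M by omega] at h1
    rw [show (d : ℤ) - W4 a b (Sum.inr 0) + (N - W4 a b (Sum.inr 1)) = M by omega] at h2
    exact h1.sub h2
  have hQj : Hom (W4 a b) (d - W4 a b (Sum.inl j)) (rename Sum.inl (pderiv j Q)) := by
    rw [← pderiv_qq_inl Q (cj Q)]; exact D.hom_qq.pderiv _
  refine D.dvd_of_mul (T := fun x => eval x A * Y G (pd G (Sum.inl j)) x -
    pd G (Sum.inl j) x * Y G (fun y => eval y A) x - lift S j x * eval x B') ?_ (hQj.mul hY₀) ?_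
  · exact (((analyticAt_eval A 0).fun_mul (analyticAt_Y D.hG (analyticAt_pd D.hG _))).fun_sub
      ((analyticAt_pd D.hG _).fun_mul (analyticAt_Y D.hG (analyticAt_eval A 0)))).fun_sub
      ((analyticAt_lift hS0 j).fun_mul (analyticAt_eval B' 0))
  have h1 := (D.ow_pd (Sum.inl j))
  rw [pderiv_qq_inl] at h1
  have h2 := (D.ow_pd' (Sum.inl j)).lead_mul h1 (D.lead_Y hKa hP h) hY₀
  have h3 := (hK.mul (D.ow_Y_pd j)).mono (M := n + 1) (by omega)
  have h4 := ((OW.of_continuousAt D.hW (analyticAt_lift hS0 j).continuousAt).mul hB').mono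
    (M := n + 1) (by omega)
  refine OW.congr D.hW ((h2.sub h3).add h4) ?_
  have hS' : ∀ᶠ x in 𝓝 (0 : Fin 2 ⊕ Fin 2 → ℂ), AnalyticAt ℂ S (prL x) := by
    have := prL.continuous.tendsto (0 : Fin 2 ⊕ Fin 2 → ℂ)
    rw [map_zero] at this
    exact this.eventually hS.eventually_analyticAt
  filter_upwards [D.hG.eventually_analyticAt, hS'] with x hx hx'
  rw [jac_identity hx' hx A j]
  ring

lemma pderiv_slice (z : Fin 2 → ℂ) (P : MvPolynomial (Fin 2 ⊕ Fin 2) ℂ) (i : Fin 2) :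
    pderiv i (slice z P) = slice z (pderiv (Sum.inr i) P) := by
  induction P using MvPolynomial.induction_on with
  | C r => simp [slice]
  | add p q hp hq => simp only [map_add, hp, hq]
  | mul_X p k hp =>
    have hX : pderiv i (slice z (X k)) = slice z (pderiv (Sum.inr i) (X k)) := by
      rcases k with k | k
      · simp [slice, pderiv_X]
      · by_cases hk : k = i
        · subst hk; simp [slice]
        · simp [slice, pderiv_X, hk]
    rw [map_mul, Derivation.leibniz, Derivation.leibniz, map_add, smul_eq_mul, smul_eq_mul,
      smul_eq_mul, smul_eq_mul, map_mul, map_mul, hp, hX]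

lemma Setup.jac_diff (A : Setup a b d Q G c ρ η R₀) (hS : AnalyticAt ℂ S 0) :
    ∃ δ > 0, ∀ x, ‖x‖ < R₀ → ‖x ∘ Sum.inl‖ < δ → DifferentiableAt ℂ (jac S G) x := by
  obtain ⟨δ, hδ, h⟩ := Metric.eventually_nhds_iff.mp hS.eventually_analyticAt
  refine ⟨δ, hδ, fun x hx hx' => (analyticAt_jac (h ?_) (A.an x hx)).differentiableAt⟩
  rwa [dist_zero_right]

lemma Setup.continuousOn_pd (A : Setup a b d Q G c ρ η R₀) {z : Fin 2 → ℂ}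
    (hz : z ∈ Udom a b ρ η) (k : Fin 2 ⊕ Fin 2) :
    ContinuousOn (fun t => t ^ (d - 1) * (pd G k (pt a b c z t) / G (pt a b c z t)))
      (Metric.sphere 0 ρ) := by
  intro t ht
  obtain ⟨h0, h1, -, h3⟩ := A.pt_facts' hz ht
  have hp : ContinuousAt (pt a b c z) t := (differentiable_pt a b c z).continuous.continuousAt
  have hG : ContinuousAt (fun t => G (pt a b c z t)) t :=
    ContinuousAt.comp (g := G) (f := pt a b c z) (A.an _ h1).continuousAt hp
  have hG' : ContinuousAt (fun t => pd G k (pt a b c z t)) t :=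
    ContinuousAt.comp (g := pd G k) (f := pt a b c z) (analyticAt_pd (A.an _ h1) k).continuousAt hp
  exact (ContinuousAt.mul (by fun_prop) (hG'.div hG h3)).continuousWithinAt

/-- The periods of `J / G` vanish. -/
lemma Setup.jac_period (A : Setup a b d Q G c ρ η R₀)
    (hSE : ∀ᶠ z in 𝓝 (0 : Fin 2 → ℂ), ∀ j, pd S j z =
      ∮ t in C(0, ρ), t ^ (d - 1) * (pd G (Sum.inl j) (pt a b c z t) / G (pt a b c z t))) :
    ∀ᶠ z in 𝓝 (0 : Fin 2 → ℂ),
      (∮ t in C(0, ρ), t ^ (d - 1) * (jac S G (pt a b c z t) / G (pt a b c z t))) = 0 := by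
  filter_upwards [hSE, A.Udom_mem] with z hz hzU
  have h0 := (A.continuousOn_pd hzU (Sum.inl 0)).circleIntegrable A.hρ.le
  have h1 := (A.continuousOn_pd hzU (Sum.inl 1)).circleIntegrable A.hρ.le
  have e : (∮ t in C(0, ρ), t ^ (d - 1) * (jac S G (pt a b c z t) / G (pt a b c z t))) =
      ∮ t in C(0, ρ),
        (pd S 0 z • (t ^ (d - 1) * (pd G (Sum.inl 1) (pt a b c z t) / G (pt a b c z t))) -
        pd S 1 z • (t ^ (d - 1) * (pd G (Sum.inl 0) (pt a b c z t) / G (pt a b c z t)))) := by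
    refine circleIntegral.integral_congr A.hρ.le fun t _ => ?_
    have : prL (pt a b c z t) = z := rfl
    simp only [jac, lift, this, smul_eq_mul]
    ring
  have h1' : CircleIntegrable (fun t => pd S 0 z •
      (t ^ (d - 1) * (pd G (Sum.inl 1) (pt a b c z t) / G (pt a b c z t)))) 0 ρ := h1.const_smul
  have h0' : CircleIntegrable (fun t => pd S 1 z •
      (t ^ (d - 1) * (pd G (Sum.inl 0) (pt a b c z t) / G (pt a b c z t)))) 0 ρ := h0.const_smul
  rw [e, circleIntegral.integral_sub h1' h0',
    circleIntegral.integral_smul, circleIntegral.integral_smul, ← hz 0, ← hz 1, smul_eq_mul,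
    smul_eq_mul]
  ring

/-- The initial part `P` of `J - T G` is a multiple of `Q(z) + Q̄(w)`. Since `Y₀ P` vanishes on
`{Q(z) + Q̄(w) = 0}`, for generic `z` the polynomial `P(z, ·)` is constant on the level
`{Q̄ = -Q(z)}`; the period of `J / G` is zero by the choice of `S`, so this constant is zero. -/
lemma Setup.jac_dvd (A : Setup a b d Q G c ρ η R₀) (hS : AnalyticAt ℂ S 0)
    (hSE : ∀ᶠ z in 𝓝 (0 : Fin 2 → ℂ), ∀ j, pd S j z =
      ∮ t in C(0, ρ), t ^ (d - 1) * (pd G (Sum.inl j) (pt a b c z t) / G (pt a b c z t)))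
    (hB : ∀ N : ℕ, ∃ A : MvPolynomial (Fin 2 ⊕ Fin 2) ℂ,
      OW (W4 a b) N (fun x => levi G x - eval x A * G x))
    {T : MvPolynomial (Fin 2 ⊕ Fin 2) ℂ} {N : ℤ} {P : MvPolynomial (Fin 2 ⊕ Fin 2) ℂ}
    (hK : OW (W4 a b) N (fun x => jac S G x - eval x T * G x)) (hP : Hom (W4 a b) N P)
    (h : OW (W4 a b) (N + 1) (fun x => jac S G x - eval x T * G x - eval x P)) :
    qq Q (cj Q) ∣ P := by
  have D := A.data
  obtain ⟨j, hj⟩ := D.exists_j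
  obtain ⟨δ, hδ, hdiff⟩ := A.jac_diff hS
  have h0 := eval_zero_wh D.ha D.hb D.hd (wh_cj D.hQ)
  have hdvd := D.dvd_Y₀ hS hB hK hP h j
  -- the claim for small `z`
  have hsmall : ∀ z w, ‖z‖ ≤ η → eval z Q + eval w (cj Q) = 0 → eval z (Q * pderiv j Q) ≠ 0 →
      eval (Sum.elim z w) P = 0 := by
    intro z w hz hzw hne
    rw [map_mul] at hne
    have hQz := left_ne_zero_of_mul hne
    have hQj := right_ne_zero_of_mul hne
    obtain ⟨κ, hκ⟩ := const_on_level D.ha D.hb D.hd (cj Q) (wh_cj D.hQ) D.relPrime c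
      (by rw [A.hc]; exact one_ne_zero) (- eval z Q) (neg_ne_zero.mpr hQz) (slice z P) (by
        intro w hw
        obtain ⟨U, hU⟩ := hdvd
        have h1 := congrArg (eval (Sum.elim z w)) hU
        rw [map_mul, map_mul, eval_qq, hw, add_neg_cancel, zero_mul, eval_inl] at h1
        have h2 := (mul_eq_zero.mp h1).resolve_left (by simpa using hQj)
        rw [br, pderiv_slice, pderiv_slice, map_sub, map_mul, map_mul, eval_slice, eval_slice]
        rw [Y₀, pderiv_qq_inr, pderiv_qq_inr, map_sub, map_mul, map_mul, eval_inr, eval_inr] at h2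
        simp only [Sum.elim_comp_inr] at h2
        linear_combination h2)
    have hκ' : ∀ w, eval w (cj Q) = - eval z Q → eval (Sum.elim z w) P = κ := fun w hw => by
      rw [← eval_slice]; exact hκ w hw
    have hκ0 : κ = 0 := A.const_zero hz hQz hκ'
      (A.period_zero hδ hdiff (A.jac_period hSE) hP h hz)
    rw [hκ' w (by linear_combination hzw), hκ0]
  refine qq_dvd_of_zeros Q (cj Q) (Q * pderiv j Q) (mul_ne_zero D.Q_ne hj) j hj c 0
    (by rw [h0, A.hc]; exact one_ne_zero) P fun z w hzw hne => ?_
  obtain ⟨ε, hε, -, hm⟩ := sc_mem (wt_pos D.ha D.hb) (Metric.closedBall_mem_nhds 0 A.hη) (‖z‖ + 1)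
    (by positivity)
  have hl0 : ((ε / 2 : ℝ) : ℂ) ≠ 0 := by exact_mod_cast (by positivity : ε / 2 ≠ 0)
  have hl : ‖((ε / 2 : ℝ) : ℂ)‖ < ε := by
    rw [Complex.norm_real, Real.norm_of_nonneg (by positivity)]; linarith
  set l : ℂ := ((ε / 2 : ℝ) : ℂ)
  have h1 := hsmall (sc (wt a b) l z) (sc (wt a b) l w) (by simpa using hm l hl z (by linarith))
    (by rw [eval_sc _ D.hQ, eval_sc _ (wh_cj D.hQ), ← mul_add, hzw, mul_zero])
    (by
      have hu := (Hom.of_wh D.hQ).mul ((Hom.of_wh D.hQ).pderiv j)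
      rw [hu l hl0]
      exact mul_ne_zero (zpow_ne_zero _ hl0) hne)
  rw [← sc_W4, hP l hl0] at h1
  exact (mul_eq_zero.mp h1).resolve_left (zpow_ne_zero _ hl0)

/-- `J` is a multiple of `G` up to any weighted order. -/
lemma Setup.jac_formal (A : Setup a b d Q G c ρ η R₀) (hS : AnalyticAt ℂ S 0)
    (hSE : ∀ᶠ z in 𝓝 (0 : Fin 2 → ℂ), ∀ j, pd S j z =
      ∮ t in C(0, ρ), t ^ (d - 1) * (pd G (Sum.inl j) (pt a b c z t) / G (pt a b c z t)))
    (hB : ∀ N : ℕ, ∃ A : MvPolynomial (Fin 2 ⊕ Fin 2) ℂ,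
      OW (W4 a b) N (fun x => levi G x - eval x A * G x)) (N : ℕ) :
    ∃ T : MvPolynomial (Fin 2 ⊕ Fin 2) ℂ, OW (W4 a b) N (fun x => jac S G x - eval x T * G x) := by
  have D := A.data
  have hJ : AnalyticAt ℂ (jac S G) 0 := analyticAt_jac (by rwa [map_zero]) D.hG
  induction N with
  | zero =>
    refine ⟨0, ?_⟩
    simpa using OW.of_continuousAt D.hW hJ.continuousAt
  | succ N ih =>
    obtain ⟨T, hT⟩ := ih
    have han : AnalyticAt ℂ (fun x => jac S G x - eval x T * G x) 0 :=
      hJ.sub ((analyticAt_eval T 0).mul D.hG)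
    obtain ⟨P, hP, hlead⟩ := exists_leading D.hW han hT
    obtain ⟨T', rfl⟩ := A.jac_dvd hS hSE hB hT hP hlead
    rw [mul_comm] at hP
    have hT' := Hom.of_mul D.hom_qq D.qq_ne hP
    refine ⟨T + T', ?_⟩
    have h1 := (hT'.ow.mul D.hGo).mono (M := N + 1) (by omega)
    have h2 := hlead.sub h1
    push_cast
    convert h2 using 2 with x
    rw [map_add, map_mul]; ring

end Jac

end QH

namespace QH
open MvPolynomial

/-! ### From formal to actual divisibility on the zero set -/

/-- Holomorphic dependence of a circle integral on a parameter, for a jointly analytic integrand. -/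
lemma differentiableAt_circleIntegral {U : Set ℂ} (hU : IsOpen U) {ρ : ℝ} (hρ : 0 ≤ ρ)
    {k : ℂ × ℂ → ℂ} (hk : ∀ z ∈ U, ∀ t ∈ Metric.sphere (0 : ℂ) ρ, AnalyticAt ℂ k (z, t))
    {z₀ : ℂ} (hz₀ : z₀ ∈ U) : DifferentiableAt ℂ (fun z => ∮ t in C(0, ρ), k (z, t)) z₀ := by
  refine (hasFDerivAt_circleIntegral hU hρ (k := fun z t => k (z, t))
    (k' := fun z t => (fderiv ℂ k (z, t)).comp (ContinuousLinearMap.inl ℂ ℂ ℂ)) ?_ ?_ ?_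
    hz₀).differentiableAt
  · intro z hz t ht
    exact (hk z hz t ht).differentiableAt.hasFDerivAt.comp z (hasFDerivAt_prodMk_left z t)
  · rintro ⟨z, t⟩ ⟨hz, ht⟩
    have h1 : ContinuousAt (fun y : ℂ × ℂ => fderiv ℂ k y) (z, t) := (hk z hz t ht).fderiv.continuousAt
    exact (h1.clm_comp continuousAt_const).continuousWithinAt
  · intro z hz t ht
    have h1 : ContinuousAt (fun t => k (z, t)) t :=
      ContinuousAt.comp (g := k) (f := fun t => (z, t)) (hk z hz t ht).continuousAt (by fun_prop)
    exact h1.continuousWithinAt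

section Flat
variable {a b d : ℕ} {Q : MvPolynomial (Fin 2) ℂ} {G : (Fin 2 ⊕ Fin 2 → ℂ) → ℂ} {c : Fin 2 → ℂ}

/-- The point `(ζ, γ(t) + (s, 0))`; the curve `t ↦ γ(t) + (s, 0)` sweeps out `ℂ²` as `s` varies. -/
def ptS (a b : ℕ) (c ζ : Fin 2 → ℂ) (s t : ℂ) : Fin 2 ⊕ Fin 2 → ℂ :=
  Sum.elim ζ (fun i => (if i = 0 then s else 0) + t ^ wt a b i * c i)

lemma analyticAt_ptS (W : Fin 2 ⊕ Fin 2 → ℕ) (ζ : Fin 2 → ℂ) (s : ℂ) (y : ℂ × ℂ) :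
    AnalyticAt ℂ (fun y : ℂ × ℂ => sc W y.1 (ptS a b c ζ s y.2)) y := by
  refine analyticAt_pi_iff.mpr ?_
  rintro (i | i)
  · simp only [sc, ptS, Sum.elim_inl]
    exact (analyticAt_fst.fun_pow _).fun_mul analyticAt_const
  · simp only [sc, ptS, Sum.elim_inr]
    exact (analyticAt_fst.fun_pow _).fun_mul
      (analyticAt_const.fun_add ((analyticAt_snd.fun_pow _).fun_mul analyticAt_const))

lemma norm_ptS_le {ζ : Fin 2 → ℂ} {s t : ℂ} (hζ : ‖ζ‖ ≤ 1) (hs : ‖s‖ ≤ 1) (ht : ‖t‖ ≤ 1) :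
    ‖ptS a b c ζ s t‖ ≤ 2 + ‖c‖ := by
  refine (norm_elim_le _ _).trans ?_
  have : ‖fun i : Fin 2 => (if i = 0 then s else 0) + t ^ wt a b i * c i‖ ≤ 1 + ‖c‖ := by
    refine (pi_norm_le_iff_of_nonneg (by positivity)).mpr fun i => (norm_add_le _ _).trans ?_
    refine add_le_add ?_ ?_
    · split_ifs <;> simp [hs]
    · rw [norm_mul, norm_pow]
      exact (mul_le_of_le_one_left (norm_nonneg _) (pow_le_one₀ (norm_nonneg _) ht)).trans
        (norm_le_pi_norm c i)
  linarith

/-- `Q(z) + Q̄(w)` stays away from `0` on the unit circle of the curves `t ↦ γ(t) + (s, 0)`. -/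
lemma Data.ptS_lower (D : Data a b d Q G) (hc : eval c (cj Q) = 1) :
    ∃ η > 0, η ≤ 1 ∧ ∀ (ζ : Fin 2 → ℂ) (s t : ℂ), ‖ζ‖ < η → ‖s‖ < η → ‖t‖ = 1 →
      1 / 2 < ‖eval (ptS a b c ζ s t) (qq Q (cj Q))‖ := by
  have hcont : Continuous fun y : ((Fin 2 → ℂ) × ℂ) × ℂ =>
      ‖eval (ptS a b c y.1.1 y.1.2 y.2) (qq Q (cj Q))‖ := by
    refine ((MvPolynomial.continuous_eval _).comp (continuous_pi ?_)).norm
    rintro (i | i)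
    · simp only [ptS, Sum.elim_inl]; fun_prop
    · simp only [ptS, Sum.elim_inr]
      by_cases h : i = 0
      · simp only [h, if_true]; fun_prop
      · simp only [h, if_false]; fun_prop
  have h0 : ∀ t : ℂ, ‖t‖ = 1 → 1 / 2 < ‖eval (ptS a b c 0 0 t) (qq Q (cj Q))‖ := by
    intro t ht
    have : ptS a b c 0 0 t = Sum.elim (0 : Fin 2 → ℂ) (sc (wt a b) t c) := by
      funext i; rcases i with i | i <;> simp [ptS, sc]
    rw [this, eval_qq, eval_sc _ (wh_cj D.hQ), hc, eval_zero_wh D.ha D.hb D.hd D.hQ, zero_add,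
      mul_one, norm_pow, ht, one_pow]
    norm_num
  have hev : ∀ᶠ y in 𝓝 (0 : (Fin 2 → ℂ) × ℂ), ∀ t ∈ Metric.sphere (0 : ℂ) 1,
      1 / 2 < ‖eval (ptS a b c y.1 y.2 t) (qq Q (cj Q))‖ := by
    refine (isCompact_sphere (0 : ℂ) 1).eventually_forall_of_forall_eventually fun t ht => ?_
    exact hcont.continuousAt.eventually (lt_mem_nhds (h0 t (by simpa using ht)))
  obtain ⟨η, hη, h⟩ := Metric.eventually_nhds_iff.mp hev
  refine ⟨min η 1, by positivity, min_le_right _ _, fun ζ s t hζ hs ht => ?_⟩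
  refine h (y := (ζ, s)) ?_ t (by simpa using ht)
  rw [dist_zero_right, Prod.norm_def]
  exact max_lt (hζ.trans_le (min_le_left _ _)) (hs.trans_le (min_le_left _ _))

/-- With `x(t) = κ·(ζ, γ(t) + (s, 0))`, compare `J(x(τ))` with `G(x(τ))` times the Cauchy integral of
`J(x(t)) / G(x(t))` over the unit circle. The two agree when `J` is a multiple of `G`, so their
difference is flat as the scaling parameter `κ` tends to `0`; being holomorphic in `κ` it is zero. So `J(x(τ)) = 0` as soon as `G(x(τ)) = 0`. -/
lemma Data.flat_curve (D : Data a b d Q G) (hc : eval c (cj Q) = 1)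
    {J : (Fin 2 ⊕ Fin 2 → ℂ) → ℂ} (hJ : AnalyticAt ℂ J 0)
    (hf : ∀ N : ℕ, ∃ T : MvPolynomial (Fin 2 ⊕ Fin 2) ℂ,
      OW (W4 a b) N (fun x => J x - eval x T * G x)) :
    ∃ η > 0, η ≤ 1 ∧ ∃ κ : ℂ, κ ≠ 0 ∧ ∀ (ζ : Fin 2 → ℂ) (s τ : ℂ), ‖ζ‖ < η → ‖s‖ < η → ‖τ‖ < 1 / 2 →
      G (sc (W4 a b) κ (ptS a b c ζ s τ)) = 0 → J (sc (W4 a b) κ (ptS a b c ζ s τ)) = 0 := by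
  obtain ⟨η, hη, hη1, hlow⟩ := D.ptS_lower hc
  have hR : 0 < 2 + ‖c‖ := by positivity
  obtain ⟨C, ε, hε, hC, hb⟩ := D.hGo (2 + ‖c‖) hR
  obtain ⟨CG, εG, hεG, hCG, hbG⟩ := D.ow (2 + ‖c‖) hR
  obtain ⟨ε', hε', -, hm⟩ := sc_mem D.hW (hJ.eventually_analyticAt.and D.hG.eventually_analyticAt)
    (2 + ‖c‖) hR
  set r := min (min ε ε') (1 / (4 * (C + 1))) with hr
  have hr0 : 0 < r := by positivity
  -- lower bound for `G` on the circles
  have hGlow : ∀ (l : ℂ), l ≠ 0 → ‖l‖ < r → ∀ (ζ : Fin 2 → ℂ) (s t : ℂ), ‖ζ‖ < η → ‖s‖ < η →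
      ‖t‖ = 1 → ‖l‖ ^ d / 4 ≤ ‖G (sc (W4 a b) l (ptS a b c ζ s t))‖ := by
    intro l hl hlr ζ s t hζ hs ht
    have hlp : 0 < ‖l‖ := norm_pos_iff.mpr hl
    have h1 := hb l hl (hlr.trans_le ((min_le_left _ _).trans (min_le_left _ _)))
      (ptS a b c ζ s t) (norm_ptS_le (hζ.le.trans hη1) (hs.le.trans hη1) ht.le)
    beta_reduce at h1
    rw [D.hom_qq l hl, zpow_natCast, zpow_add₀ hlp.ne', zpow_natCast, zpow_one] at h1
    have h2 := hlow ζ s t hζ hs ht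
    have h3 : C * ‖l‖ ≤ 1 / 4 := by
      have : ‖l‖ < 1 / (4 * (C + 1)) := hlr.trans_le (min_le_right _ _)
      rw [lt_div_iff₀ (by positivity)] at this
      nlinarith
    have h4 : ‖l ^ d * eval (ptS a b c ζ s t) (qq Q (cj Q))‖ ≤
        ‖G (sc (W4 a b) l (ptS a b c ζ s t))‖ +
        ‖G (sc (W4 a b) l (ptS a b c ζ s t)) - l ^ d * eval (ptS a b c ζ s t) (qq Q (cj Q))‖ := by
      have := norm_sub_norm_le (l ^ d * eval (ptS a b c ζ s t) (qq Q (cj Q)))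
        (G (sc (W4 a b) l (ptS a b c ζ s t)))
      rw [norm_sub_rev] at this
      linarith
    rw [norm_mul, norm_pow] at h4
    have hp : 0 < ‖l‖ ^ d := by positivity
    nlinarith
  refine ⟨η, hη, hη1, ((r / 2 : ℝ) : ℂ), by exact_mod_cast (by positivity : r / 2 ≠ 0), ?_⟩
  intro ζ s τ hζ hs hτ hG0
  have hptn : ∀ t : ℂ, ‖t‖ ≤ 1 → ‖ptS a b c ζ s t‖ ≤ 2 + ‖c‖ := fun t ht =>
    norm_ptS_le (hζ.le.trans hη1) (hs.le.trans hη1) ht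
  have hτ1 : ‖τ‖ ≤ 1 := by linarith
  have han : ∀ l : ℂ, ‖l‖ < r → ∀ t : ℂ, ‖t‖ ≤ 1 →
      AnalyticAt ℂ J (sc (W4 a b) l (ptS a b c ζ s t)) ∧
      AnalyticAt ℂ G (sc (W4 a b) l (ptS a b c ζ s t)) := fun l hl t ht =>
    hm l (hl.trans_le ((min_le_left _ _).trans (min_le_right _ _))) _ (hptn t ht)
  have hlpt : ∀ t l : ℂ, DifferentiableAt ℂ (fun l => sc (W4 a b) l (ptS a b c ζ s t)) l := by
    intro t l
    exact (analyticAt_ptS (W4 a b) ζ s (l, t)).differentiableAt.comp l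
      (f := fun l : ℂ => (l, t)) (by fun_prop)
  have htpt : ∀ l t : ℂ, DifferentiableAt ℂ (fun t => sc (W4 a b) l (ptS a b c ζ s t)) t := by
    intro l t
    exact (analyticAt_ptS (W4 a b) ζ s (l, t)).differentiableAt.comp t
      (f := fun t : ℂ => (l, t)) (by fun_prop)
  have htne : ∀ t ∈ Metric.sphere (0 : ℂ) 1, t - τ ≠ 0 := by
    intro t ht h
    have : ‖t‖ = 1 := by simpa using ht
    rw [sub_eq_zero.mp h] at this
    linarith
  set D' : ℂ → ℂ := fun l => J (sc (W4 a b) l (ptS a b c ζ s τ)) -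
    G (sc (W4 a b) l (ptS a b c ζ s τ)) * ((2 * Real.pi * Complex.I : ℂ)⁻¹ *
      ∮ t in C(0, 1), (t - τ)⁻¹ * (J (sc (W4 a b) l (ptS a b c ζ s t)) /
        G (sc (W4 a b) l (ptS a b c ζ s t)))) with hD'
  have hGne : ∀ l : ℂ, l ≠ 0 → ‖l‖ < r → ∀ t : ℂ, ‖t‖ = 1 →
      G (sc (W4 a b) l (ptS a b c ζ s t)) ≠ 0 := by
    intro l hl hlr t ht
    have := hGlow l hl hlr ζ s t hζ hs ht
    rw [← norm_pos_iff]
    have hlp : 0 < ‖l‖ := norm_pos_iff.mpr hl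
    exact lt_of_lt_of_le (by positivity) this
  have hdiff : DifferentiableOn ℂ D' (Metric.ball 0 r \ {0}) := by
    intro l hl
    have hlr : ‖l‖ < r := by simpa using hl.1
    have e1 : DifferentiableAt ℂ (fun l => J (sc (W4 a b) l (ptS a b c ζ s τ))) l :=
      ((han l hlr τ hτ1).1.differentiableAt).comp l (hlpt τ l)
    have e2 : DifferentiableAt ℂ (fun l => G (sc (W4 a b) l (ptS a b c ζ s τ))) l :=
      ((han l hlr τ hτ1).2.differentiableAt).comp l (hlpt τ l)
    have e3 := differentiableAt_circleIntegral
      (Metric.isOpen_ball.sdiff isClosed_singleton : IsOpen (Metric.ball (0 : ℂ) r \ {0}))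
      zero_le_one
      (k := fun y : ℂ × ℂ => (y.2 - τ)⁻¹ * (J (sc (W4 a b) y.1 (ptS a b c ζ s y.2)) /
        G (sc (W4 a b) y.1 (ptS a b c ζ s y.2)))) (by
        intro l hl t ht
        have hlr : ‖l‖ < r := by simpa using hl.1
        have ht1 : ‖t‖ = 1 := by simpa using ht
        have f1 : AnalyticAt ℂ (fun y : ℂ × ℂ => J (sc (W4 a b) y.1 (ptS a b c ζ s y.2))) (l, t) :=
          AnalyticAt.comp (g := J) (han l hlr t ht1.le).1 (analyticAt_ptS _ ζ s (l, t))
        have f2 : AnalyticAt ℂ (fun y : ℂ × ℂ => G (sc (W4 a b) y.1 (ptS a b c ζ s y.2))) (l, t) :=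
          AnalyticAt.comp (g := G) (han l hlr t ht1.le).2 (analyticAt_ptS _ ζ s (l, t))
        have f3 : AnalyticAt ℂ (fun y : ℂ × ℂ => y.2 - τ) (l, t) :=
          analyticAt_snd.fun_sub analyticAt_const
        exact (f3.fun_inv (htne t ht)).fun_mul (f1.fun_div f2 (hGne l hl.2 hlr t ht1)))
      hl
    exact (e1.fun_sub (e2.fun_mul (e3.const_mul _))).differentiableWithinAt
  have hflat := flat_zero hdiff (by
    intro N
    obtain ⟨T, hT⟩ := hf N
    obtain ⟨CT, εT, hεT, hCT, hbT⟩ := hT (2 + ‖c‖) hR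
    refine ⟨CT + CG * (8 * CT), min (min r εG) εT, by positivity, fun l hl hlr => ?_⟩
    have hlp : 0 < ‖l‖ := norm_pos_iff.mpr hl
    have hlr1 : ‖l‖ < r := hlr.trans_le ((min_le_left _ _).trans (min_le_left _ _))
    have hlr2 : ‖l‖ < εG := hlr.trans_le ((min_le_left _ _).trans (min_le_right _ _))
    have hlr3 : ‖l‖ < εT := hlr.trans_le (min_le_right _ _)
    set x : ℂ → Fin 2 ⊕ Fin 2 → ℂ := fun t => sc (W4 a b) l (ptS a b c ζ s t) with hx
    have hrem : ∀ t : ℂ, ‖t‖ ≤ 1 → ‖J (x t) - eval (x t) T * G (x t)‖ ≤ CT * ‖l‖ ^ N := by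
      intro t ht
      simpa using hbT l hl hlr3 _ (hptn t ht)
    have hxd : Differentiable ℂ x := fun t => htpt l t
    -- Cauchy's formula for the polynomial part
    have hcauchy : (∮ t in C(0, 1), (t - τ)⁻¹ • eval (x t) T) =
        (2 * Real.pi * Complex.I : ℂ) • eval (x τ) T := by
      have hTd : Differentiable ℂ (fun t => eval (x t) T) := (differentiable_eval T).comp hxd
      exact hTd.differentiableOn.circleIntegral_sub_inv_smul (by
        rw [mem_ball_zero_iff]; linarith)
    have hcJ : ContinuousOn (fun t => (t - τ)⁻¹ * (J (x t) / G (x t))) (Metric.sphere 0 1) := by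
      intro t ht
      have ht1 : ‖t‖ = 1 := by simpa using ht
      have g1 : ContinuousAt (fun t => J (x t)) t :=
        ContinuousAt.comp (g := J) (han l hlr1 t ht1.le).1.continuousAt (hxd t).continuousAt
      have g2 : ContinuousAt (fun t => G (x t)) t :=
        ContinuousAt.comp (g := G) (han l hlr1 t ht1.le).2.continuousAt (hxd t).continuousAt
      have g3 : ContinuousAt (fun t => (t - τ)⁻¹) t :=
        ContinuousAt.inv₀ (by fun_prop) (htne t ht)
      exact (g3.mul (g1.div g2 (hGne l hl hlr1 t ht1))).continuousWithinAt
    have hcT : ContinuousOn (fun t => (t - τ)⁻¹ • eval (x t) T) (Metric.sphere 0 1) := by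
      intro t ht
      have g1 : ContinuousAt (fun t => eval (x t) T) t :=
        ((differentiable_eval T).comp hxd).continuous.continuousAt
      have g3 : ContinuousAt (fun t => (t - τ)⁻¹) t :=
        ContinuousAt.inv₀ (by fun_prop) (htne t ht)
      exact (g3.smul g1).continuousWithinAt
    have hsub := circleIntegral.integral_sub (hcJ.circleIntegrable zero_le_one)
      (hcT.circleIntegrable zero_le_one)
    have hbound : ‖∮ t in C(0, 1), ((t - τ)⁻¹ * (J (x t) / G (x t)) - (t - τ)⁻¹ • eval (x t) T)‖ ≤
        2 * Real.pi * 1 * (2 * (CT * ‖l‖ ^ N * (4 / ‖l‖ ^ d))) := by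
      refine circleIntegral.norm_integral_le_of_norm_le_const zero_le_one fun t ht => ?_
      have ht1 : ‖t‖ = 1 := by simpa using ht
      have hG0 := hGne l hl hlr1 t ht1
      have e : (t - τ)⁻¹ * (J (x t) / G (x t)) - (t - τ)⁻¹ • eval (x t) T =
          (t - τ)⁻¹ * ((J (x t) - eval (x t) T * G (x t)) * (G (x t))⁻¹) := by
        have hG0' : G (x t) ≠ 0 := hG0
        rw [smul_eq_mul]; field_simp
      rw [e, norm_mul, norm_mul, norm_inv, norm_inv]
      have k1 : ‖t - τ‖⁻¹ ≤ 2 := by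
        have : 1 / 2 ≤ ‖t - τ‖ := by
          have := norm_sub_norm_le t τ
          linarith
        calc ‖t - τ‖⁻¹ ≤ (1 / 2 : ℝ)⁻¹ := inv_anti₀ (by norm_num) this
          _ = 2 := by norm_num
      have k2 : ‖G (x t)‖⁻¹ ≤ 4 / ‖l‖ ^ d := by
        have := hGlow l hl hlr1 ζ s t hζ hs ht1
        calc ‖G (x t)‖⁻¹ ≤ (‖l‖ ^ d / 4)⁻¹ := inv_anti₀ (by positivity) this
          _ = _ := by rw [inv_div]
      have k3 := hrem t ht1.le
      gcongr
    rw [hsub, hcauchy] at hbound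
    set I₁ := ∮ t in C(0, 1), (t - τ)⁻¹ * (J (x t) / G (x t)) with hI₁
    have hpi : (2 * Real.pi * Complex.I : ℂ) ≠ 0 := Complex.two_pi_I_ne_zero
    have hDl : D' l = (J (x τ) - eval (x τ) T * G (x τ)) - G (x τ) *
        ((2 * Real.pi * Complex.I : ℂ)⁻¹ * (I₁ - (2 * Real.pi * Complex.I : ℂ) • eval (x τ) T)) := by
      have : D' l = J (x τ) - G (x τ) * ((2 * Real.pi * Complex.I : ℂ)⁻¹ * I₁) := rfl
      rw [this, smul_eq_mul, mul_sub, inv_mul_cancel_left₀ hpi]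
      ring
    have hGτ : ‖G (x τ)‖ ≤ CG * ‖l‖ ^ d := by simpa using hbG l hl hlr2 _ (hptn τ hτ1)
    have hn2 : ‖(2 * Real.pi * Complex.I : ℂ)⁻¹‖ = (2 * Real.pi)⁻¹ := by
      simp [abs_of_pos Real.pi_pos]
    rw [hDl]
    refine (norm_sub_le _ _).trans ?_
    rw [norm_mul, norm_mul, hn2]
    calc _ ≤ CT * ‖l‖ ^ N + CG * ‖l‖ ^ d * ((2 * Real.pi)⁻¹ *
          (2 * Real.pi * 1 * (2 * (CT * ‖l‖ ^ N * (4 / ‖l‖ ^ d))))) := by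
          gcongr
          exact hrem τ hτ1
      _ = (CT + CG * (8 * CT)) * ‖l‖ ^ N := by
          have := Real.pi_pos.ne'
          field_simp
          ring)
  have hκ : ‖((r / 2 : ℝ) : ℂ)‖ < r := by
    rw [Complex.norm_real, Real.norm_eq_abs, abs_of_pos (by positivity)]; linarith
  have := hflat ((r / 2 : ℝ) : ℂ) (by exact_mod_cast (by positivity : r / 2 ≠ 0)) hκ
  simp only [hD'] at this
  rwa [hG0, zero_mul, sub_zero] at this

/-- A function which is a multiple of `G` to every order vanishes on `{G = 0}`. -/
lemma Data.zero_of_formal (D : Data a b d Q G) (hc : eval c (cj Q) = 1) (hc1 : c 1 ≠ 0)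
    {J : (Fin 2 ⊕ Fin 2 → ℂ) → ℂ} (hJ : AnalyticAt ℂ J 0)
    (hf : ∀ N : ℕ, ∃ T : MvPolynomial (Fin 2 ⊕ Fin 2) ℂ,
      OW (W4 a b) N (fun x => J x - eval x T * G x)) :
    ∀ᶠ x in 𝓝 (0 : Fin 2 ⊕ Fin 2 → ℂ), G x = 0 → J x = 0 := by
  obtain ⟨η, hη, hη1, κ, hκ, h⟩ := D.flat_curve hc hJ hf
  set θ := min (1 / 2) (η / (2 * (‖c 0‖ + 1))) with hθ
  have hθ0 : 0 < θ := by positivity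
  have hc1p : 0 < ‖c 1‖ := norm_pos_iff.mpr hc1
  have hev : ∀ᶠ y in 𝓝 (0 : Fin 2 ⊕ Fin 2 → ℂ), ‖y‖ < min (η / 2) (‖c 1‖ * θ ^ b) := by
    have := continuous_norm.tendsto (0 : Fin 2 ⊕ Fin 2 → ℂ)
    rw [norm_zero] at this
    exact this.eventually (gt_mem_nhds (by positivity))
  have ht : Tendsto (sc (W4 a b) κ⁻¹) (𝓝 0) (𝓝 0) := by
    have := (continuous_sc (W4 a b) κ⁻¹).tendsto 0
    have h0 : sc (W4 a b) κ⁻¹ 0 = 0 := by funext i; simp [sc]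
    rwa [h0] at this
  filter_upwards [ht.eventually hev] with x hx hGx
  set y := sc (W4 a b) κ⁻¹ x with hy
  have hxy : x = sc (W4 a b) κ y := by rw [hy, sc_mul, mul_inv_cancel₀ hκ, sc_one]
  have hy1 : ‖y‖ < η / 2 := hx.trans_le (min_le_left _ _)
  have hy2 : ‖y‖ < ‖c 1‖ * θ ^ b := hx.trans_le (min_le_right _ _)
  obtain ⟨τ, hτ⟩ := IsAlgClosed.exists_pow_nat_eq (y (Sum.inr 1) / c 1) D.hb
  have hτθ : ‖τ‖ < θ := by
    refine lt_of_pow_lt_pow_left₀ b hθ0.le ?_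
    rw [← norm_pow, hτ, norm_div, div_lt_iff₀ hc1p, mul_comm]
    exact (norm_le_pi_norm y _).trans_lt hy2
  have hτ2 : ‖τ‖ < 1 / 2 := hτθ.trans_le (min_le_left _ _)
  have hτ3 : ‖τ‖ * ‖c 0‖ ≤ η / 2 := by
    have : ‖τ‖ < η / (2 * (‖c 0‖ + 1)) := hτθ.trans_le (min_le_right _ _)
    rw [lt_div_iff₀ (by positivity)] at this
    nlinarith [norm_nonneg τ, norm_nonneg (c 0)]
  have hs : ‖y (Sum.inr 0) - τ ^ a * c 0‖ < η := by
    refine (norm_sub_le _ _).trans_lt ?_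
    rw [norm_mul, norm_pow]
    have h1 := (norm_le_pi_norm y (Sum.inr 0)).trans_lt hy1
    have h2 : ‖τ‖ ^ a * ‖c 0‖ ≤ ‖τ‖ * ‖c 0‖ := by
      gcongr
      exact pow_le_of_le_one (norm_nonneg _) (by linarith) D.ha.ne'
    linarith
  have hpt : y = ptS a b c (y ∘ Sum.inl) (y (Sum.inr 0) - τ ^ a * c 0) τ := by
    funext i
    rcases i with i | i
    · rfl
    · revert i
      refine Fin.forall_fin_two.mpr ⟨?_, ?_⟩
      · simp [ptS, wt]
      · simp [ptS, wt, hτ, hc1]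
  have hζ : ‖y ∘ Sum.inl‖ < η :=
    lt_of_le_of_lt ((pi_norm_le_iff_of_nonneg (norm_nonneg _)).mpr fun i => norm_le_pi_norm y _)
      (hy1.trans (by linarith))
  have := h (y ∘ Sum.inl) (y (Sum.inr 0) - τ ^ a * c 0) τ hζ hs hτ2
  rw [← hpt, ← hxy] at this
  exact this hGx

end Flat

end QH

namespace QH
open MvPolynomial

/-! ### The first integral is not constant -/

section Nonconst
variable {a b d : ℕ} {Q : MvPolynomial (Fin 2) ℂ} {G : (Fin 2 ⊕ Fin 2 → ℂ) → ℂ} {c : Fin 2 → ℂ}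
  {ρ η R₀ : ℝ} {S : (Fin 2 → ℂ) → ℂ}

lemma OW.lift {N : ℤ} {f : (Fin 2 → ℂ) → ℂ} (h : OW (wt a b) N f) :
    OW (W4 a b) N (fun x => f (x ∘ Sum.inl)) := by
  intro R hR
  obtain ⟨C, ε, hε, hC, hb⟩ := h R hR
  refine ⟨C, ε, hε, hC, fun l hl hl' x hx => hb l hl hl' (x ∘ Sum.inl) ?_⟩
  exact ((pi_norm_le_iff_of_nonneg (norm_nonneg _)).mpr fun i => norm_le_pi_norm x _).trans hx

/-- A holomorphic function of `z` alone which vanishes on the real hypersurface vanishes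
identically. -/
lemma Data.zero_of_real (D : Data a b d Q G)
    (hreal : ∀ᶠ p in 𝓝 (0 : Fin 2 → ℂ), (G (emb p)).im = 0)
    {f : (Fin 2 → ℂ) → ℂ} (hf : AnalyticAt ℂ f 0)
    (h : ∀ᶠ p in 𝓝 (0 : Fin 2 → ℂ), G (emb p) = 0 → f p = 0) :
    ∀ᶠ z in 𝓝 (0 : Fin 2 → ℂ), f z = 0 := by
  have hW := wt_pos D.ha D.hb
  have hflat : ∀ N : ℕ, OW (wt a b) N f := by
    intro N
    induction N with
    | zero => exact OW.of_continuousAt hW hf.continuousAt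
    | succ N ih =>
      obtain ⟨p, hp, hlead⟩ := exists_leading hW hf ih
      have h1 : qq Q (cj Q) ∣ rename Sum.inl p := by
        refine D.lead_dvd hreal (Φ := fun x => f (x ∘ Sum.inl)) ?_ (hom_inl hp) (N := N) ?_
        · filter_upwards [h] with q hq hG
          have : emb q ∘ Sum.inl = q := by rw [emb_apply]; rfl
          rw [this]; exact hq hG
        · refine hlead.lift.congr D.hW (Eventually.of_forall fun x => ?_)
          rw [eval_inl]
      have hp0 : p = 0 := by
        by_contra hne
        obtain ⟨c, hc, -⟩ := D.exists_c
        have hz := eval_zero_wh D.ha D.hb D.hd (wh_cj D.hQ)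
        have hu := isRelPrime_qq_inl Q (cj Q) p hne c 0 (by rw [hc, hz]; exact one_ne_zero)
          dvd_rfl h1
        have hu' := hu.map (eval (Sum.elim (0 : Fin 2 → ℂ) (0 : Fin 2 → ℂ)))
        rw [eval_qq, hz, eval_zero_wh D.ha D.hb D.hd D.hQ, add_zero] at hu'
        exact not_isUnit_zero hu'
      subst hp0
      push_cast
      simpa using hlead
  obtain ⟨ε, hε, -, hm⟩ := sc_mem hW hf.eventually_analyticAt 1 one_pos
  have hz : ∀ x : Fin 2 → ℂ, ‖x‖ ≤ 1 → ∀ l : ℂ, l ≠ 0 → ‖l‖ < ε → f (sc (wt a b) l x) = 0 := by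
    intro x hx
    refine flat_zero (f := fun l => f (sc (wt a b) l x)) ?_ ?_
    · intro l hl
      have hd : DifferentiableAt ℂ (fun l => sc (wt a b) l x) l := by
        refine differentiableAt_pi.mpr fun i => ?_
        simp only [sc]; fun_prop
      exact ((hm l (by simpa using hl.1) x hx).differentiableAt.comp l hd).differentiableWithinAt
    · intro N
      obtain ⟨C, ε', hε', -, hb⟩ := hflat N 1 one_pos
      exact ⟨C, ε', hε', fun l hl hl' => by simpa using hb l hl hl' x hx⟩
  have hκ0 : ((ε / 2 : ℝ) : ℂ) ≠ 0 := by exact_mod_cast (by positivity : ε / 2 ≠ 0)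
  have ht : Tendsto (sc (wt a b) ((ε / 2 : ℝ) : ℂ)⁻¹) (𝓝 0) (𝓝 0) := by
    have := (continuous_sc (wt a b) ((ε / 2 : ℝ) : ℂ)⁻¹).tendsto 0
    have h0 : sc (wt a b) ((ε / 2 : ℝ) : ℂ)⁻¹ 0 = 0 := by funext i; simp [sc]
    rwa [h0] at this
  filter_upwards [ht.eventually (Metric.closedBall_mem_nhds 0 one_pos)] with z hzz
  have h1 := hz _ (mem_closedBall_zero_iff.mp hzz) ((ε / 2 : ℝ) : ℂ) hκ0 (by
    rw [Complex.norm_real, Real.norm_eq_abs, abs_of_pos (by positivity)]; linarith)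
  rwa [sc_mul, mul_inv_cancel₀ hκ0, sc_one] at h1

/-- If `S` were constant on the real hypersurface it would be constant, so the periods of
`G_{z_j} / G` would vanish; their initial part is `Q_{z_j}` times a nonzero period. -/
lemma Setup.nonconst (A : Setup a b d Q G c ρ η R₀)
    (hreal : ∀ᶠ p in 𝓝 (0 : Fin 2 → ℂ), (G (emb p)).im = 0) (hS : AnalyticAt ℂ S 0)
    (hSE : ∀ᶠ z in 𝓝 (0 : Fin 2 → ℂ), ∀ j, pd S j z =
      ∮ t in C(0, ρ), t ^ (d - 1) * (pd G (Sum.inl j) (pt a b c z t) / G (pt a b c z t)))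
    (k : ℂ) (h : ∀ᶠ p in 𝓝 (0 : Fin 2 → ℂ), G (emb p) = 0 → S p = k) : False := by
  have D := A.data
  have hconst : ∀ᶠ z in 𝓝 (0 : Fin 2 → ℂ), S z - k = 0 :=
    D.zero_of_real hreal (f := fun z => S z - k) (hS.fun_sub analyticAt_const)
      (h.mono fun p hp hG => by rw [hp hG, sub_self])
  have hpd : ∀ᶠ z in 𝓝 (0 : Fin 2 → ℂ), ∀ j, pd S j z = 0 := by
    filter_upwards [hconst.eventually_nhds] with z hz j
    have : S =ᶠ[𝓝 z] fun _ => k := hz.mono fun y hy => sub_eq_zero.mp hy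
    rw [pd, this.fderiv_eq]
    simp
  have hQj : ∀ ζ : Fin 2 → ℂ, ‖ζ‖ ≤ η → ∀ j, eval ζ (pderiv j Q) = 0 := by
    intro ζ hζ j
    have h1 := A.period_zero (Φ := pd G (Sum.inl j)) (T := 0) (δ := 1) one_pos
      (fun x hx _ => (analyticAt_pd (A.an x hx) _).differentiableAt)
      (by filter_upwards [hSE, hpd] with z hz hz'; rw [← hz, hz'])
      (D.hom_qq.pderiv (Sum.inl j))
      (by simpa using D.ow_pd (Sum.inl j)) hζ
    have e : (∮ t in C(0, 1), t ^ (d - 1) *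
        (eval (pt a b c ζ t) (pderiv (Sum.inl j) (qq Q (cj Q))) / (eval ζ Q + t ^ d))) =
        ∮ t in C(0, 1), eval ζ (pderiv j Q) • (t ^ (d - 1) * (1 / (eval ζ Q + t ^ d))) := by
      refine circleIntegral.integral_congr zero_le_one fun t _ => ?_
      have : pt a b c ζ t ∘ Sum.inl = ζ := rfl
      simp only [pderiv_qq_inl, eval_inl, this, smul_eq_mul]
      ring
    rw [e, circleIntegral.integral_smul, smul_eq_zero] at h1
    exact h1.resolve_right (A.period_one hζ)
  have hη := A.hη
  have hc := D.crit (fun _ => ((η : ℝ) : ℂ)) (hQj _ (by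
    refine (pi_norm_le_iff_of_nonneg hη.le).mpr fun i => ?_
    rw [Complex.norm_real, Real.norm_eq_abs, abs_of_pos hη]))
  have := congrFun hc 0
  simp only [Pi.zero_apply, Complex.ofReal_eq_zero] at this
  exact hη.ne' this

end Nonconst

lemma fderiv_eq_pd {f : (Fin 2 → ℂ) → ℂ} (z u : Fin 2 → ℂ) :
    fderiv ℂ f z u = u 0 * pd f 0 z + u 1 * pd f 1 z := by
  have : u = u 0 • Pi.single 0 (1 : ℂ) + u 1 • Pi.single 1 (1 : ℂ) := by
    funext i; revert i
    refine Fin.forall_fin_two.mpr ⟨?_, ?_⟩ <;> simp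
  conv_lhs => rw [this]
  rw [map_add, map_smul, map_smul]
  rfl

end QH

/-! ### Existence of the first integral -/

/-- **Proposition (c).** The complexified Levi foliation `L_ℂ` has a non-constant
holomorphic first integral `h`: `h` is non-constant along `M_ℂ` and
`dh(p) ∧ α(p)` vanishes on pairs of vectors of `T_p M_ℂ` for every `p ∈ M*_ℂ`. -/
theorem stmt_6
 (a b d : ℕ) (ha : 0 < a) (hb : 0 < b) (hd : 0 < d) (hab : Nat.gcd a b = 1)
    (Q : MvPolynomial (Fin 2) ℂ)
    -- `Q` is quasihomogeneous of type `(a,b)` and quasihomogeneous degree `d`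
    (hQqh : ∀ m ∈ Q.support, a * m 0 + b * m 1 = d)
    -- `Q` has an isolated singularity at `0 ∈ ℂ²`
    (hQcrit : ∀ i, MvPolynomial.eval (0 : Fin 2 → ℂ) (MvPolynomial.pderiv i Q) = 0)
    (hQsing : ∀ᶠ z in 𝓝 (0 : Fin 2 → ℂ),
      (∀ i, MvPolynomial.eval z (MvPolynomial.pderiv i Q) = 0) → z = 0)
    (F H : (Fin 2 → ℂ) → ℝ)
    (hF : AnalyticAt ℝ F 0) (hH : AnalyticAt ℝ H 0)
    -- `F(z) = Re(Q(z)) + H(z, z̄)`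
    (hFeq : ∀ᶠ z in 𝓝 (0 : Fin 2 → ℂ), F z = (MvPolynomial.eval z Q).re + H z)
    -- every monomial `z^μ z̄^ν` of the Taylor series of `H` has weighted degree
    -- `a(μ₁+ν₁) + b(μ₂+ν₂) > d`
    (hHord : ∃ r > (0:ℝ), ∀ z : Fin 2 → ℂ, ‖z‖ < r →
      Tendsto (fun lam : ℝ => H (fun i => (lam : ℂ) ^ (if i = 0 then a else b) * z i) / lam ^ d)
        (𝓝[>] 0) (𝓝 0))
    -- `M = {F = 0}` is a singular hypersurface at `0`
    (hF0 : F 0 = 0) (hsing : fderiv ℝ F 0 = 0)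
    (hirr : IrreducibleRGerm F)
    (hLF : LeviFlatGerm F)
    (FC : ((Fin 2 → ℂ) × (Fin 2 → ℂ)) → ℂ) (hFC : IsComplexification F FC)
    :
    ∃ h : ((Fin 2 → ℂ) × (Fin 2 → ℂ)) → ℂ, AnalyticAt ℂ h 0 ∧
      -- `h` is non-constant along `M_ℂ`
      (¬ ∃ c : ℂ, ∀ᶠ p in 𝓝 (0 : (Fin 2 → ℂ) × (Fin 2 → ℂ)), FC p = 0 → h p = c) ∧
      -- `dh(p) ∧ α(p)` vanishes on pairs of vectors in `T_p M_ℂ`, for `p ∈ M*_ℂ`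
      (∀ᶠ p in 𝓝 (0 : (Fin 2 → ℂ) × (Fin 2 → ℂ)), FC p = 0 → fderiv ℂ FC p ≠ 0 →
        ∀ u v : (Fin 2 → ℂ) × (Fin 2 → ℂ),
          fderiv ℂ FC p u = 0 → fderiv ℂ FC p v = 0 →
          fderiv ℂ h p u * fderiv ℂ FC p (v.1, 0) -
            fderiv ℂ h p v * fderiv ℂ FC p (u.1, 0) = 0) := by
  have D := QH.data_of_hyp a b d ha hb hd Q hQqh hQsing F H hFeq hHord FC hFC
  set g : (Fin 2 ⊕ Fin 2 → ℂ) → ℂ := fun x => FC (QH.split x) with hg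
  change QH.Data a b d Q (fun x => 2 * g x) at D
  have hga : AnalyticAt ℂ g 0 :=
    AnalyticAt.comp (g := FC) (f := QH.split) (by rw [map_zero]; exact hFC.1)
      (QH.split.analyticAt 0)
  have hFg : ∀ᶠ p in 𝓝 (0 : Fin 2 → ℂ), g (QH.emb p) = ((F p : ℝ) : ℂ) :=
    hFC.2.mono fun p hp => by simp only [hg]; rw [QH.split_emb, hp]
  have hreal : ∀ᶠ p in 𝓝 (0 : Fin 2 → ℂ), (2 * g (QH.emb p)).im = 0 :=
    hFg.mono fun p hp => by rw [hp]; simp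
  -- Levi-flatness makes the Levi determinant formally divisible by the defining function
  have hB := D.formal_dvd hreal (QH.analyticAt_levi D.hG) (by
    filter_upwards [QH.levi_zero hF hLF hga hFg] with p hp h0
    rw [QH.levi_const_mul, hp (by simpa using h0), mul_zero])
  obtain ⟨c, ρ, η, R₀, A⟩ := D.exists_setup
  obtain ⟨S, hS, hSE⟩ := A.exists_S
  have hzero := D.zero_of_formal A.hc A.hc1
    (QH.analyticAt_jac (S := S) (by rwa [map_zero]) D.hG) (A.jac_formal hS hSE hB)
  refine ⟨fun p => S p.1, AnalyticAt.comp (g := S) hS analyticAt_fst, ?_, ?_⟩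
  · rintro ⟨k, hk⟩
    refine A.nonconst hreal hS hSE k ?_
    have ht : Tendsto (fun p : Fin 2 → ℂ => QH.split (QH.emb p)) (𝓝 0) (𝓝 0) := by
      have := QH.split.continuous.tendsto 0
      rw [map_zero] at this
      exact this.comp QH.tendsto_emb
    filter_upwards [ht.eventually hk] with p hp h0
    have := hp (by simpa [hg] using h0)
    rwa [QH.split_emb] at this
  · have ht : Tendsto (fun p : (Fin 2 → ℂ) × (Fin 2 → ℂ) => (Sum.elim p.1 p.2 : Fin 2 ⊕ Fin 2 → ℂ))
        (𝓝 0) (𝓝 0) := by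
      have hc : Continuous fun p : (Fin 2 → ℂ) × (Fin 2 → ℂ) =>
          (Sum.elim p.1 p.2 : Fin 2 ⊕ Fin 2 → ℂ) := by
        refine continuous_pi ?_
        rintro (i | i)
        · simp only [Sum.elim_inl]; fun_prop
        · simp only [Sum.elim_inr]; fun_prop
      have := hc.tendsto 0
      have h0 : (Sum.elim (0 : (Fin 2 → ℂ) × (Fin 2 → ℂ)).1 (0 : (Fin 2 → ℂ) × (Fin 2 → ℂ)).2 :
          Fin 2 ⊕ Fin 2 → ℂ) = 0 := by
        funext i; cases i <;> rfl
      rwa [h0] at this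
    have hS1 : ∀ᶠ p in 𝓝 (0 : (Fin 2 → ℂ) × (Fin 2 → ℂ)), AnalyticAt ℂ S p.1 :=
      (continuous_fst.tendsto (0 : (Fin 2 → ℂ) × (Fin 2 → ℂ))).eventually hS.eventually_analyticAt
    filter_upwards [ht.eventually hzero, hFC.1.eventually_analyticAt, hS1] with p hp hFa hSa h0 _ u v _ _
    have hsp : QH.split (Sum.elim p.1 p.2) = p := rfl
    have hJ := hp (by simp only [hg]; rw [hsp, h0, mul_zero])
    have hpd : ∀ j, QH.pd (fun x => 2 * g x) (Sum.inl j) (Sum.elim p.1 p.2) =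
        2 * fderiv ℂ FC p (Pi.single j 1, 0) := by
      intro j
      rw [QH.pd_const_mul]
      change 2 * fderiv ℂ g (Sum.elim p.1 p.2) (Pi.single (Sum.inl j) 1) = _
      have h1 : HasFDerivAt g ((fderiv ℂ FC p).comp QH.split) (Sum.elim p.1 p.2) :=
        HasFDerivAt.comp (g := FC) _ (by rw [hsp]; exact hFa.differentiableAt.hasFDerivAt)
          QH.split.hasFDerivAt
      rw [h1.fderiv, ContinuousLinearMap.comp_apply]
      congr 2
      rw [QH.split_apply]
      ext i
      · simp [Pi.single_apply]
      · simp
    have hh : ∀ w : (Fin 2 → ℂ) × (Fin 2 → ℂ), fderiv ℂ (fun p => S p.1) p w =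
        w.1 0 * QH.pd S 0 p.1 + w.1 1 * QH.pd S 1 p.1 := by
      intro w
      have h1 : HasFDerivAt (fun p : (Fin 2 → ℂ) × (Fin 2 → ℂ) => S p.1)
          ((fderiv ℂ S p.1).comp (ContinuousLinearMap.fst ℂ _ _)) p :=
        HasFDerivAt.comp (g := S) p hSa.differentiableAt.hasFDerivAt hasFDerivAt_fst
      rw [h1.fderiv, ContinuousLinearMap.comp_apply, ContinuousLinearMap.coe_fst', QH.fderiv_eq_pd]
    have hα : ∀ w : Fin 2 → ℂ, fderiv ℂ FC p (w, 0) =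
        w 0 * fderiv ℂ FC p (Pi.single 0 1, 0) + w 1 * fderiv ℂ FC p (Pi.single 1 1, 0) := by
      intro w
      have : ((w, 0) : (Fin 2 → ℂ) × (Fin 2 → ℂ)) =
          w 0 • (Pi.single 0 1, 0) + w 1 • (Pi.single 1 1, 0) := by
        ext i
        · revert i
          refine Fin.forall_fin_two.mpr ⟨?_, ?_⟩ <;> simp
        · simp
      conv_lhs => rw [this]
      rw [map_add, map_smul, map_smul, smul_eq_mul, smul_eq_mul]
    rw [QH.jac, QH.lift, QH.lift, hpd, hpd] at hJ
    have hpr : QH.prL (Sum.elim p.1 p.2) = p.1 := rfl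
    rw [hpr] at hJ
    rw [hh, hh, hα v.1, hα u.1]
    linear_combination (u.1 0 * v.1 1 - u.1 1 * v.1 0) / 2 * hJ
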